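/- Davenport's estimate: for every A > 0 there exists a constant C_A > 0 such that for all integers N ≥ 2 and all real numbers t, |Σ_{n≤N} e^{2πint} μ(n)| ≤ C_A · N / (log N)^A. -/

import Mathlib

set_option linter.all false

section Part1

noncomputable def ee (x : ℝ) : ℂ := Complex.exp (2 * Real.pi * Complex.I * x)

noncomputable def nn (t : ℝ) : ℝ := |t - round t|

lemma ee_add (x y : ℝ) : ee (x + y) = ee x * ee y := by
  unfold ee; rw [← Complex.exp_add]; push_cast; ring_nf

lemma ee_norm (x : ℝ) : ‖ee x‖ = 1 := by
  unfold ee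
  have : (2 * Real.pi * Complex.I * x : ℂ) = ((2 * Real.pi * x : ℝ) : ℂ) * Complex.I := by
    push_cast; ring
  rw [this, Complex.norm_exp_ofReal_mul_I]

lemma ee_int (m : ℤ) : ee m = 1 := by
  unfold ee
  have : (2 * Real.pi * Complex.I * ((m:ℝ):ℂ) : ℂ) = m * (2 * Real.pi * Complex.I) := by
    push_cast; ring
  rw [this, Complex.exp_int_mul_two_pi_mul_I]

lemma ee_zero : ee 0 = 1 := by simpa using ee_int 0

lemma ee_neg_conj (x : ℝ) : ee (-x) = (starRingEnd ℂ) (ee x) := by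
  unfold ee
  rw [← Complex.exp_conj]
  simp [Complex.conj_ofNat]

lemma nn_nonneg (t : ℝ) : 0 ≤ nn t := abs_nonneg _

lemma nn_le (t : ℝ) (m : ℤ) : nn t ≤ |t - m| := round_le t m

lemma nn_neg (t : ℝ) : nn (-t) = nn t := by
  apply le_antisymm
  · have := nn_le (-t) (-round t)
    refine this.trans (le_of_eq ?_)
    unfold nn
    push_cast
    rw [← abs_neg]; ring_nf
  · have := nn_le t (-round (-t))
    refine this.trans (le_of_eq ?_)
    unfold nn
    push_cast
    rw [← abs_neg]; ring_nf

lemma ee_sub_one_norm (t : ℝ) : 4 * nn t ≤ ‖ee t - 1‖ := by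
  have h1 : ee t = ee (t - round t) := by
    have := ee_add (t - round t) (round t)
    rw [ee_int, mul_one] at this
    rw [← this]; congr 1; ring
  rw [h1]
  set y := t - round t with hy
  have hy2 : |y| ≤ 1 / 2 := abs_sub_round t
  have h2 : ‖ee y - 1‖ = ‖2 * Real.sin (2 * Real.pi * y / 2)‖ := by
    rw [← Complex.norm_exp_I_mul_ofReal_sub_one]
    unfold ee
    congr 3
    push_cast; ring
  rw [h2, norm_mul, Real.norm_eq_abs, Real.norm_eq_abs]
  have h3 : 2 * Real.pi * y / 2 = Real.pi * y := by ring
  rw [h3]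
  have h4 := Real.mul_abs_le_abs_sin (x := Real.pi * y) (by
    rw [abs_mul, abs_of_pos Real.pi_pos]; nlinarith [Real.pi_pos])
  rw [abs_mul, abs_of_pos Real.pi_pos, ← mul_assoc, div_mul_cancel₀ _ Real.pi_pos.ne'] at h4
  have : nn t = |y| := rfl
  rw [this]
  norm_num
  linarith

lemma geom_bound (t : ℝ) (a b : ℕ) :
    ‖∑ k ∈ Finset.Ioc a b, ee (k * t)‖ * nn t ≤ 1 / 2 := by
  by_cases hab : a ≤ b
  · have h : (∑ k ∈ Finset.Ioc a b, ee (k * t)) * (ee t - 1) = ee ((b + 1 : ℕ) * t) - ee ((a + 1 : ℕ) * t) := by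
      induction b, hab using Nat.le_induction with
      | base => simp
      | succ n hn ih =>
        rw [← Finset.insert_Ioc_right_eq_Ioc_add_one (by omega), Finset.sum_insert (by simp), add_mul, ih]
        have : ee ((n + 1 + 1 : ℕ) * t) = ee ((n + 1 : ℕ) * t) * ee t := by
          rw [← ee_add]; congr 1; push_cast; ring
        rw [this]; ring
    have h2 : ‖∑ k ∈ Finset.Ioc a b, ee (k * t)‖ * ‖ee t - 1‖ ≤ 2 := by
      rw [← norm_mul, h]
      refine (norm_sub_le _ _).trans ?_
      rw [ee_norm, ee_norm]; norm_num
    have := ee_sub_one_norm t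
    nlinarith [norm_nonneg (∑ k ∈ Finset.Ioc a b, ee (k * t))]
  · rw [Finset.Ioc_eq_empty (by omega)]; simp

lemma sep_lemma (t : ℝ) (a : ℤ) (q : ℕ) (hq : 0 < q) (hc : IsCoprime a (q:ℤ))
    (ht : |t - a / q| ≤ 1 / (q:ℝ) ^ 2) (h : ℤ) (h0 : h ≠ 0) (h1 : 2 * |h| ≤ q) :
    1 / (2 * q : ℝ) ≤ nn (h * t) := by
  have hq' : (0:ℝ) < q := by exact_mod_cast hq
  set m := round (h * t) with hm
  have hne : h * a - m * q ≠ 0 := by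
    intro h2
    have : (q:ℤ) ∣ h * a := ⟨m, by linarith⟩
    have h3 : (q:ℤ) ∣ h := hc.symm.dvd_of_dvd_mul_right this
    have := Int.le_of_dvd (abs_pos.mpr h0) ((dvd_abs _ _).mpr h3)
    have : 0 < |h| := abs_pos.mpr h0
    omega
  have h2 : (1:ℝ) ≤ |(h:ℝ) * a - m * q| := by
    have := Int.one_le_abs hne
    exact_mod_cast this
  have h3 : (1:ℝ) / q ≤ |(h:ℝ) * a / q - m| := by
    have : (h:ℝ) * a / q - m = (h * a - m * q) / q := by field_simp
    rw [this, abs_div, abs_of_pos hq']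
    gcongr
  have h4 : |(h:ℝ) * a / q - m| ≤ |h * t - m| + |(h:ℝ)| * |t - a / q| := by
    rw [← abs_mul]
    have : (h:ℝ) * a / q - m = (h * t - m) - h * (t - a / q) := by ring
    rw [this]
    exact abs_sub _ _
  have h5 : |(h:ℝ)| * |t - a / q| ≤ q / 2 * (1 / (q:ℝ)^2) := by
    gcongr
    have : ((2 * |h| : ℤ) : ℝ) ≤ q := by exact_mod_cast h1
    push_cast at this
    linarith
  have h6 : (q:ℝ) / 2 * (1 / (q:ℝ)^2) = 1 / (2 * q) := by field_simp
  have h7 : (1:ℝ)/q = 1 / (2 * q) + 1 / (2 * q) := by field_simp; norm_num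
  have : nn (h * t) = |h * t - m| := rfl
  rw [this]; linarith

noncomputable def GG (X t : ℝ) : ℝ := if nn t = 0 then X else min X (1 / (2 * nn t))

lemma GG_nonneg (X t : ℝ) (hX : 0 ≤ X) : 0 ≤ GG X t := by
  unfold GG; split_ifs
  · exact hX
  · have := nn_nonneg t
    positivity

lemma GG_le (X t : ℝ) : GG X t ≤ X := by
  unfold GG; split_ifs
  · exact le_rfl
  · exact min_le_left _ _

lemma GG_mul_le (X t : ℝ) : GG X t * nn t ≤ 1 / 2 := by
  unfold GG; split_ifs with h
  · rw [h]; norm_num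
  · have h0 : 0 < nn t := lt_of_le_of_ne (nn_nonneg t) (Ne.symm h)
    calc _ ≤ (1 / (2 * nn t)) * nn t := by gcongr; exact min_le_right _ _
      _ = 1 / 2 := by field_simp

lemma le_GG (X t y : ℝ) (h1 : y ≤ X) (h2 : y * nn t ≤ 1 / 2) : y ≤ GG X t := by
  unfold GG; split_ifs with h
  · exact h1
  · have h0 : 0 < nn t := lt_of_le_of_ne (nn_nonneg t) (Ne.symm h)
    refine le_min h1 ?_
    rw [le_div_iff₀ (by positivity)]; linarith

lemma GG_neg (X t : ℝ) : GG X (-t) = GG X t := by unfold GG; rw [nn_neg]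

lemma fract_nn (t : ℝ) : nn t = min (Int.fract t) (1 - Int.fract t) := abs_sub_round_eq_min t

lemma block_bound (t X : ℝ) (hX : 0 ≤ X) (a : ℤ) (q : ℕ) (hq : 0 < q) (hc : IsCoprime a (q:ℤ))
    (ht : |t - a / q| ≤ 1 / (q:ℝ) ^ 2) (H : ℕ) :
    ∑ r ∈ Finset.range (q / 2 + 1), GG X ((H + r : ℕ) * t) ≤ 2 * X + 2 * q * (1 + Real.log (2 * q)) := by
  have hq' : (0:ℝ) < q := by exact_mod_cast hq
  set ψ : ℕ → ℝ := fun j => if j = 0 then X else q / j with hψ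
  have hψ0 : ∀ j, 0 ≤ ψ j := by
    intro j; simp only [hψ]; split_ifs <;> positivity
  set J : ℕ → ℕ := fun r => ⌊2 * q * Int.fract (((H + r : ℕ):ℝ) * t)⌋₊ with hJ
  have hJlt : ∀ r, J r < 2 * q := by
    intro r
    simp only [hJ]
    rw [Nat.floor_lt (by have := Int.fract_nonneg (((H + r : ℕ):ℝ) * t); positivity)]
    have := Int.fract_lt_one (((H + r : ℕ):ℝ) * t)
    push_cast at this ⊢
    nlinarith
  have hinj : Set.InjOn J (Finset.range (q / 2 + 1)) := by
    intro r1 hr1 r2 hr2 h12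
    by_contra hne
    simp only [Finset.coe_range, Set.mem_Iio] at hr1 hr2
    have hs := sep_lemma t a q hq hc ht ((r1:ℤ) - r2) (by omega) (by
      rcases abs_cases ((r1:ℤ) - r2) with ⟨h, _⟩ | ⟨h, _⟩ <;> omega)
    set f1 := Int.fract (((H + r1 : ℕ):ℝ) * t) with hf1
    set f2 := Int.fract (((H + r2 : ℕ):ℝ) * t) with hf2
    have hd : |2 * q * f1 - 2 * q * f2| < 1 := by
      have e1 := Nat.floor_le (show 0 ≤ 2 * q * f1 by have := Int.fract_nonneg (((H + r1 : ℕ):ℝ) * t); positivity)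
      have e2 := Nat.lt_floor_add_one (2 * q * f1)
      have e3 := Nat.floor_le (show 0 ≤ 2 * q * f2 by have := Int.fract_nonneg (((H + r2 : ℕ):ℝ) * t); positivity)
      have e4 := Nat.lt_floor_add_one (2 * q * f2)
      have h12' : ((⌊2 * q * f1⌋₊ : ℕ):ℝ) = (⌊2 * q * f2⌋₊ : ℕ) := congrArg (fun n : ℕ => (n : ℝ)) h12
      rw [abs_lt]; constructor <;> linarith
    have hle := nn_le (((r1:ℤ) - r2 : ℤ) * t) (⌊((H + r1 : ℕ):ℝ) * t⌋ - ⌊((H + r2 : ℕ):ℝ) * t⌋)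
    have heq : ((((r1:ℤ) - r2 : ℤ):ℝ) * t) - ((⌊((H + r1 : ℕ):ℝ) * t⌋ - ⌊((H + r2 : ℕ):ℝ) * t⌋ : ℤ):ℝ) = f1 - f2 := by
      rw [hf1, hf2, Int.fract, Int.fract]; push_cast; ring
    rw [heq] at hle
    have : |2 * q * f1 - 2 * q * f2| = 2 * q * |f1 - f2| := by
      rw [← mul_sub, abs_mul, abs_of_pos (by positivity)]
    rw [this] at hd
    have h8 : 1 / (2 * q : ℝ) ≤ |f1 - f2| := hs.trans hle
    rw [div_le_iff₀ (by positivity)] at h8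
    linarith
  have hterm : ∀ r, GG X ((H + r : ℕ) * t) ≤ ψ (J r) + ψ (2 * q - 1 - J r) := by
    intro r
    set x := ((H + r : ℕ):ℝ) * t with hx
    have hl := hJlt r
    by_cases c1 : J r = 0
    · have : ψ (J r) = X := by simp [hψ, c1]
      linarith [GG_le X x, hψ0 (2 * q - 1 - J r)]
    by_cases c2 : 2 * q - 1 - J r = 0
    · have : ψ (2 * q - 1 - J r) = X := by simp [hψ, c2]
      linarith [GG_le X x, hψ0 (J r)]
    have e1 : (J r : ℝ) ≤ 2 * q * Int.fract x := Nat.floor_le (by have := Int.fract_nonneg x; positivity)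
    have e2 : 2 * q * Int.fract x < J r + 1 := Nat.lt_floor_add_one _
    have e3 : ψ (J r) = q / J r := by simp [hψ, c1]
    have e4 : ψ (2 * q - 1 - J r) = q / (2 * q - 1 - J r : ℕ) := by simp only [hψ]; rw [if_neg c2]
    have e5 : ((2 * q - 1 - J r : ℕ) : ℝ) = 2 * q - 1 - J r := by
      rw [Nat.cast_sub (by omega), Nat.cast_sub (by omega)]; push_cast; ring
    have p1 : (0:ℝ) < J r := by exact_mod_cast Nat.pos_of_ne_zero c1
    have p2 : (0:ℝ) < 2 * q - 1 - J r := by rw [← e5]; exact_mod_cast Nat.pos_of_ne_zero c2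
    have hm := GG_mul_le X x
    have hg := GG_nonneg X x hX
    rw [fract_nn] at hm
    rcases le_total (Int.fract x) (1 - Int.fract x) with h | h
    · rw [min_eq_left h] at hm
      have : GG X x ≤ q / J r := by
        rw [le_div_iff₀ p1]
        nlinarith
      rw [e3]; linarith [hψ0 (2 * q - 1 - J r)]
    · rw [min_eq_right h] at hm
      have : GG X x ≤ q / (2 * q - 1 - J r) := by
        rw [le_div_iff₀ p2]
        nlinarith
      rw [e4, e5]; linarith [hψ0 (J r)]
  have hsum : ∑ j ∈ Finset.range (2 * q), ψ j ≤ X + q * (1 + Real.log (2 * q)) := by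
    obtain ⟨m, hm⟩ : ∃ m, 2 * q = m + 1 := ⟨2 * q - 1, by omega⟩
    rw [hm, Finset.sum_range_succ']
    have h0 : ψ 0 = X := by simp [hψ]
    rw [h0]
    have h1 : ∑ k ∈ Finset.range m, ψ (k + 1) = q * (harmonic m : ℝ) := by
      rw [harmonic]; push_cast; rw [Finset.mul_sum]
      apply Finset.sum_congr rfl
      intro i _
      simp only [hψ]; rw [if_neg (by omega)]; push_cast; rw [div_eq_mul_inv]
    rw [h1]
    have h2 := harmonic_le_one_add_log m
    have h3 : Real.log m ≤ Real.log (2 * q) := by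
      rcases Nat.eq_zero_or_pos m with h | h
      · subst h; omega
      · apply Real.log_le_log (by exact_mod_cast h)
        have : ((2 * q : ℕ) : ℝ) = m + 1 := by exact_mod_cast hm
        push_cast at this; linarith
    nlinarith
  calc ∑ r ∈ Finset.range (q / 2 + 1), GG X ((H + r : ℕ) * t)
      ≤ ∑ r ∈ Finset.range (q / 2 + 1), (ψ (J r) + ψ (2 * q - 1 - J r)) := Finset.sum_le_sum fun r _ => hterm r
    _ = ∑ j ∈ (Finset.range (q / 2 + 1)).image J, (ψ j + ψ (2 * q - 1 - j)) := by
        rw [Finset.sum_image hinj]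
    _ ≤ ∑ j ∈ Finset.range (2 * q), (ψ j + ψ (2 * q - 1 - j)) := by
        apply Finset.sum_le_sum_of_subset_of_nonneg
        · intro j hj
          rw [Finset.mem_image] at hj
          obtain ⟨r, _, rfl⟩ := hj
          exact Finset.mem_range.mpr (hJlt r)
        · intro j _ _
          exact add_nonneg (hψ0 _) (hψ0 _)
    _ = 2 * ∑ j ∈ Finset.range (2 * q), ψ j := by
        rw [Finset.sum_add_distrib, Finset.sum_range_reflect ψ]; ring
    _ ≤ _ := by linarith

lemma full_bound (t X : ℝ) (hX : 0 ≤ X) (a : ℤ) (q : ℕ) (hq : 0 < q) (hc : IsCoprime a (q:ℤ))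
    (ht : |t - a / q| ≤ 1 / (q:ℝ) ^ 2) (M : ℕ) :
    ∑ h ∈ Finset.range M, GG X (h * t) ≤
      (2 * M / q + 1) * (2 * X + 2 * q * (1 + Real.log (2 * q))) := by
  have hq' : (0:ℝ) < q := by exact_mod_cast hq
  set L := q / 2 + 1 with hL
  set B := 2 * X + 2 * q * (1 + Real.log (2 * q)) with hB
  have hB0 : 0 ≤ B := by
    have : 0 ≤ Real.log (2 * q) := Real.log_nonneg (by have : (1:ℝ) ≤ q := by exact_mod_cast hq
                                                       linarith)
    positivity
  have hk : ∀ n : ℕ, ∑ h ∈ Finset.range (n * L), GG X (h * t) ≤ n * B := by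
    intro n
    induction n with
    | zero => simp
    | succ n ih =>
      rw [add_mul, one_mul, Finset.sum_range_add]
      have := block_bound t X hX a q hq hc ht (n * L)
      push_cast at this ih ⊢
      linarith
  calc ∑ h ∈ Finset.range M, GG X (h * t)
      ≤ ∑ h ∈ Finset.range ((M / L + 1) * L), GG X (h * t) := by
        apply Finset.sum_le_sum_of_subset_of_nonneg
        · apply Finset.range_mono
          have := Nat.lt_div_mul_add (a := M) (b := L) (by omega)
          rw [add_mul, one_mul]
          exact this.le
        · intro _ _ _; exact GG_nonneg _ _ hX
    _ ≤ ((M / L + 1 : ℕ):ℝ) * B := hk _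
    _ ≤ _ := by
      apply mul_le_mul_of_nonneg_right _ hB0
      push_cast
      have h1 : ((M / L : ℕ):ℝ) ≤ M / L := Nat.cast_div_le
      have h2 : (q:ℝ) / 2 ≤ L := by
        have : q ≤ 2 * L := by omega
        have : (q:ℝ) ≤ 2 * L := by exact_mod_cast this
        linarith
      have h3 : (M:ℝ) / L ≤ M / (q / 2) := by gcongr
      have h4 : (M:ℝ) / (q / 2) = 2 * M / q := by field_simp
      linarith

end Part1

section Part2

lemma diff_sum_bound (t X : ℝ) (hX : 0 ≤ X) (M b : ℕ) (hb : b ∈ Finset.Ico M (2 * M)) :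
    ∑ b' ∈ Finset.Ico M (2 * M), GG X (((b:ℝ) - b') * t) ≤ 2 * ∑ h ∈ Finset.range M, GG X (h * t) := by
  rw [Finset.mem_Ico] at hb
  rw [← Finset.sum_filter_add_sum_filter_not (Finset.Ico M (2 * M)) (fun b' => b' ≤ b)]
  have key : ∀ (s : Finset ℕ) (g : ℕ → ℕ), Set.InjOn g s → (∀ x ∈ s, g x < M) →
      (∀ x ∈ s, GG X (((b:ℝ) - x) * t) = GG X (g x * t)) →
      ∑ x ∈ s, GG X (((b:ℝ) - x) * t) ≤ ∑ h ∈ Finset.range M, GG X (h * t) := by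
    intro s g hg h1 h2
    rw [Finset.sum_congr rfl h2, ← Finset.sum_image (f := fun h : ℕ => GG X (h * t)) hg]
    apply Finset.sum_le_sum_of_subset_of_nonneg
    · intro j hj
      rw [Finset.mem_image] at hj
      obtain ⟨x, hx, rfl⟩ := hj
      exact Finset.mem_range.mpr (h1 x hx)
    · intro _ _ _; exact GG_nonneg _ _ hX
  rw [two_mul (∑ h ∈ Finset.range M, GG X (h * t))]
  apply add_le_add
  · apply key _ (fun x => b - x)
    · intro x hx y hy hxy
      simp at hx hy hxy; omega
    · intro x hx; simp at hx ⊢; omega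
    · intro x hx; simp at hx
      rw [Nat.cast_sub (by omega)]
  · apply key _ (fun x => x - b)
    · intro x hx y hy hxy
      simp at hx hy hxy; omega
    · intro x hx; simp at hx ⊢; omega
    · intro x hx; simp at hx
      rw [Nat.cast_sub (by omega), ← GG_neg]; congr 1; ring

lemma bilin (t : ℝ) (M N U : ℕ) (hM : 0 < M) (α γ : ℕ → ℂ) (hα : ∀ b, ‖α b‖ ≤ 1) :
    ‖∑ b ∈ Finset.Ico M (2 * M), ∑ k ∈ Finset.Icc 1 (N / M),
      (if U < k ∧ b * k ≤ N then α b * γ k * ee ((b * k : ℕ) * t) else 0)‖ ^ 2 ≤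
    (∑ k ∈ Finset.Icc 1 (N / M), ‖γ k‖ ^ 2) *
      (2 * M * ∑ h ∈ Finset.range M, GG ((N:ℝ) / M) (h * t)) := by
  set T : ℕ → ℂ := fun k => ∑ b ∈ Finset.Ico M (2 * M),
    (if U < k ∧ b * k ≤ N then α b * ee ((b * k : ℕ) * t) else 0) with hT
  set X : ℝ := (N:ℝ) / M with hXdef
  have hX : 0 ≤ X := by positivity
  have h1 : ∑ b ∈ Finset.Ico M (2 * M), ∑ k ∈ Finset.Icc 1 (N / M),
      (if U < k ∧ b * k ≤ N then α b * γ k * ee ((b * k : ℕ) * t) else 0) =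
      ∑ k ∈ Finset.Icc 1 (N / M), γ k * T k := by
    rw [Finset.sum_comm]
    apply Finset.sum_congr rfl
    intro k _
    rw [hT, Finset.mul_sum]
    apply Finset.sum_congr rfl
    intro b _
    split_ifs <;> ring
  rw [h1]
  have h2 : ‖∑ k ∈ Finset.Icc 1 (N / M), γ k * T k‖ ^ 2 ≤
      (∑ k ∈ Finset.Icc 1 (N / M), ‖γ k‖ ^ 2) * ∑ k ∈ Finset.Icc 1 (N / M), ‖T k‖ ^ 2 := by
    refine le_trans ?_ (Finset.sum_mul_sq_le_sq_mul_sq _ _ _)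
    gcongr
    refine (norm_sum_le _ _).trans (le_of_eq ?_)
    simp [norm_mul]
  refine h2.trans ?_
  apply mul_le_mul_of_nonneg_left _ (by positivity)
  have h3 : ((∑ k ∈ Finset.Icc 1 (N / M), ‖T k‖ ^ 2 : ℝ) : ℂ) =
      ∑ b ∈ Finset.Ico M (2 * M), ∑ b' ∈ Finset.Ico M (2 * M),
        α b * (starRingEnd ℂ) (α b') * ∑ k ∈ Finset.Ioc U (min (N / b) (N / b')), ee (k * (((b:ℝ) - b') * t)) := by
    push_cast
    have : ∀ k, ((‖T k‖:ℂ)) ^ 2 = ∑ b ∈ Finset.Ico M (2 * M), ∑ b' ∈ Finset.Ico M (2 * M),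
        (if U < k ∧ b * k ≤ N ∧ b' * k ≤ N then α b * (starRingEnd ℂ) (α b') * ee (k * (((b:ℝ) - b') * t)) else 0) := by
      intro k
      rw [← Complex.mul_conj']
      simp only [hT]
      rw [map_sum, Finset.sum_mul_sum]
      apply Finset.sum_congr rfl; intro b _
      apply Finset.sum_congr rfl; intro b' _
      by_cases c1 : U < k <;> by_cases c2 : b * k ≤ N <;> by_cases c3 : b' * k ≤ N <;> simp [c1, c2, c3]
      rw [← ee_neg_conj]
      have : ee (k * (((b:ℝ) - b') * t)) = ee (b * k * t) * ee (- (b' * k * t)) := by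
        rw [← ee_add]; congr 1; ring
      rw [this]; ring
    simp_rw [this]
    rw [Finset.sum_comm]
    apply Finset.sum_congr rfl; intro b hb
    rw [Finset.sum_comm]
    apply Finset.sum_congr rfl; intro b' hb'
    rw [Finset.mem_Ico] at hb hb'
    rw [Finset.mul_sum, ← Finset.sum_filter]
    apply Finset.sum_congr _ (fun _ _ => rfl)
    ext k
    simp only [Finset.mem_filter, Finset.mem_Icc, Finset.mem_Ioc, le_min_iff]
    rw [Nat.le_div_iff_mul_le (by omega), Nat.le_div_iff_mul_le (by omega), Nat.le_div_iff_mul_le (by omega)]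
    constructor
    · rintro ⟨⟨h1, h2⟩, h3, h4, h5⟩
      exact ⟨h3, by linarith, by linarith⟩
    · rintro ⟨h3, h4, h5⟩
      refine ⟨⟨by omega, ?_⟩, h3, by linarith, by linarith⟩
      calc k * M ≤ k * b := Nat.mul_le_mul_left _ hb.1
        _ ≤ N := h4
  have h4 : ∑ k ∈ Finset.Icc 1 (N / M), ‖T k‖ ^ 2 = ‖((∑ k ∈ Finset.Icc 1 (N / M), ‖T k‖ ^ 2 : ℝ) : ℂ)‖ := by
    rw [Complex.norm_real, Real.norm_of_nonneg]
    positivity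
  rw [h4, h3]
  calc _ ≤ ∑ b ∈ Finset.Ico M (2 * M), ∑ b' ∈ Finset.Ico M (2 * M), GG X (((b:ℝ) - b') * t) := by
        refine (norm_sum_le _ _).trans (Finset.sum_le_sum fun b hb => ?_)
        refine (norm_sum_le _ _).trans (Finset.sum_le_sum fun b' hb' => ?_)
        rw [Finset.mem_Ico] at hb hb'
        rw [norm_mul, norm_mul, RCLike.norm_conj]
        have e1 : ‖∑ k ∈ Finset.Ioc U (min (N / b) (N / b')), ee (k * (((b:ℝ) - b') * t))‖ ≤ GG X (((b:ℝ) - b') * t) := by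
          apply le_GG
          · refine (norm_sum_le _ _).trans ?_
            simp only [ee_norm]
            simp only [Finset.sum_const, Nat.card_Ioc, nsmul_eq_mul, mul_one]
            have : min (N / b) (N / b') - U ≤ N / M :=
              (Nat.sub_le _ _).trans ((min_le_left _ _).trans (Nat.div_le_div_left hb.1 hM))
            calc ((min (N / b) (N / b') - U : ℕ):ℝ) ≤ (N / M : ℕ) := by exact_mod_cast this
              _ ≤ X := Nat.cast_div_le
          · exact geom_bound _ _ _
        calc _ ≤ 1 * 1 * ‖∑ k ∈ Finset.Ioc U (min (N / b) (N / b')), ee (k * (((b:ℝ) - b') * t))‖ := by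
              gcongr <;> apply hα
          _ ≤ _ := by linarith
    _ ≤ ∑ b ∈ Finset.Ico M (2 * M), 2 * ∑ h ∈ Finset.range M, GG X (h * t) :=
        Finset.sum_le_sum fun b hb => diff_sum_bound t X hX M b hb
    _ = _ := by
      rw [Finset.sum_const, Nat.card_Ico, nsmul_eq_mul]
      have : 2 * M - M = M := by omega
      rw [this]; ring

lemma hyperbola_sum {R : Type*} [AddCommMonoid R] (N : ℕ) (F : ℕ → ℕ → R) :
    ∑ n ∈ Finset.Icc 1 N, ∑ x ∈ n.divisorsAntidiagonal, F x.1 x.2 =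
    ∑ b ∈ Finset.Icc 1 N, ∑ k ∈ Finset.Icc 1 N, if b * k ≤ N then F b k else 0 := by
  rw [← Finset.sum_product', ← Finset.sum_filter, Finset.sum_sigma']
  refine Finset.sum_bij' (fun x _ => x.2) (fun y _ => ⟨y.1 * y.2, y⟩) ?_ ?_ ?_ ?_ ?_
  · rintro ⟨n, b, k⟩ h
    simp only [Finset.mem_sigma, Finset.mem_Icc, Nat.mem_divisorsAntidiagonal] at h
    obtain ⟨⟨h1, h2⟩, h3, h4⟩ := h
    simp only [Finset.mem_filter, Finset.mem_product, Finset.mem_Icc]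
    have hb : b ≠ 0 := by rintro rfl; simp at h3; omega
    have hk : k ≠ 0 := by rintro rfl; simp at h3; omega
    have : b ≤ b * k := Nat.le_mul_of_pos_right _ (by omega)
    have : k ≤ b * k := Nat.le_mul_of_pos_left _ (by omega)
    omega
  · rintro ⟨b, k⟩ h
    simp only [Finset.mem_filter, Finset.mem_product, Finset.mem_Icc] at h
    simp only [Finset.mem_sigma, Finset.mem_Icc, Nat.mem_divisorsAntidiagonal]
    have : 0 < b * k := Nat.mul_pos (by omega) (by omega)
    simp; omega
  · rintro ⟨n, b, k⟩ h
    simp only [Finset.mem_sigma, Finset.mem_Icc, Nat.mem_divisorsAntidiagonal] at h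
    obtain ⟨⟨h1, h2⟩, h3, h4⟩ := h
    simp only at h3 ⊢
    subst h3; rfl
  · rintro ⟨b, k⟩ h; rfl
  · rintro ⟨n, b, k⟩ h; rfl

lemma tau_sum (N : ℕ) : (∑ n ∈ Finset.Icc 1 N, ((n.divisors.card : ℕ):ℝ)) ≤ N * (1 + Real.log N) := by
  have h : (∑ n ∈ Finset.Icc 1 N, ((n.divisors.card : ℕ):ℝ)) =
      ∑ n ∈ Finset.Icc 1 N, ∑ x ∈ n.divisorsAntidiagonal, (1:ℝ) := by
    apply Finset.sum_congr rfl; intro n _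
    rw [Finset.sum_const, nsmul_eq_mul, mul_one, ← Nat.map_div_right_divisors, Finset.card_map]
  rw [h, hyperbola_sum N (fun _ _ => (1:ℝ))]
  calc _ ≤ ∑ b ∈ Finset.Icc 1 N, (N:ℝ) * (b:ℝ)⁻¹ := by
        apply Finset.sum_le_sum; intro b hb
        rw [Finset.mem_Icc] at hb
        rw [← Finset.sum_filter, Finset.sum_const, nsmul_eq_mul, mul_one]
        have : (Finset.Icc 1 N).filter (fun k => b * k ≤ N) ⊆ Finset.Icc 1 (N / b) := by
          intro k hk
          simp only [Finset.mem_filter, Finset.mem_Icc] at hk ⊢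
          rw [Nat.le_div_iff_mul_le (by omega)]
          exact ⟨hk.1.1, by linarith [hk.2]⟩
        have h2 := Finset.card_le_card this
        rw [Nat.card_Icc, Nat.add_sub_cancel] at h2
        calc _ ≤ ((N / b : ℕ):ℝ) := by exact_mod_cast h2
          _ ≤ N / b := Nat.cast_div_le
          _ = _ := div_eq_mul_inv _ _
    _ = N * (harmonic N : ℝ) := by
        rw [← Finset.mul_sum, harmonic_eq_sum_Icc]; push_cast; rfl
    _ ≤ _ := by gcongr; exact harmonic_le_one_add_log N

lemma tau_mul_le (m n : ℕ) : (m * n).divisors.card ≤ m.divisors.card * n.divisors.card := by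
  rw [Nat.divisors_mul]
  exact Finset.card_mul_le

lemma tau_div_sum (N : ℕ) : (∑ n ∈ Finset.Icc 1 N, ((n.divisors.card : ℕ):ℝ) * (n:ℝ)⁻¹) ≤ (1 + Real.log N) ^ 2 := by
  have h : (∑ n ∈ Finset.Icc 1 N, ((n.divisors.card : ℕ):ℝ) * (n:ℝ)⁻¹) =
      ∑ n ∈ Finset.Icc 1 N, ∑ x ∈ n.divisorsAntidiagonal, ((x.1:ℝ)⁻¹ * (x.2:ℝ)⁻¹) := by
    apply Finset.sum_congr rfl; intro n _
    have : ∀ x ∈ n.divisorsAntidiagonal, ((x.1:ℝ)⁻¹ * (x.2:ℝ)⁻¹) = (n:ℝ)⁻¹ := by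
      intro x hx
      rw [Nat.mem_divisorsAntidiagonal] at hx
      rw [← hx.1]; push_cast; rw [mul_inv]
    rw [Finset.sum_congr rfl this, Finset.sum_const, nsmul_eq_mul, ← Nat.map_div_right_divisors, Finset.card_map]
  rw [h, hyperbola_sum N (fun x y => ((x:ℝ)⁻¹ * (y:ℝ)⁻¹))]
  calc _ ≤ ∑ b ∈ Finset.Icc 1 N, ∑ k ∈ Finset.Icc 1 N, ((b:ℝ)⁻¹ * (k:ℝ)⁻¹) := by
        apply Finset.sum_le_sum; intro b hb
        apply Finset.sum_le_sum; intro k hk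
        split_ifs
        · exact le_rfl
        · positivity
    _ = (harmonic N : ℝ) ^ 2 := by
        rw [← Finset.sum_mul_sum, harmonic_eq_sum_Icc]; push_cast; rw [sq]
    _ ≤ _ := by
      have h0 : (0:ℝ) ≤ (harmonic N : ℝ) := by
        rw [harmonic]; push_cast; positivity
      have := harmonic_le_one_add_log N
      gcongr

lemma tau_sq_sum (N : ℕ) : (∑ n ∈ Finset.Icc 1 N, ((n.divisors.card : ℕ):ℝ) ^ 2) ≤ N * (1 + Real.log N) ^ 3 := by
  have h : (∑ n ∈ Finset.Icc 1 N, ((n.divisors.card : ℕ):ℝ) ^ 2) =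
      ∑ n ∈ Finset.Icc 1 N, ∑ x ∈ n.divisorsAntidiagonal, (((x.1 * x.2).divisors.card : ℕ):ℝ) := by
    apply Finset.sum_congr rfl; intro n _
    have : ∀ x ∈ n.divisorsAntidiagonal, (((x.1 * x.2).divisors.card : ℕ):ℝ) = ((n.divisors.card : ℕ):ℝ) := by
      intro x hx
      rw [Nat.mem_divisorsAntidiagonal] at hx
      rw [← hx.1]
    rw [Finset.sum_congr rfl this, Finset.sum_const, nsmul_eq_mul, sq]
    congr 2
    rw [← Nat.map_div_right_divisors, Finset.card_map]
  rw [h, hyperbola_sum N (fun x y => (((x * y).divisors.card : ℕ):ℝ))]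
  have hl : 0 ≤ 1 + Real.log N := by
    rcases Nat.eq_zero_or_pos N with h | h
    · subst h; simp
    · have := Real.log_nonneg (show (1:ℝ) ≤ N by exact_mod_cast h); linarith
  calc _ ≤ ∑ b ∈ Finset.Icc 1 N, ((b.divisors.card : ℕ):ℝ) * ((N:ℝ) * (b:ℝ)⁻¹ * (1 + Real.log N)) := by
        apply Finset.sum_le_sum; intro b hb
        rw [Finset.mem_Icc] at hb
        rw [← Finset.sum_filter]
        have hset : (Finset.Icc 1 N).filter (fun k => b * k ≤ N) = Finset.Icc 1 (N / b) := by
          ext k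
          simp only [Finset.mem_filter, Finset.mem_Icc]
          rw [Nat.le_div_iff_mul_le (by omega)]
          constructor
          · intro hk; exact ⟨hk.1.1, by linarith [hk.2]⟩
          · intro hk
            have : k ≤ k * b := Nat.le_mul_of_pos_right _ (by omega)
            exact ⟨⟨hk.1, by omega⟩, by linarith⟩
        rw [hset]
        calc _ ≤ ∑ k ∈ Finset.Icc 1 (N / b), ((b.divisors.card : ℕ):ℝ) * ((k.divisors.card : ℕ):ℝ) := by
              apply Finset.sum_le_sum; intro k _
              exact_mod_cast tau_mul_le b k
          _ = ((b.divisors.card : ℕ):ℝ) * ∑ k ∈ Finset.Icc 1 (N / b), ((k.divisors.card : ℕ):ℝ) := by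
              rw [Finset.mul_sum]
          _ ≤ _ := by
              gcongr
              refine (tau_sum _).trans ?_
              have h1 : ((N / b : ℕ):ℝ) ≤ N * (b:ℝ)⁻¹ := by
                rw [← div_eq_mul_inv]; exact Nat.cast_div_le
              have h2 : Real.log (N / b : ℕ) ≤ Real.log N := by
                have : 1 ≤ N / b := (Nat.one_le_div_iff (by omega)).mpr hb.2
                apply Real.log_le_log (by exact_mod_cast this)
                exact_mod_cast Nat.div_le_self N b
              gcongr
    _ = N * (1 + Real.log N) * ∑ b ∈ Finset.Icc 1 N, ((b.divisors.card : ℕ):ℝ) * (b:ℝ)⁻¹ := by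
        rw [Finset.mul_sum]; apply Finset.sum_congr rfl; intro b _; ring
    _ ≤ N * (1 + Real.log N) * (1 + Real.log N) ^ 2 := by gcongr; exact tau_div_sum N
    _ = _ := by ring

end Part2

section Part3

open ArithmeticFunction in
noncomputable def muS (U : ℕ) : ArithmeticFunction ℤ :=
  ⟨fun n => if n ≤ U then ArithmeticFunction.moebius n else 0, by simp⟩

noncomputable def muL (U : ℕ) : ArithmeticFunction ℤ :=
  ⟨fun n => if n ≤ U then 0 else ArithmeticFunction.moebius n, by simp⟩

lemma muS_apply (U n : ℕ) : muS U n = if n ≤ U then ArithmeticFunction.moebius n else 0 := rfl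
lemma muL_apply (U n : ℕ) : muL U n = if n ≤ U then 0 else ArithmeticFunction.moebius n := rfl

lemma vaughan (U : ℕ) : ArithmeticFunction.moebius = muS U + muS U - (muS U * muS U) * (ArithmeticFunction.zeta : ArithmeticFunction ℤ)
    + muL U * (muL U * (ArithmeticFunction.zeta : ArithmeticFunction ℤ)) := by
  have h : ArithmeticFunction.moebius = muS U + muL U := by
    ext n
    rw [ArithmeticFunction.add_apply, muS_apply, muL_apply]
    split_ifs <;> simp
  have h2 : (muS U + muL U) * (ArithmeticFunction.zeta : ArithmeticFunction ℤ) = 1 := by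
    rw [← h]; exact ArithmeticFunction.moebius_mul_coe_zeta
  calc ArithmeticFunction.moebius = (muS U + muL U) := h
    _ = muS U + muS U - (muS U * muS U) * (ArithmeticFunction.zeta : ArithmeticFunction ℤ)
    + muL U * (muL U * (ArithmeticFunction.zeta : ArithmeticFunction ℤ))
      + ((muL U - muS U) - (muL U - muS U) * ((muS U + muL U) * (ArithmeticFunction.zeta : ArithmeticFunction ℤ))) := by ring
    _ = _ := by rw [h2]; ring

lemma mu_abs_le (n : ℕ) : |ArithmeticFunction.moebius n| ≤ 1 := ArithmeticFunction.abs_moebius_le_one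

lemma muS_abs (U n : ℕ) : |((muS U n : ℤ) : ℝ)| ≤ if n ≤ U then 1 else 0 := by
  rw [muS_apply]; split_ifs
  · exact_mod_cast mu_abs_le n
  · simp

lemma muL_norm (U n : ℕ) : ‖((muL U n : ℤ) : ℂ)‖ ≤ 1 := by
  rw [muL_apply]; split_ifs
  · simp
  · rw [Complex.norm_intCast]; exact_mod_cast mu_abs_le n

lemma gamma_norm (U n : ℕ) : ‖(((muL U * (ArithmeticFunction.zeta : ArithmeticFunction ℤ)) n : ℤ) : ℂ)‖ ≤ (n.divisors.card : ℕ) := by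
  rw [ArithmeticFunction.coe_mul_zeta_apply]
  push_cast
  refine (norm_sum_le _ _).trans ?_
  refine (Finset.sum_le_sum fun i _ => muL_norm U i).trans ?_
  simp

lemma gamma_zero (U n : ℕ) (h : n ≤ U) : (muL U * (ArithmeticFunction.zeta : ArithmeticFunction ℤ)) n = 0 := by
  rw [ArithmeticFunction.coe_mul_zeta_apply]
  apply Finset.sum_eq_zero
  intro i hi
  have := Nat.divisor_le hi
  rw [muL_apply, if_pos (by omega)]

lemma conv_sum (f g : ArithmeticFunction ℤ) (t : ℝ) (N : ℕ) :
    ∑ n ∈ Finset.Icc 1 N, (((f * g) n : ℤ) : ℂ) * ee (n * t) =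
    ∑ b ∈ Finset.Icc 1 N, ∑ k ∈ Finset.Icc 1 N, if b * k ≤ N then (f b : ℂ) * (g k : ℂ) * ee ((b * k : ℕ) * t) else 0 := by
  rw [← hyperbola_sum N (fun b k => (f b : ℂ) * (g k : ℂ) * ee ((b * k : ℕ) * t))]
  apply Finset.sum_congr rfl; intro n _
  rw [ArithmeticFunction.mul_apply]
  push_cast
  rw [Finset.sum_mul]
  apply Finset.sum_congr rfl; intro x hx
  rw [Nat.mem_divisorsAntidiagonal] at hx
  rw [← hx.1]; push_cast; rfl

lemma typeI (t : ℝ) (a : ℤ) (q N U : ℕ) (hq : 0 < q) (hc : IsCoprime a (q:ℤ))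
    (ht : |t - a / q| ≤ 1 / (q:ℝ) ^ 2) (hU : 2 * U ^ 2 ≤ q) :
    ‖∑ n ∈ Finset.Icc 1 N, ((((muS U * muS U) * (ArithmeticFunction.zeta : ArithmeticFunction ℤ)) n : ℤ) : ℂ) * ee (n * t)‖
      ≤ U ^ 2 * q := by
  have hq' : (0:ℝ) < q := by exact_mod_cast hq
  rw [conv_sum]
  set g := muS U * muS U with hg
  have hg0 : ∀ d, U ^ 2 < d → g d = 0 := by
    intro d hd
    rw [hg, ArithmeticFunction.mul_apply]
    apply Finset.sum_eq_zero
    intro x hx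
    rw [Nat.mem_divisorsAntidiagonal] at hx
    rw [muS_apply, muS_apply]
    split_ifs with h1 h2
    · have := Nat.mul_le_mul h1 h2
      rw [hx.1] at this; nlinarith
    all_goals simp
  have hgsum : ∑ d ∈ Finset.Icc 1 N, |((g d : ℤ):ℝ)| ≤ U ^ 2 := by
    calc ∑ d ∈ Finset.Icc 1 N, |((g d : ℤ):ℝ)| ≤ ∑ d ∈ Finset.Icc 1 N, ∑ x ∈ d.divisorsAntidiagonal,
          ((if x.1 ≤ U then 1 else 0) * (if x.2 ≤ U then 1 else 0) : ℝ) := by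
          apply Finset.sum_le_sum; intro d _
          rw [hg, ArithmeticFunction.mul_apply]; push_cast
          refine (Finset.abs_sum_le_sum_abs _ _).trans (Finset.sum_le_sum fun x _ => ?_)
          rw [abs_mul]
          have := muS_abs U x.1
          have := muS_abs U x.2
          gcongr
      _ = ∑ b ∈ Finset.Icc 1 N, ∑ k ∈ Finset.Icc 1 N, if b * k ≤ N then
          ((if b ≤ U then 1 else 0) * (if k ≤ U then 1 else 0) : ℝ) else 0 :=
          hyperbola_sum N (fun b k => ((if b ≤ U then 1 else 0) * (if k ≤ U then 1 else 0) : ℝ))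
      _ ≤ ∑ b ∈ Finset.Icc 1 N, ∑ k ∈ Finset.Icc 1 N,
          ((if b ≤ U then 1 else 0) * (if k ≤ U then 1 else 0) : ℝ) := by
          apply Finset.sum_le_sum; intro b _
          apply Finset.sum_le_sum; intro k _
          split_ifs <;> norm_num
      _ = (∑ b ∈ Finset.Icc 1 N, (if b ≤ U then 1 else 0 : ℝ)) ^ 2 := by
          rw [sq, Finset.sum_mul_sum]
      _ ≤ _ := by
          have : (∑ b ∈ Finset.Icc 1 N, (if b ≤ U then 1 else 0 : ℝ)) ≤ U := by
            rw [← Finset.sum_filter, Finset.sum_const, nsmul_eq_mul, mul_one]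
            have : (Finset.Icc 1 N).filter (fun b => b ≤ U) ⊆ Finset.Icc 1 U := by
              intro b hb; simp at hb ⊢; omega
            have := Finset.card_le_card this
            rw [Nat.card_Icc, Nat.add_sub_cancel] at this
            exact_mod_cast this
          gcongr
  calc _ ≤ ∑ b ∈ Finset.Icc 1 N, |((g b : ℤ):ℝ)| * q := by
        refine (norm_sum_le _ _).trans (Finset.sum_le_sum fun b hb => ?_)
        rw [Finset.mem_Icc] at hb
        by_cases hbU : U ^ 2 < b
        · rw [hg0 b hbU]; simp
        push Not at hbU
        have e1 : (∑ k ∈ Finset.Icc 1 N, if b * k ≤ N then (g b : ℂ) * (((ArithmeticFunction.zeta : ArithmeticFunction ℤ) k : ℤ) : ℂ) * ee ((b * k : ℕ) * t) else 0)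
            = (g b : ℂ) * ∑ k ∈ Finset.Ioc 0 (N / b), ee (k * (b * t)) := by
          rw [← Finset.sum_filter, Finset.mul_sum]
          apply Finset.sum_congr
          · ext k
            simp only [Finset.mem_filter, Finset.mem_Icc, Finset.mem_Ioc]
            rw [Nat.le_div_iff_mul_le (by omega)]
            constructor
            · intro hk; exact ⟨by omega, by linarith [hk.2]⟩
            · intro hk
              have : k ≤ k * b := Nat.le_mul_of_pos_right _ (by omega)
              exact ⟨⟨by omega, by omega⟩, by linarith⟩
          · intro k hk
            rw [Finset.mem_Ioc] at hk
            have : (((ArithmeticFunction.zeta : ArithmeticFunction ℤ) k : ℤ) : ℂ) = 1 := by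
              rw [ArithmeticFunction.natCoe_apply, ArithmeticFunction.zeta_apply_ne (by omega)]; simp
            rw [this, mul_one]; congr 2; push_cast; ring
        rw [e1, norm_mul, Complex.norm_intCast]
        gcongr
        have e2 := geom_bound (b * t) 0 (N / b)
        have e3 := sep_lemma t a q hq hc ht b (by omega) (by
          rw [abs_of_nonneg (by positivity)]
          have : 2 * b ≤ q := by omega
          exact_mod_cast this)
        push_cast at e3
        rw [div_le_iff₀ (by positivity)] at e3
        nlinarith [norm_nonneg (∑ k ∈ Finset.Ioc 0 (N / b), ee (k * (b * t)))]
    _ = (∑ b ∈ Finset.Icc 1 N, |((g b : ℤ):ℝ)|) * q := by rw [Finset.sum_mul]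
    _ ≤ _ := by gcongr

lemma typeII_block (t : ℝ) (a : ℤ) (q N U M : ℕ) (hU0 : 0 < U) (hc : IsCoprime a (q:ℤ))
    (ht : |t - a / q| ≤ 1 / (q:ℝ) ^ 2) (hU : U ≤ q) (hqN : q * U ≤ N) (hM : 0 < M) :
    ‖∑ b ∈ Finset.Ico M (2 * M), ∑ k ∈ Finset.Icc 1 (N / M),
      (if U < k ∧ b * k ≤ N then ((muL U b : ℤ):ℂ) * (((muL U * (ArithmeticFunction.zeta : ArithmeticFunction ℤ)) k : ℤ):ℂ) * ee ((b * k : ℕ) * t) else 0)‖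
      ≤ 9 * N * (1 + Real.log N) ^ 2 / Real.sqrt U := by
  have hq : 0 < q := by omega
  have hq' : (0:ℝ) < q := by exact_mod_cast hq
  have hq1 : (1:ℝ) ≤ q := by exact_mod_cast hq
  have hU' : (0:ℝ) < U := by exact_mod_cast hU0
  have hU1 : (1:ℝ) ≤ U := by exact_mod_cast hU0
  have hM' : (0:ℝ) < M := by exact_mod_cast hM
  have hqUN : (q:ℝ) * U ≤ N := by exact_mod_cast hqN
  have hN1 : (1:ℝ) ≤ N := by nlinarith
  have hlog := Real.log_nonneg hN1
  set L := 1 + Real.log N with hL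
  have hL1 : 1 ≤ L := by linarith
  by_cases c1 : 2 * M ≤ U
  · rw [Finset.sum_eq_zero]
    · rw [norm_zero]; positivity
    · intro b hb
      apply Finset.sum_eq_zero; intro k hk
      rw [Finset.mem_Ico] at hb
      have h0 : muL U b = 0 := by rw [muL_apply, if_pos (by omega)]
      rw [h0]; simp
  by_cases c2 : N < M * U
  · rw [Finset.sum_eq_zero]
    · rw [norm_zero]; positivity
    · intro b hb
      apply Finset.sum_eq_zero; intro k hk
      rw [Finset.mem_Ico] at hb
      rw [if_neg]
      rintro ⟨h1, h2⟩
      have := Nat.mul_le_mul hb.1 h1.le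
      omega
  push Not at c1 c2
  have c1' : (U:ℝ) ≤ 2 * M := by exact_mod_cast c1.le
  have c2' : (M:ℝ) * U ≤ N := by exact_mod_cast c2
  have hb := bilin t M N U hM (fun b => ((muL U b : ℤ):ℂ)) (fun k => (((muL U * (ArithmeticFunction.zeta : ArithmeticFunction ℤ)) k : ℤ):ℂ)) (fun b => muL_norm U b)
  have hg : ∑ k ∈ Finset.Icc 1 (N / M), ‖(((muL U * (ArithmeticFunction.zeta : ArithmeticFunction ℤ)) k : ℤ):ℂ)‖ ^ 2 ≤ (N:ℝ) / M * L ^ 3 := by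
    refine (Finset.sum_le_sum fun k _ => pow_le_pow_left₀ (norm_nonneg _) (gamma_norm U k) 2).trans ?_
    refine (tau_sq_sum _).trans ?_
    have h1 : ((N / M : ℕ):ℝ) ≤ N / M := Nat.cast_div_le
    have h3 : 1 ≤ N / M := (Nat.one_le_div_iff hM).mpr (by nlinarith)
    have h4 : 0 ≤ Real.log (N / M : ℕ) := Real.log_nonneg (by exact_mod_cast h3)
    have h2 : Real.log (N / M : ℕ) ≤ Real.log N := by
      apply Real.log_le_log (by exact_mod_cast h3)
      exact_mod_cast Nat.div_le_self N M
    gcongr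
    linarith
  have hf := full_bound t ((N:ℝ) / M) (by positivity) a q hq hc ht M
  have hlog2q : 1 + Real.log (2 * q) ≤ 2 * L := by
    rw [Real.log_mul (by norm_num) hq'.ne']
    have h1 : Real.log q ≤ Real.log N := Real.log_le_log hq' (by nlinarith)
    have := Real.log_two_lt_d9
    linarith
  have hf2 : ∑ h ∈ Finset.range M, GG ((N:ℝ) / M) (h * t) ≤ 8 * L * (5 * N / U) := by
    refine hf.trans ?_
    have e1 : (2 * M / q + 1) * (2 * ((N:ℝ) / M) + 2 * q * (1 + Real.log (2 * q))) ≤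
        (2 * M / q + 1) * (2 * ((N:ℝ) / M) + 2 * q * (2 * L)) := by gcongr
    refine e1.trans ?_
    have e2 : (2 * M / q + 1) * (2 * ((N:ℝ) / M) + 2 * q * (2 * L)) = 4 * (N / q) + 8 * L * M + 2 * (N / M) + 4 * L * q := by
      field_simp; ring
    rw [e2]
    have e3 : (N:ℝ) / q ≤ N / U := by gcongr
    have e4 : (M:ℝ) ≤ N / U := by rw [le_div_iff₀ hU']; exact c2'
    have e5 : (N:ℝ) / M ≤ 2 * (N / U) := by
      rw [div_le_iff₀ hM']
      have : 2 * ((N:ℝ) / U) * M = N * (2 * M / U) := by field_simp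
      rw [this]
      have : 1 ≤ 2 * (M:ℝ) / U := by rw [le_div_iff₀ hU']; linarith
      nlinarith
    have e6 : (q:ℝ) ≤ N / U := by rw [le_div_iff₀ hU']; exact hqUN
    have e7 : 8 * L * (5 * N / U) = 40 * L * ((N:ℝ) / U) := by ring
    rw [e7]
    have e8 : 0 ≤ (N:ℝ) / U := by positivity
    have e9 : (N:ℝ) / U ≤ L * (N / U) := by nlinarith
    have e10 : L * M ≤ L * (N / U) := by gcongr
    have e11 : L * q ≤ L * (N / U) := by gcongr
    nlinarith
  apply abs_le_of_sq_le_sq' _ (by positivity) |>.2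
  refine hb.trans ?_
  have hs : Real.sqrt U ^ 2 = U := Real.sq_sqrt hU'.le
  have hGn : 0 ≤ ∑ h ∈ Finset.range M, GG ((N:ℝ) / M) (h * t) :=
    Finset.sum_nonneg fun h _ => GG_nonneg _ _ (by positivity)
  calc _ ≤ ((N:ℝ) / M * L ^ 3) * (2 * M * (8 * L * (5 * N / U))) := by gcongr
    _ = 80 * (N ^ 2 * L ^ 4 / U) := by field_simp; ring
    _ ≤ 81 * (N ^ 2 * L ^ 4 / U) := by gcongr; norm_num
    _ = _ := by rw [div_pow, hs]; ring

lemma dyadic_split {R : Type*} [AddCommMonoid R] (F : ℕ → R) (J : ℕ) :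
    ∑ b ∈ Finset.Ico 1 (2 ^ J), F b = ∑ j ∈ Finset.range J, ∑ b ∈ Finset.Ico (2 ^ j) (2 * 2 ^ j), F b := by
  induction J with
  | zero => simp
  | succ n ih =>
    rw [Finset.sum_range_succ, ← ih, pow_succ, mul_comm (2 ^ n) 2]
    rw [Finset.sum_Ico_consecutive]
    · exact Nat.one_le_two_pow
    · have := Nat.one_le_two_pow (n := n); omega

lemma typeII (t : ℝ) (a : ℤ) (q N U : ℕ) (hU0 : 0 < U) (hc : IsCoprime a (q:ℤ))
    (ht : |t - a / q| ≤ 1 / (q:ℝ) ^ 2) (hU : U ≤ q) (hqN : q * U ≤ N) :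
    ‖∑ n ∈ Finset.Icc 1 N, (((muL U * (muL U * (ArithmeticFunction.zeta : ArithmeticFunction ℤ))) n : ℤ) : ℂ) * ee (n * t)‖
      ≤ 18 * N * (1 + Real.log N) ^ 3 / Real.sqrt U := by
  have hN0 : 0 < N := by
    have : 0 < q * U := Nat.mul_pos (by omega) hU0
    omega
  rw [conv_sum]
  set γ := (muL U * (ArithmeticFunction.zeta : ArithmeticFunction ℤ)) with hγ
  set F : ℕ → ℂ := fun b => ∑ k ∈ Finset.Icc 1 N, if b * k ≤ N then ((muL U b : ℤ):ℂ) * (γ k : ℂ) * ee ((b * k : ℕ) * t) else 0 with hF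
  set J := Nat.log 2 N + 1 with hJ
  have hJN : N < 2 ^ J := Nat.lt_pow_succ_log_self (by norm_num) N
  have h1 : ∑ b ∈ Finset.Icc 1 N, F b = ∑ b ∈ Finset.Ico 1 (2 ^ J), F b := by
    apply Finset.sum_subset
    · intro b hb; simp at hb ⊢; omega
    · intro b hb hb2
      simp at hb hb2
      simp only [hF]
      apply Finset.sum_eq_zero; intro k hk
      rw [Finset.mem_Icc] at hk
      rw [if_neg]
      have : b ≤ b * k := Nat.le_mul_of_pos_right _ (by omega)
      have := hb2 (by omega)
      omega
  rw [h1, dyadic_split]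
  have h2 : ∀ j ∈ Finset.range J, ‖∑ b ∈ Finset.Ico (2 ^ j) (2 * 2 ^ j), F b‖ ≤ 9 * N * (1 + Real.log N) ^ 2 / Real.sqrt U := by
    intro j _
    have := typeII_block t a q N U (2 ^ j) hU0 hc ht hU hqN (by positivity)
    refine le_trans (le_of_eq ?_) this
    congr 1
    apply Finset.sum_congr rfl; intro b hb
    rw [Finset.mem_Ico] at hb
    have hb0 : 0 < b := lt_of_lt_of_le (by positivity) hb.1
    simp only [hF]
    rw [← Finset.sum_filter, ← Finset.sum_filter]
    symm
    apply Finset.sum_subset_zero_on_sdiff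
    · intro k hk
      simp only [Finset.mem_filter, Finset.mem_Icc] at hk ⊢
      have : k ≤ b * k := Nat.le_mul_of_pos_left _ hb0
      omega
    · intro k hk
      simp only [Finset.mem_sdiff, Finset.mem_filter, Finset.mem_Icc, not_and] at hk
      by_cases hkU : k ≤ U
      · rw [hγ, gamma_zero U k hkU]; simp
      · exfalso
        refine hk.2 ⟨hk.1.1.1, ?_⟩ (by omega) hk.1.2
        rw [Nat.le_div_iff_mul_le (by positivity)]
        calc k * 2 ^ j ≤ k * b := Nat.mul_le_mul_left _ hb.1
          _ ≤ N := by linarith [hk.1.2]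
    · intro k _; rfl
  refine (norm_sum_le _ _).trans ((Finset.sum_le_sum h2).trans ?_)
  rw [Finset.sum_const, Finset.card_range, nsmul_eq_mul]
  have hN1 : (1:ℝ) ≤ N := by exact_mod_cast hN0
  have hlog := Real.log_nonneg hN1
  have hJ2 : (J:ℝ) ≤ 2 * (1 + Real.log N) := by
    have : ((Nat.log 2 N : ℕ):ℝ) * Real.log 2 ≤ Real.log N := by
      rw [← Real.log_pow]
      apply Real.log_le_log (by positivity)
      exact_mod_cast Nat.pow_log_le_self 2 (by omega)
    have := Real.log_two_gt_d9
    rw [hJ]; push_cast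
    nlinarith [Nat.cast_nonneg (α := ℝ) (Nat.log 2 N)]
  calc (J:ℝ) * (9 * N * (1 + Real.log N) ^ 2 / Real.sqrt U) ≤ (2 * (1 + Real.log N)) * (9 * N * (1 + Real.log N) ^ 2 / Real.sqrt U) := by gcongr
    _ = _ := by ring

/-- Minor arc bound. -/
lemma minor_arc (t : ℝ) (a : ℤ) (q N U : ℕ) (hU0 : 0 < U) (hc : IsCoprime a (q:ℤ))
    (ht : |t - a / q| ≤ 1 / (q:ℝ) ^ 2) (hU : 2 * U ^ 2 ≤ q) (hqN : q * U ^ 3 ≤ N) :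
    ‖∑ n ∈ Finset.Icc 1 N, ((ArithmeticFunction.moebius n : ℤ) : ℂ) * ee (n * t)‖
      ≤ 21 * N * (1 + Real.log N) ^ 3 / Real.sqrt U := by
  have hUq : U ≤ q := by nlinarith
  have hq : 0 < q := by omega
  have hqN' : q * U ≤ N := by
    refine le_trans (Nat.mul_le_mul_left _ ?_) hqN
    exact Nat.le_self_pow (by norm_num) U
  have hN0 : 0 < N := by
    have : 0 < q * U := Nat.mul_pos (by omega) hU0
    omega
  have h1 := typeI t a q N U hq hc ht hU
  have h2 := typeII t a q N U hU0 hc ht hUq hqN'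
  have h0 : ‖∑ n ∈ Finset.Icc 1 N, ((muS U n : ℤ) : ℂ) * ee (n * t)‖ ≤ U := by
    refine (norm_sum_le _ _).trans ?_
    calc _ ≤ ∑ n ∈ Finset.Icc 1 N, (if n ≤ U then 1 else 0 : ℝ) := by
          apply Finset.sum_le_sum; intro n _
          rw [norm_mul, ee_norm, mul_one, Complex.norm_intCast]
          exact muS_abs U n
      _ ≤ U := by
          rw [← Finset.sum_filter, Finset.sum_const, nsmul_eq_mul, mul_one]
          have : (Finset.Icc 1 N).filter (fun b => b ≤ U) ⊆ Finset.Icc 1 U := by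
            intro b hb; simp at hb ⊢; omega
          have := Finset.card_le_card this
          rw [Nat.card_Icc, Nat.add_sub_cancel] at this
          exact_mod_cast this
  have hsplit : ∑ n ∈ Finset.Icc 1 N, ((ArithmeticFunction.moebius n : ℤ) : ℂ) * ee (n * t) =
      ∑ n ∈ Finset.Icc 1 N, ((muS U n : ℤ) : ℂ) * ee (n * t) + ∑ n ∈ Finset.Icc 1 N, ((muS U n : ℤ) : ℂ) * ee (n * t)
      - ∑ n ∈ Finset.Icc 1 N, ((((muS U * muS U) * (ArithmeticFunction.zeta : ArithmeticFunction ℤ)) n : ℤ) : ℂ) * ee (n * t)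
      + ∑ n ∈ Finset.Icc 1 N, (((muL U * (muL U * (ArithmeticFunction.zeta : ArithmeticFunction ℤ))) n : ℤ) : ℂ) * ee (n * t) := by
    rw [← Finset.sum_add_distrib, ← Finset.sum_sub_distrib, ← Finset.sum_add_distrib]
    apply Finset.sum_congr rfl; intro n _
    have := congrArg (fun f : ArithmeticFunction ℤ => f n) (vaughan U)
    simp only [ArithmeticFunction.add_apply, sub_eq_add_neg, ArithmeticFunction.neg_apply] at this
    rw [this]; push_cast; ring
  rw [hsplit]
  refine (norm_add_le _ _).trans ?_
  refine (add_le_add_left (norm_sub_le _ _) _).trans ?_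
  refine (add_le_add_left (add_le_add_left (norm_add_le _ _) _) _).trans ?_
  have hN1 : (1:ℝ) ≤ N := by exact_mod_cast hN0
  have hlog := Real.log_nonneg hN1
  set L := 1 + Real.log N with hL
  have hL1 : 1 ≤ L := by linarith
  have hU' : (0:ℝ) < U := by exact_mod_cast hU0
  have hU1 : (1:ℝ) ≤ U := by exact_mod_cast hU0
  have hs : Real.sqrt U ^ 2 = U := Real.sq_sqrt hU'.le
  have hs0 : 0 < Real.sqrt U := Real.sqrt_pos.mpr hU'
  have hs1 : 1 ≤ Real.sqrt U := Real.one_le_sqrt.mpr hU1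
  have hqNr : (q:ℝ) * U ^ 3 ≤ N := by exact_mod_cast hqN
  have hUqr : 2 * (U:ℝ) ^ 2 ≤ q := by exact_mod_cast hU
  have hL3 : 1 ≤ L ^ 3 := one_le_pow₀ hL1
  have e1 : (U:ℝ) ≤ N * L ^ 3 / Real.sqrt U := by
    rw [le_div_iff₀ hs0]
    have : (U:ℝ) * Real.sqrt U ≤ U * U := by gcongr; nlinarith
    have : (U:ℝ) * U ≤ N := by
      have : (1:ℝ) ≤ U ^ 3 := one_le_pow₀ hU1
      nlinarith
    nlinarith
  have e2 : (U:ℝ) ^ 2 * q ≤ N * L ^ 3 / Real.sqrt U := by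
    rw [le_div_iff₀ hs0]
    have : (U:ℝ) ^ 2 * q * Real.sqrt U ≤ U ^ 2 * q * U := by gcongr; nlinarith
    nlinarith
  have e3 : 21 * N * L ^ 3 / Real.sqrt U = 3 * (N * L ^ 3 / Real.sqrt U) + 18 * N * L ^ 3 / Real.sqrt U := by ring
  rw [e3]; linarith

end Part3

section Part4

open Filter Topology

lemma int_tail (Y : ℕ) (hY : 1 ≤ Y) (σ : ℝ) (hσ : 0 < σ) :
    ∫ t in Set.Ioi (Y:ℝ), t ^ (-σ - 1) = (Y:ℝ) ^ (-σ) / σ := by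
  rw [integral_Ioi_rpow_of_lt (by linarith) (by exact_mod_cast hY)]
  rw [show -σ - 1 + 1 = -σ by ring, neg_div_neg_eq]

noncomputable def RR (f : ℕ → ℂ) (c : ℂ) (Y : ℕ) (u : ℝ) : ℂ :=
  if (Y:ℝ) < u then (∑ k ∈ Finset.Ioc Y ⌊u⌋₊, f k) - c * (u - Y) else 0

lemma RR_meas (f : ℕ → ℂ) (c : ℂ) (Y : ℕ) : Measurable (RR f c Y) := by
  unfold RR
  apply Measurable.ite measurableSet_Ioi
  · apply Measurable.sub
    · exact (measurable_from_nat (f := fun n => ∑ k ∈ Finset.Ioc Y n, f k)).comp Nat.measurable_floor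
    · fun_prop
  · exact measurable_const

lemma RR_bound (f : ℕ → ℂ) (c : ℂ) (K : ℝ) (hc : ‖c‖ ≤ 1)
    (hK : ∀ Y N : ℕ, Y ≤ N → ‖(∑ k ∈ Finset.Ioc Y N, f k) - c * (N - Y)‖ ≤ K) (Y : ℕ) (u : ℝ) :
    ‖RR f c Y u‖ ≤ K + 1 := by
  have hK0 : 0 ≤ K := (norm_nonneg _).trans (hK 0 0 le_rfl)
  unfold RR
  split_ifs with h
  · have h0 : (0:ℝ) ≤ u := (Nat.cast_nonneg _).trans h.le
    have h1 := hK Y ⌊u⌋₊ (Nat.le_floor h.le)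
    have h2 : (∑ k ∈ Finset.Ioc Y ⌊u⌋₊, f k) - c * (u - Y) =
      ((∑ k ∈ Finset.Ioc Y ⌊u⌋₊, f k) - c * ((⌊u⌋₊ : ℕ) - Y)) - c * ((u - ⌊u⌋₊ : ℝ) : ℂ) := by
      push_cast; ring
    rw [h2]
    refine (norm_sub_le _ _).trans (add_le_add h1 ?_)
    rw [norm_mul, Complex.norm_real, Real.norm_eq_abs, abs_of_nonneg (by linarith [Nat.floor_le h0])]
    have := Nat.lt_floor_add_one u
    have := Nat.floor_le h0
    nlinarith [norm_nonneg c]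
  · rw [norm_zero]; linarith

lemma RR_locint (f : ℕ → ℂ) (c : ℂ) (K : ℝ) (hc : ‖c‖ ≤ 1)
    (hK : ∀ Y N : ℕ, Y ≤ N → ‖(∑ k ∈ Finset.Ioc Y N, f k) - c * (N - Y)‖ ≤ K) (Y : ℕ) :
    MeasureTheory.LocallyIntegrable (RR f c Y) := by
  have hK0 : 0 ≤ K := (norm_nonneg _).trans (hK 0 0 le_rfl)
  refine (MeasureTheory.locallyIntegrable_const (K + 1)).mono (RR_meas f c Y).aestronglyMeasurable ?_
  refine Eventually.of_forall fun u => (RR_bound f c K hc hK Y u).trans (le_abs_self _)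

lemma RR_mellin (f : ℕ → ℂ) (c : ℂ) (K : ℝ) (hc : ‖c‖ ≤ 1)
    (hK : ∀ Y N : ℕ, Y ≤ N → ‖(∑ k ∈ Finset.Ioc Y N, f k) - c * (N - Y)‖ ≤ K) (Y : ℕ) (hY : 1 ≤ Y)
    (s : ℂ) (hs : s.re < 0) :
    MellinConvergent (RR f c Y) s ∧ DifferentiableAt ℂ (mellin (RR f c Y)) s := by
  have h1 := (RR_locint f c K hc hK Y).locallyIntegrableOn (Set.Ioi 0)
  have h2 : RR f c Y =O[atTop] fun x : ℝ => x ^ (-(0:ℝ)) := by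
    refine Asymptotics.IsBigO.of_bound (K + 1) (Eventually.of_forall fun x => ?_)
    simpa using RR_bound f c K hc hK Y x
  have h3 : RR f c Y =O[𝓝[>] 0] fun x : ℝ => x ^ (-(s.re - 1)) := by
    refine Asymptotics.IsBigO.of_bound 0 ?_
    have : Set.Ioo (0:ℝ) 1 ∈ 𝓝[>] (0:ℝ) := Ioo_mem_nhdsGT (by norm_num)
    filter_upwards [this] with x hx
    unfold RR
    have : (1:ℝ) ≤ Y := by exact_mod_cast hY
    rw [if_neg (by linarith [hx.2])]; simp
  exact ⟨mellinConvergent_of_isBigO_rpow h1 h2 hs h3 (by linarith),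
    mellin_differentiableAt_of_isBigO_rpow h1 h2 hs h3 (by linarith)⟩

lemma RR_mellin_eq (f : ℕ → ℂ) (c : ℂ) (Y : ℕ) (s : ℂ) :
    mellin (RR f c Y) (-s) = ∫ t in Set.Ioi (Y:ℝ), (t:ℂ) ^ (-s - 1) * RR f c Y t := by
  unfold mellin
  simp only [smul_eq_mul]
  rw [MeasureTheory.setIntegral_eq_of_subset_of_forall_sdiff_eq_zero measurableSet_Ioi
    (Set.Ioi_subset_Ioi (Nat.cast_nonneg Y))]
  intro x hx
  rw [RR, if_neg, mul_zero]
  exact fun h => hx.2 h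

lemma RR_mellin_bound (f : ℕ → ℂ) (c : ℂ) (K : ℝ) (hc : ‖c‖ ≤ 1)
    (hK : ∀ Y N : ℕ, Y ≤ N → ‖(∑ k ∈ Finset.Ioc Y N, f k) - c * (N - Y)‖ ≤ K) (Y : ℕ) (hY : 1 ≤ Y)
    (s : ℂ) (hs : 0 < s.re) :
    ‖mellin (RR f c Y) (-s)‖ ≤ (K + 1) * ((Y:ℝ) ^ (-s.re) / s.re) := by
  rw [RR_mellin_eq, ← int_tail Y hY _ hs, ← MeasureTheory.integral_const_mul]
  have hY' : (0:ℝ) < Y := by exact_mod_cast hY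
  apply MeasureTheory.norm_integral_le_of_norm_le
  · exact (integrableOn_Ioi_rpow_of_lt (by linarith) hY').const_mul _
  · rw [MeasureTheory.ae_restrict_iff' measurableSet_Ioi]
    refine Eventually.of_forall fun t ht => ?_
    have ht0 : 0 < t := hY'.trans ht
    rw [norm_mul, Complex.norm_cpow_eq_rpow_re_of_pos ht0, mul_comm]
    have := RR_bound f c K hc hK Y t
    simp only [Complex.sub_re, Complex.neg_re, Complex.one_re]
    gcongr

lemma LS_summable (f : ℕ → ℂ) (hf : ∀ n, ‖f n‖ ≤ 1) (s : ℂ) (hs : 1 < s.re) : LSeriesSummable f s :=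
  LSeriesSummable_of_bounded_of_one_lt_re (m := 1) (fun n _ => hf n) hs

lemma LS_eq (f : ℕ → ℂ) (c : ℂ) (K : ℝ) (hf : ∀ n, ‖f n‖ ≤ 1) (hc : ‖c‖ ≤ 1)
    (hK : ∀ Y N : ℕ, Y ≤ N → ‖(∑ k ∈ Finset.Ioc Y N, f k) - c * (N - Y)‖ ≤ K) (Y : ℕ) (hY : 1 ≤ Y)
    (s : ℂ) (hs : 1 < s.re) :
    LSeries f s = (∑ n ∈ Finset.Icc 1 Y, f n * (n:ℂ) ^ (-s)) + s * mellin (RR f c Y) (-s)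
      + c * (Y:ℂ) ^ (1 - s) / (s - 1) := by
  have hY' : (0:ℝ) < Y := by exact_mod_cast hY
  set f1 : ℕ → ℂ := fun n => if n ≤ Y then f n else 0 with hf1
  set g : ℕ → ℂ := fun n => if n ≤ Y then 0 else f n with hg
  have hgb : ∀ n, ‖g n‖ ≤ 1 := by intro n; simp only [hg]; split_ifs; simp; exact hf n
  have hf1b : ∀ n, ‖f1 n‖ ≤ 1 := by intro n; simp only [hf1]; split_ifs; exact hf n; simp
  have e0 : f = f1 + g := by
    ext n; simp only [hf1, hg, Pi.add_apply]; split_ifs <;> simp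
  have e1 : LSeries f s = LSeries f1 s + LSeries g s := by
    conv_lhs => rw [e0]
    exact LSeries_add (LS_summable f1 hf1b s hs) (LS_summable g hgb s hs)
  have e2 : LSeries f1 s = ∑ n ∈ Finset.Icc 1 Y, f n * (n:ℂ) ^ (-s) := by
    unfold LSeries
    rw [tsum_eq_sum (s := Finset.Icc 1 Y)]
    · apply Finset.sum_congr rfl; intro n hn
      rw [Finset.mem_Icc] at hn
      rw [LSeries.term_of_ne_zero (by omega)]
      simp only [hf1]
      rw [if_pos hn.2, Complex.cpow_neg, div_eq_mul_inv]
    · intro n hn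
      rw [Finset.mem_Icc] at hn
      rcases Nat.eq_zero_or_pos n with h | h
      · rw [h]; simp
      · rw [LSeries.term_of_ne_zero (by omega)]
        simp only [hf1]
        rw [if_neg (by omega)]; simp
  have e3 : LSeries g s = s * ∫ t in Set.Ioi (1 : ℝ), (∑ k ∈ Finset.Icc 1 ⌊t⌋₊, g k) * t ^ (-(s + 1)) := by
    apply LSeries_eq_mul_integral' g (r := 1) (by norm_num) hs
    refine Asymptotics.IsBigO.of_bound 1 (Eventually.of_forall fun n => ?_)
    rw [Real.norm_of_nonneg (Finset.sum_nonneg fun i _ => norm_nonneg _)]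
    refine (Finset.sum_le_sum fun i _ => hgb i).trans ?_
    simp
  have e4 : ∀ u : ℝ, ∑ k ∈ Finset.Icc 1 ⌊u⌋₊, g k = ∑ k ∈ Finset.Ioc Y ⌊u⌋₊, f k := by
    intro u
    simp only [hg]
    symm
    rw [Finset.sum_ite, Finset.sum_const_zero, zero_add]
    apply Finset.sum_congr _ (fun _ _ => rfl)
    ext k; simp; omega
  have e5 : ∫ t in Set.Ioi (1 : ℝ), (∑ k ∈ Finset.Icc 1 ⌊t⌋₊, g k) * (t:ℂ) ^ (-(s + 1)) =
      ∫ t in Set.Ioi (Y : ℝ), (∑ k ∈ Finset.Icc 1 ⌊t⌋₊, g k) * (t:ℂ) ^ (-(s + 1)) := by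
    rw [MeasureTheory.setIntegral_eq_of_subset_of_forall_sdiff_eq_zero measurableSet_Ioi
      (Set.Ioi_subset_Ioi (show (1:ℝ) ≤ (Y:ℝ) by exact_mod_cast hY))]
    intro x hx
    have hx2 : x ≤ Y := not_lt.mp hx.2
    rw [e4, Finset.Ioc_eq_empty, Finset.sum_empty, zero_mul]
    have : ⌊x⌋₊ ≤ Y := Nat.floor_le_of_le hx2
    omega
  have i1 : MeasureTheory.IntegrableOn (fun t : ℝ => (t:ℂ) ^ (-s - 1) * RR f c Y t) (Set.Ioi (Y:ℝ)) := by
    have := (RR_mellin f c K hc hK Y hY (-s) (by simp; linarith)).1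
    exact MeasureTheory.IntegrableOn.mono_set this (Set.Ioi_subset_Ioi hY'.le)
  have i2 : MeasureTheory.IntegrableOn (fun t : ℝ => (t:ℂ) ^ (-s)) (Set.Ioi (Y:ℝ)) :=
    integrableOn_Ioi_cpow_of_lt (by simpa using hs) hY'
  have i3 : MeasureTheory.IntegrableOn (fun t : ℝ => (t:ℂ) ^ (-s - 1)) (Set.Ioi (Y:ℝ)) :=
    integrableOn_Ioi_cpow_of_lt (by simp; linarith) hY'
  have e6 : ∫ t in Set.Ioi (Y : ℝ), (∑ k ∈ Finset.Icc 1 ⌊t⌋₊, g k) * (t:ℂ) ^ (-(s + 1)) =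
      ∫ t in Set.Ioi (Y : ℝ), ((t:ℂ) ^ (-s - 1) * RR f c Y t + (c * (t:ℂ) ^ (-s) - c * Y * (t:ℂ) ^ (-s - 1))) := by
    apply MeasureTheory.setIntegral_congr_fun measurableSet_Ioi
    intro t ht
    have ht' : (Y:ℝ) < t := ht
    have ht0 : (t:ℂ) ≠ 0 := by
      have : 0 < t := hY'.trans ht'
      exact_mod_cast this.ne'
    simp only
    rw [e4, RR, if_pos ht', show -(s + 1) = -s - 1 by ring]
    have : (t:ℂ) ^ (-s) = t * (t:ℂ) ^ (-s - 1) := by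
      rw [Complex.cpow_sub _ _ ht0, Complex.cpow_one]; field_simp
    rw [this]; ring
  have i4 : MeasureTheory.IntegrableOn (fun t : ℝ => c * (t:ℂ) ^ (-s) - c * Y * (t:ℂ) ^ (-s - 1)) (Set.Ioi (Y:ℝ)) :=
    (i2.const_mul c).sub (i3.const_mul _)
  have hs0 : s ≠ 0 := by intro h; rw [h] at hs; simp at hs; linarith
  have hs1 : s - 1 ≠ 0 := by
    intro h; rw [sub_eq_zero] at h; rw [h] at hs; simp at hs
  rw [e1, e2, e3, e5, e6, MeasureTheory.integral_add i1 i4,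
    MeasureTheory.integral_sub (i2.const_mul c) (i3.const_mul _), MeasureTheory.integral_const_mul,
    MeasureTheory.integral_const_mul, ← RR_mellin_eq, integral_Ioi_cpow_of_lt (by simpa using hs) hY',
    integral_Ioi_cpow_of_lt (by simp; linarith) hY']
  have hYc : (Y:ℂ) ≠ 0 := by exact_mod_cast hY'.ne'
  have : ((Y:ℝ):ℂ) ^ (1 - s) = Y * (Y:ℂ) ^ (-s) := by
    push_cast
    rw [sub_eq_add_neg, Complex.cpow_add _ _ hYc, Complex.cpow_one]
  rw [show -s + 1 = 1 - s by ring, show -s - 1 + 1 = -s by ring, this]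
  push_cast at this ⊢
  rw [this]
  have h1s : 1 - s ≠ 0 := by rw [← neg_sub]; exact neg_ne_zero.mpr hs1
  field_simp
  have : (1 - s) = -(s - 1) := by ring
  rw [this]
  field_simp
  ring

lemma contG (f : ℕ → ℂ) (c : ℂ) (K : ℝ) (hf : ∀ n, ‖f n‖ ≤ 1) (hc : ‖c‖ ≤ 1)
    (hK : ∀ Y N : ℕ, Y ≤ N → ‖(∑ k ∈ Finset.Ioc Y N, f k) - c * (N - Y)‖ ≤ K) (Y : ℕ) (hY : 1 ≤ Y) :
    ∃ G : ℂ → ℂ, (DifferentiableOn ℂ G {s | 0 < s.re}) ∧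
      (∀ s : ℂ, 0 < s.re → ‖G s‖ ≤ ∑ n ∈ Finset.Icc 1 Y, (n:ℝ) ^ (-s.re) + ‖s‖ * ((K + 1) * ((Y:ℝ) ^ (-s.re) / s.re))) ∧
      ∀ s : ℂ, 1 < s.re → LSeries f s = G s + c * (Y:ℂ) ^ (1 - s) / (s - 1) := by
  refine ⟨fun s => (∑ n ∈ Finset.Icc 1 Y, f n * (n:ℂ) ^ (-s)) + s * mellin (RR f c Y) (-s), ?_, ?_, ?_⟩
  · intro s hs
    apply DifferentiableAt.differentiableWithinAt
    have h1 := (RR_mellin f c K hc hK Y hY (-s) (by simpa using hs)).2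
    apply DifferentiableAt.add
    · apply DifferentiableAt.fun_sum
      intro n hn
      rw [Finset.mem_Icc] at hn
      have : (n:ℂ) ≠ 0 := by exact_mod_cast (by omega : n ≠ 0)
      apply DifferentiableAt.const_mul
      exact (differentiableAt_id.neg).const_cpow (Or.inl this)
    · exact differentiableAt_id.mul (h1.comp s differentiableAt_id.neg)
  · intro s hs
    refine (norm_add_le _ _).trans (add_le_add ?_ ?_)
    · refine (norm_sum_le _ _).trans (Finset.sum_le_sum fun n hn => ?_)
      rw [Finset.mem_Icc] at hn
      rw [norm_mul, Complex.norm_natCast_cpow_of_pos (by omega)]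
      simp only [Complex.neg_re]
      have := hf n
      have : (0:ℝ) ≤ (n:ℝ) ^ (-s.re) := by positivity
      nlinarith
    · rw [norm_mul]
      gcongr
      exact RR_mellin_bound f c K hc hK Y hY s hs
  · intro s hs
    exact LS_eq f c K hf hc hK Y hY s hs

end Part4

section Part5

open Filter Topology

lemma period_sum (q : ℕ) [NeZero q] (F : ZMod q → ℂ) (Y : ℕ) :
    ∑ n ∈ Finset.Ioc Y (Y + q), F (n : ZMod q) = ∑ a, F a := by
  have hinj : Set.InjOn (fun n : ℕ => (n : ZMod q)) (Finset.Ioc Y (Y + q) : Finset ℕ) := by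
    intro a ha b hb hab
    simp only [Finset.coe_Ioc, Set.mem_Ioc] at ha hb
    have h1 : (a:ZMod q) = (b:ZMod q) := hab
    rw [ZMod.natCast_eq_natCast_iff] at h1
    have key : ∀ a b : ℕ, a ≤ b → b < a + q → a ≡ b [MOD q] → a = b := by
      intro a b h1 h2 h3
      have := (Nat.modEq_iff_dvd' h1).mp h3
      have := Nat.eq_zero_of_dvd_of_lt this (by omega)
      omega
    rcases le_total a b with h | h
    · exact key a b h (by omega) h1
    · exact (key b a h (by omega) h1.symm).symm
  rw [← Finset.sum_image (f := F) hinj]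
  congr 1
  apply Finset.eq_univ_of_card
  rw [Finset.card_image_of_injOn hinj]
  simp [ZMod.card]

lemma period_bound (q : ℕ) [NeZero q] (F : ZMod q → ℂ) (hF : ∀ a, ‖F a‖ ≤ 1) :
    ‖(∑ a, F a) / q‖ ≤ 1 ∧ ∀ Y N : ℕ, Y ≤ N →
      ‖(∑ k ∈ Finset.Ioc Y N, F (k : ZMod q)) - (∑ a, F a) / q * (N - Y)‖ ≤ 2 * q := by
  have hq : (0:ℝ) < q := by exact_mod_cast Nat.pos_of_ne_zero (NeZero.ne q)
  have hqc : (q:ℂ) ≠ 0 := by exact_mod_cast hq.ne'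
  have h1 : ‖(∑ a, F a) / q‖ ≤ 1 := by
    rw [norm_div, Complex.norm_natCast, div_le_one hq]
    refine (norm_sum_le _ _).trans ((Finset.sum_le_sum fun a _ => hF a).trans ?_)
    simp [ZMod.card]
  refine ⟨h1, ?_⟩
  suffices H : ∀ d Y : ℕ, ‖(∑ k ∈ Finset.Ioc Y (Y + d), F (k : ZMod q)) - (∑ a, F a) / q * d‖ ≤ 2 * q by
    intro Y N hYN
    have := H (N - Y) Y
    rw [Nat.add_sub_cancel' hYN, Nat.cast_sub hYN] at this
    exact this
  intro d
  induction d using Nat.strong_induction_on with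
  | _ d ih =>
    intro Y
    by_cases hd : d < q
    · have hd' : (d:ℝ) ≤ q := by exact_mod_cast hd.le
      refine (norm_sub_le _ _).trans ?_
      have e1 : ‖∑ k ∈ Finset.Ioc Y (Y + d), F (k : ZMod q)‖ ≤ d := by
        refine (norm_sum_le _ _).trans ((Finset.sum_le_sum fun a _ => hF _).trans ?_)
        simp
      have e2 : ‖(∑ a, F a) / q * d‖ ≤ d := by
        rw [norm_mul, Complex.norm_natCast]
        nlinarith [norm_nonneg ((∑ a, F a) / q)]
      linarith
    · push Not at hd
      have hq0 : 0 < q := Nat.pos_of_ne_zero (NeZero.ne q)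
      have := ih (d - q) (by omega) (Y + q)
      rw [show Y + q + (d - q) = Y + d by omega, Nat.cast_sub hd] at this
      have e : ∑ k ∈ Finset.Ioc Y (Y + d), F (k : ZMod q) = ∑ a, F a + ∑ k ∈ Finset.Ioc (Y + q) (Y + d), F (k : ZMod q) := by
        rw [← period_sum q F Y, Finset.sum_Ioc_consecutive _ (by omega) (by omega)]
      rw [e]
      convert this using 2
      field_simp; ring

lemma isPre : IsPreconnected {s : ℂ | 0 < s.re} :=
  (convex_halfSpace_re_gt 0).isPreconnected

lemma ident (F G : ℂ → ℂ) (hF : Differentiable ℂ F) (hG : DifferentiableOn ℂ G {s | 0 < s.re})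
    (h : ∀ s : ℂ, 1 < s.re → F s = G s) (s : ℂ) (hs : 0 < s.re) : F s = G s := by
  have ho : IsOpen {s : ℂ | 0 < s.re} := isOpen_lt continuous_const Complex.continuous_re
  have h1 : AnalyticOnNhd ℂ F {s | 0 < s.re} := hF.differentiableOn.analyticOnNhd ho
  have h2 : AnalyticOnNhd ℂ G {s | 0 < s.re} := hG.analyticOnNhd ho
  refine h1.eqOn_of_preconnected_of_eventuallyEq h2 isPre (z₀ := 2) (by simp) ?_ hs
  have : {s : ℂ | 1 < s.re} ∈ 𝓝 (2:ℂ) := (isOpen_lt continuous_const Complex.continuous_re).mem_nhds (by simp)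
  filter_upwards [this] with z hz using h z hz

open DirichletCharacter

lemma char_le_one {q : ℕ} [NeZero q] (χ : DirichletCharacter ℂ q) (a : ZMod q) : ‖χ a‖ ≤ 1 := χ.norm_le_one a

noncomputable def Lb (q : ℕ) (s : ℂ) (Y : ℕ) : ℝ :=
  ∑ n ∈ Finset.Icc 1 Y, (n:ℝ) ^ (-s.re) + ‖s‖ * ((2 * q + 1) * ((Y:ℝ) ^ (-s.re) / s.re))

lemma L_bound {q : ℕ} [NeZero q] (χ : DirichletCharacter ℂ q) (hχ : χ ≠ 1) (s : ℂ) (hs : 0 < s.re)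
    (Y : ℕ) (hY : 1 ≤ Y) : ‖LFunction χ s‖ ≤ Lb q s Y := by
  obtain ⟨h1, h2⟩ := period_bound q (fun a => χ a) (char_le_one χ)
  obtain ⟨G, g1, g2, g3⟩ := contG (fun n : ℕ => χ n) _ _ (fun n => char_le_one χ _) h1 h2 Y hY
  have : LFunction χ s = G s := by
    refine ident _ _ (differentiable_LFunction hχ) g1 ?_ s hs
    intro s hs
    rw [LFunction_eq_LSeries χ hs, g3 s hs, χ.sum_eq_zero_of_ne_one hχ]; simp
  rw [this]
  exact g2 s hs

lemma triv_bound (q : ℕ) [NeZero q] (s : ℂ) (hs : 0 < s.re)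
    (Y : ℕ) (hY : 1 ≤ Y) : ‖LFunctionTrivChar₁ q s‖ ≤ ‖s - 1‖ * Lb q s Y + (Y:ℝ) ^ (1 - s.re) := by
  set χ : DirichletCharacter ℂ q := 1
  obtain ⟨h1, h2⟩ := period_bound q (fun a => χ a) (char_le_one χ)
  obtain ⟨G, g1, g2, g3⟩ := contG (fun n : ℕ => χ n) _ _ (fun n => char_le_one χ _) h1 h2 Y hY
  set c := (∑ a, χ a) / (q:ℂ) with hc
  have hYc : (Y:ℂ) ≠ 0 := by exact_mod_cast (by omega : Y ≠ 0)
  have : LFunctionTrivChar₁ q s = (s - 1) * G s + c * (Y:ℂ) ^ (1 - s) := by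
    refine ident (LFunctionTrivChar₁ q) (fun s => (s - 1) * G s + c * (Y:ℂ) ^ (1 - s)) (differentiable_LFunctionTrivChar₁ q) ?_ ?_ s hs
    · apply DifferentiableOn.add
      · exact DifferentiableOn.mul (by fun_prop) g1
      · apply Differentiable.differentiableOn
        intro s
        apply DifferentiableAt.const_mul
        exact (differentiableAt_id.const_sub 1).const_cpow (Or.inl hYc)
    intro s hs
    have hs1 : s ≠ 1 := by intro h; rw [h] at hs; simp at hs
    have hs1' : s - 1 ≠ 0 := sub_ne_zero.mpr hs1
    have : LFunctionTrivChar₁ q s = (s - 1) * LFunction χ s := by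
      unfold LFunctionTrivChar₁
      rw [Function.update_of_ne hs1]
    rw [this, LFunction_eq_LSeries χ hs, g3 s hs]
    field_simp
  rw [this]
  refine (norm_add_le _ _).trans (add_le_add ?_ ?_)
  · rw [norm_mul]; gcongr; exact g2 s hs
  · rw [norm_mul, Complex.norm_natCast_cpow_of_pos (by omega)]
    simp only [Complex.sub_re, Complex.one_re]
    have : (0:ℝ) ≤ (Y:ℝ) ^ (1 - s.re) := by positivity
    nlinarith

open Classical in
/-- The regularised L-function. -/
noncomputable def PP {q : ℕ} [NeZero q] (χ : DirichletCharacter ℂ q) (s : ℂ) : ℂ :=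
  if χ = 1 then LFunctionTrivChar₁ q s / (s + 1) else LFunction χ s

lemma PP_ne {q : ℕ} [NeZero q] (χ : DirichletCharacter ℂ q) (h : χ ≠ 1) : PP χ = LFunction χ := by
  funext s; rw [PP, if_neg h]

lemma PP_one {q : ℕ} [NeZero q] : PP (1 : DirichletCharacter ℂ q) = fun s => LFunctionTrivChar₁ q s / (s + 1) := by
  funext s; rw [PP, if_pos rfl]

lemma add_one_ne {s : ℂ} (hs : 0 < s.re) : s + 1 ≠ 0 := by
  intro h
  have := congrArg Complex.re h
  simp at this; linarith

lemma PP_diff {q : ℕ} [NeZero q] (χ : DirichletCharacter ℂ q) (s : ℂ) (hs : 0 < s.re) : DifferentiableAt ℂ (PP χ) s := by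
  by_cases h : χ = 1
  · subst h; rw [PP_one]
    exact (differentiable_LFunctionTrivChar₁ q s).div (by fun_prop) (add_one_ne hs)
  · rw [PP_ne χ h]; exact differentiable_LFunction h s

lemma norm_ratio1 (s : ℂ) (hs : 0 < s.re) : ‖s - 1‖ ≤ ‖s + 1‖ := by
  rw [← sq_le_sq₀ (norm_nonneg _) (norm_nonneg _), ← Complex.normSq_eq_norm_sq, ← Complex.normSq_eq_norm_sq,
    Complex.normSq_apply, Complex.normSq_apply]
  simp; nlinarith

lemma norm_ratio2 (s : ℂ) (hs : 0 < s.re) : 1 ≤ ‖s + 1‖ := by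
  have := Complex.re_le_norm (s + 1)
  simp at this; linarith

lemma Lb_nonneg (q : ℕ) (s : ℂ) (hs : 0 < s.re) (Y : ℕ) : 0 ≤ Lb q s Y := by
  unfold Lb; positivity

lemma PP_bound {q : ℕ} [NeZero q] (χ : DirichletCharacter ℂ q) (s : ℂ) (hs : 0 < s.re)
    (Y : ℕ) (hY : 1 ≤ Y) : ‖PP χ s‖ ≤ Lb q s Y + (Y:ℝ) ^ (1 - s.re) := by
  have h0 := Lb_nonneg q s hs Y
  have h4 : (0:ℝ) ≤ (Y:ℝ) ^ (1 - s.re) := by positivity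
  by_cases h : χ = 1
  · subst h
    rw [PP_one]
    simp only
    have h1 := triv_bound q s hs Y hY
    have h2 := norm_ratio1 s hs
    have h3 := norm_ratio2 s hs
    rw [norm_div, div_le_iff₀ (by linarith)]
    nlinarith
  · rw [PP_ne χ h]
    have := L_bound χ h s hs Y hY
    linarith

noncomputable def tq (q : ℕ) (s : ℂ) : ℝ := q * (|s.im| + 4)

lemma tq_ge (q : ℕ) [NeZero q] (s : ℂ) : 4 ≤ tq q s := by
  have hq : (1:ℝ) ≤ q := by exact_mod_cast Nat.pos_of_ne_zero (NeZero.ne q)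
  unfold tq
  nlinarith [abs_nonneg s.im]

lemma PP_strip (ε : ℝ) (hε : 0 < ε) (hε3 : ε ≤ 1/3) : ∃ C : ℝ, 1 ≤ C ∧ ∀ (q : ℕ) [NeZero q] (χ : DirichletCharacter ℂ q)
    (s : ℂ), 1 - ε ≤ s.re → s.re ≤ 4 → ‖PP χ s‖ ≤ C * tq q s ^ (2 * ε) := by
  set Z := ∑' n : ℕ, (n:ℝ) ^ (-1 - ε) with hZ
  have hsum : Summable (fun n : ℕ => (n:ℝ) ^ (-1 - ε)) := by
    rw [Real.summable_nat_rpow]; linarith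
  have hZ0 : 0 ≤ Z := tsum_nonneg fun n => by positivity
  refine ⟨(Z + 6) * 2, by linarith, ?_⟩
  intro q _ χ s h1 h2
  have hq : (1:ℝ) ≤ q := by exact_mod_cast Nat.pos_of_ne_zero (NeZero.ne q)
  have hs : 0 < s.re := by linarith
  have hT := tq_ge q s
  set T := tq q s with hTd
  set Y := ⌈T⌉₊ with hY
  have hY1 : T ≤ Y := Nat.le_ceil T
  have hY2 : (Y:ℝ) ≤ 2 * T := by
    have := Nat.ceil_lt_add_one (a := T) (by linarith)
    linarith
  have hY3 : 1 ≤ Y := by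
    have : (1:ℝ) ≤ Y := by linarith
    exact_mod_cast this
  have hYr : (1:ℝ) ≤ Y := by linarith
  refine (PP_bound χ s hs Y hY3).trans ?_
  have hp1 : (Y:ℝ) ^ (1 - s.re) ≤ (Y:ℝ) ^ (2 * ε) := Real.rpow_le_rpow_of_exponent_le hYr (by linarith)
  have hp2 : ∑ n ∈ Finset.Icc 1 Y, (n:ℝ) ^ (-s.re) ≤ (Y:ℝ) ^ (2 * ε) * Z := by
    calc ∑ n ∈ Finset.Icc 1 Y, (n:ℝ) ^ (-s.re) ≤ ∑ n ∈ Finset.Icc 1 Y, (Y:ℝ) ^ (2 * ε) * (n:ℝ) ^ (-1 - ε) := by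
          apply Finset.sum_le_sum; intro n hn
          rw [Finset.mem_Icc] at hn
          have hn1 : (1:ℝ) ≤ n := by exact_mod_cast hn.1
          have hn2 : (n:ℝ) ≤ Y := by exact_mod_cast hn.2
          calc (n:ℝ) ^ (-s.re) ≤ (n:ℝ) ^ (2 * ε + (-1 - ε)) := Real.rpow_le_rpow_of_exponent_le hn1 (by linarith)
            _ = (n:ℝ) ^ (2 * ε) * (n:ℝ) ^ (-1 - ε) := Real.rpow_add (by linarith) _ _
            _ ≤ _ := by gcongr
      _ = (Y:ℝ) ^ (2 * ε) * ∑ n ∈ Finset.Icc 1 Y, (n:ℝ) ^ (-1 - ε) := by rw [Finset.mul_sum]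
      _ ≤ _ := by
          gcongr
          exact hsum.sum_le_tsum _ (fun n _ => by positivity)
  have hp3 : ‖s‖ * ((2 * q + 1) * ((Y:ℝ) ^ (-s.re) / s.re)) ≤ 5 * (Y:ℝ) ^ (2 * ε) := by
    have a1 : ‖s‖ ≤ |s.im| + 4 := by
      refine (Complex.norm_le_abs_re_add_abs_im s).trans ?_
      rw [abs_of_pos hs]; linarith
    have a2 : (2 * (q:ℝ) + 1) ≤ 3 * q := by linarith
    have a3 : (Y:ℝ) ^ (-s.re) / s.re ≤ (3/2) * (Y:ℝ) ^ (-s.re) := by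
      rw [div_le_iff₀ hs]
      have : (0:ℝ) ≤ (Y:ℝ) ^ (-s.re) := by positivity
      nlinarith
    calc _ ≤ (|s.im| + 4) * (3 * q * ((3/2) * (Y:ℝ) ^ (-s.re))) := by gcongr
      _ = 9/2 * (T * (Y:ℝ) ^ (-s.re)) := by rw [hTd, tq]; ring
      _ ≤ 5 * (Y * (Y:ℝ) ^ (-s.re)) := by gcongr; norm_num
      _ = 5 * (Y:ℝ) ^ (1 - s.re) := by
          rw [sub_eq_add_neg, Real.rpow_add (by linarith), Real.rpow_one]
      _ ≤ _ := by gcongr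
  have hp4 : (Y:ℝ) ^ (2 * ε) ≤ 2 * T ^ (2 * ε) := by
    calc (Y:ℝ) ^ (2 * ε) ≤ (2 * T) ^ (2 * ε) := by gcongr
      _ = 2 ^ (2 * ε) * T ^ (2 * ε) := Real.mul_rpow (by norm_num) (by linarith)
      _ ≤ 2 ^ (1:ℝ) * T ^ (2 * ε) := by
          gcongr
          · norm_num
          · linarith
      _ = _ := by rw [Real.rpow_one]
  unfold Lb
  have : 0 ≤ T ^ (2 * ε) := by positivity
  nlinarith

end Part5

section Part6

open Filter Topology DirichletCharacter

lemma tq_near (q : ℕ) (s z : ℂ) (h : ‖z - s‖ ≤ 1) : tq q z ≤ 2 * tq q s := by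
  unfold tq
  have h1 : |z.im| ≤ |s.im| + 1 := by
    have h2 : |(z - s).im| ≤ 1 := (Complex.abs_im_le_norm _).trans h
    rw [Complex.sub_im] at h2
    have := abs_sub_abs_le_abs_sub z.im s.im
    linarith
  have hq : (0:ℝ) ≤ q := Nat.cast_nonneg q
  nlinarith [abs_nonneg s.im]

lemma tq_near_pow (ε : ℝ) (hε : 0 < ε) (hε3 : ε ≤ 1/3) (q : ℕ) [NeZero q] (s z : ℂ) (h : ‖z - s‖ ≤ 1) :
    tq q z ^ (2 * ε) ≤ 2 * tq q s ^ (2 * ε) := by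
  have h1 := tq_ge q z
  have h2 := tq_ge q s
  calc tq q z ^ (2 * ε) ≤ (2 * tq q s) ^ (2 * ε) := by
        gcongr; exact tq_near q s z h
    _ = 2 ^ (2 * ε) * tq q s ^ (2 * ε) := Real.mul_rpow (by norm_num) (by linarith)
    _ ≤ 2 ^ (1:ℝ) * tq q s ^ (2 * ε) := by
        gcongr
        · norm_num
        · linarith
    _ = _ := by rw [Real.rpow_one]

lemma PP_deriv (ε : ℝ) (hε : 0 < ε) (hε3 : ε ≤ 1/3) : ∃ C : ℝ, 1 ≤ C ∧ ∀ (q : ℕ) [NeZero q] (χ : DirichletCharacter ℂ q)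
    (s : ℂ), 1 - ε / 2 ≤ s.re → s.re ≤ 3 → ‖deriv (PP χ) s‖ ≤ C * tq q s ^ (2 * ε) := by
  obtain ⟨C, hC, h⟩ := PP_strip ε hε hε3
  refine ⟨C * 2 / (ε / 2), ?_, ?_⟩
  · rw [le_div_iff₀ (by linarith)]; linarith
  intro q _ χ s h1 h2
  have hr : 0 < ε / 2 := by linarith
  have := Complex.norm_deriv_le_of_forall_mem_sphere_norm_le (c := s) (f := PP χ) (C := C * (2 * tq q s ^ (2 * ε))) hr ?_ ?_
  · refine this.trans (le_of_eq ?_); ring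
  · apply DifferentiableOn.diffContOnCl
    intro z hz
    rw [closure_ball _ hr.ne', Metric.mem_closedBall, dist_eq_norm] at hz
    have := (Complex.abs_re_le_norm _).trans hz
    rw [Complex.sub_re, abs_le] at this
    exact (PP_diff χ z (by linarith)).differentiableWithinAt
  · intro z hz
    rw [mem_sphere_iff_norm] at hz
    have := (Complex.abs_re_le_norm _).trans hz.le
    rw [Complex.sub_re, abs_le] at this
    refine (h q χ z (by linarith) (by linarith)).trans ?_
    gcongr
    exact tq_near_pow ε hε hε3 q s z (by linarith)

lemma PP_lip (ε : ℝ) (hε : 0 < ε) (hε3 : ε ≤ 1/3) : ∃ C : ℝ, 1 ≤ C ∧ ∀ (q : ℕ) [NeZero q] (χ : DirichletCharacter ℂ q)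
    (s z : ℂ), 1 - ε / 2 ≤ s.re → s.re ≤ 3 → 1 - ε / 2 ≤ z.re → z.re ≤ 3 → ‖z - s‖ ≤ 1 →
    ‖PP χ z - PP χ s‖ ≤ C * tq q s ^ (2 * ε) * ‖z - s‖ := by
  obtain ⟨C, hC, h⟩ := PP_deriv ε hε hε3
  refine ⟨C * 2, by linarith, ?_⟩
  intro q _ χ s z h1 h2 h3 h4 h5
  have hconv : Convex ℝ (({w : ℂ | 1 - ε / 2 ≤ w.re} ∩ {w : ℂ | w.re ≤ 3}) ∩ Metric.closedBall s 1) :=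
    ((convex_halfSpace_re_ge _).inter (convex_halfSpace_re_le _)).inter (convex_closedBall _ _)
  refine hconv.norm_image_sub_le_of_norm_deriv_le (f := PP χ) ?_ ?_ ⟨⟨h1, h2⟩, by simp⟩ ⟨⟨h3, h4⟩, ?_⟩
  · intro w hw
    have : 1 - ε / 2 ≤ w.re := hw.1.1
    exact PP_diff χ w (by linarith)
  · intro w hw
    refine (h q χ w hw.1.1 hw.1.2).trans ?_
    have hw2 := hw.2
    rw [Metric.mem_closedBall, dist_eq_norm] at hw2
    have := tq_near_pow ε hε hε3 q s w hw2
    nlinarith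
  · rw [Metric.mem_closedBall, dist_eq_norm]; exact h5

end Part6

section Part7

open Filter Topology DirichletCharacter
open scoped ComplexOrder

noncomputable def Z1 (s : ℂ) : ℂ := LFunctionTrivChar₁ 1 s

lemma Z1_diff : Differentiable ℂ Z1 := differentiable_LFunctionTrivChar₁ 1

lemma Z1_one : Z1 1 = 1 := by
  simp [Z1, LFunctionTrivChar₁]

lemma Z1_ne {s : ℂ} (hs : s ≠ 1) : Z1 s = (s - 1) * riemannZeta s := by
  simp [Z1, LFunctionTrivChar₁, Function.update_of_ne hs, LFunctionTrivChar, LFunction_modOne_eq]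

lemma LSeries_two_ge (a : ℕ → ℂ) (ha : ∀ n, 0 ≤ a n) (h1 : a 1 = 1)
    (hs : LSeriesSummable a 2) : 1 ≤ (LSeries a 2).re := by
  have hnn : ∀ n, 0 ≤ (LSeries.term a 2 n).re := by
    intro n
    by_cases hn : n = 0
    · simp [hn]
    · rw [LSeries.term_of_ne_zero hn]
      have e : ((n:ℂ) ^ (2:ℂ)) = (((n:ℝ)^2 : ℝ) : ℂ) := by
        have : (2:ℂ) = ((2:ℕ):ℂ) := by norm_num
        rw [this, Complex.cpow_natCast]; push_cast; rfl
      rw [e, Complex.div_ofReal_re]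
      have := (Complex.nonneg_iff.mp (ha n)).1
      positivity
  have h2 : HasSum (fun n => (LSeries.term a 2 n).re) (LSeries a 2).re :=
    Complex.hasSum_re hs.hasSum
  have h3 := le_hasSum h2 1 (fun j _ => hnn j)
  rw [LSeries.term_of_ne_zero one_ne_zero, h1] at h3
  simpa using h3

lemma siegel_core : ∃ C2 : ℝ, 1 ≤ C2 ∧ ∀ (a : ℕ → ℂ) (P : ℂ → ℂ) (B : ℝ), 1 ≤ B →
    Differentiable ℂ P → (∀ s ∈ Metric.closedBall (2:ℂ) (4/3), ‖P s‖ ≤ B) →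
    (∀ s : ℂ, 1 < s.re → LSeries a s = riemannZeta s * P s) →
    (∀ s : ℂ, 1 < s.re → LSeriesSummable a s) → (∀ n, 0 ≤ a n) → a 1 = 1 →
    ∀ β : ℝ, 7/8 ≤ β → β < 1 → ∀ M : ℕ, 1 ≤ M →
    1 - (P 1).re * ((2 - β)^M / (1 - β)) - C2 * B * (27/32)^M ≤
      (riemannZeta β * P β).re := by
  obtain ⟨C0, hC0⟩ := (isCompact_closedBall (2:ℂ) (4/3)).exists_bound_of_continuousOn
    (Z1_diff.continuous.continuousOn)
  set C1 : ℝ := 3 * (|C0| + 1) with hC1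
  have hC1p : 3 ≤ C1 := by rw [hC1]; nlinarith [abs_nonneg C0]
  refine ⟨C1 * 7, by linarith, ?_⟩
  intro a P B hB hP hPB hL hsum ha h1 β hβ hβ1 M hM
  set F : ℂ → ℂ := fun s => Z1 s * P s with hF
  have hFd : Differentiable ℂ F := Z1_diff.mul hP
  have hF1 : F 1 = P 1 := by simp [hF, Z1_one]
  set g := dslope F 1 with hg
  have hgd : Differentiable ℂ g := by
    rw [← differentiableOn_univ]
    exact (Complex.differentiableOn_dslope (by simp)).2 hFd.differentiableOn
  have hgne : ∀ s : ℂ, s ≠ 1 → g s = riemannZeta s * P s - P 1 * (s - 1)⁻¹ := by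
    intro s hs
    rw [hg, dslope_of_ne _ hs, slope_def_field, hF1]
    have : s - 1 ≠ 0 := sub_ne_zero.2 hs
    simp only [hF, Z1_ne hs]
    field_simp
  have hbd : ∀ s ∈ Metric.sphere (2:ℂ) (4/3), ‖g s‖ ≤ C1 * B := by
    intro s hs
    have hs' : ‖s - 2‖ = 4/3 := by simpa [dist_eq_norm] using hs
    have h13 : 1/3 ≤ ‖s - 1‖ := by
      have := norm_sub_norm_le (s - 2) (-1)
      have e : s - 2 - (-1) = s - 1 := by ring
      rw [e, hs', norm_neg, norm_one] at this
      linarith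
    have hne : s ≠ 1 := by
      rintro rfl; norm_num at h13
    have hsb : s ∈ Metric.closedBall (2:ℂ) (4/3) := Metric.sphere_subset_closedBall hs
    have h1b : (1:ℂ) ∈ Metric.closedBall (2:ℂ) (4/3) := by
      rw [Metric.mem_closedBall, dist_eq_norm]; norm_num
    rw [hg, dslope_of_ne _ hne, slope_def_field, norm_div, hF1,
      div_le_iff₀ (by linarith)]
    have n1 : ‖F s - P 1‖ ≤ |C0| * B + B := by
      refine (norm_sub_le _ _).trans (add_le_add ?_ (hPB 1 h1b))
      simp only [hF, norm_mul]
      exact mul_le_mul ((hC0 s hsb).trans (le_abs_self _)) (hPB s hsb) (norm_nonneg _) (abs_nonneg _)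
    have : C1 * B * (1/3) ≤ C1 * B * ‖s-1‖ := by gcongr
    rw [hC1] at this ⊢
    nlinarith
  have hcau : ∀ n : ℕ, ‖iteratedDeriv n g 2‖ ≤ n.factorial * (C1 * B) / (4/3)^n := fun n =>
    Complex.norm_iteratedDeriv_le_of_forall_mem_sphere_norm_le n (by norm_num)
      hgd.diffContOnCl hbd
  have habs : LSeries.abscissaOfAbsConv a < ((2:ℝ) : EReal) := by
    have := LSeries.abscissaOfAbsConv_le_of_forall_lt_LSeriesSummable (f := a) (x := 1)
      (fun y hy => hsum y (by simpa using hy))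
    refine lt_of_le_of_lt this ?_
    norm_cast
  have hev : g =ᶠ[𝓝 (2:ℂ)] (fun s => LSeries a s - P 1 * (s - 1)⁻¹) := by
    have : {s : ℂ | 1 < s.re} ∈ 𝓝 (2:ℂ) :=
      (isOpen_lt continuous_const Complex.continuous_re).mem_nhds (by simp)
    filter_upwards [this] with s hs
    rw [hgne s (by rintro rfl; simp at hs), hL s hs]
  have hLan : AnalyticAt ℂ (LSeries a) 2 :=
    LSeries_analyticOnNhd a 2 (by simpa using habs)
  have hder : ∀ n : ℕ, iteratedDeriv n g 2 =
      iteratedDeriv n (LSeries a) 2 - P 1 * ((-1)^n * n.factorial) := by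
    intro n
    rw [hev.iteratedDeriv_eq]
    have hinv : ContDiffAt ℂ n (fun s : ℂ => P 1 * (s - 1)⁻¹) 2 := by
      refine contDiffAt_const.mul (ContDiffAt.inv (by fun_prop) (by norm_num))
    rw [iteratedDeriv_fun_sub hLan.contDiffAt hinv, iteratedDeriv_const_mul_field]
    congr 2
    have := congrFun (iter_deriv_inv_linear_sub n (1:ℂ) 1) 2
    rw [iteratedDeriv_eq_iterate]
    simp only [one_mul] at this
    rw [this]
    norm_num
  have hT := Complex.hasSum_taylorSeries_of_entire hgd 2 (β:ℂ)
  have h2b : (0:ℝ) < 2 - β := by linarith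
  set b : ℕ → ℝ := fun n => (((n.factorial : ℂ)⁻¹ • ((β:ℂ) - 2)^n • iteratedDeriv n g 2)).re with hb
  have hTr : HasSum b (g β).re := Complex.hasSum_re hT
  have hbn : ∀ n, b n = (2-β)^n * ((n.factorial:ℝ)⁻¹ * ((-1)^n * iteratedDeriv n (LSeries a) 2).re - (P 1).re) := by
    intro n
    have e1 : ((n.factorial : ℂ)⁻¹ • ((β:ℂ) - 2)^n • iteratedDeriv n g 2) =
      (((2-β)^n : ℝ) : ℂ) * ((((n.factorial:ℝ)⁻¹ : ℝ) : ℂ) * ((-1)^n * iteratedDeriv n (LSeries a) 2) - P 1) := by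
      rw [hder]
      have hf : (n.factorial : ℂ) ≠ 0 := by exact_mod_cast n.factorial_ne_zero
      have e2 : ((β:ℂ) - 2)^n = (-1)^n * (2-(β:ℂ))^n := by rw [← mul_pow]; ring
      have e3 : ((-1:ℂ)^n) * (-1)^n = 1 := by rw [← mul_pow]; simp
      rw [e2]
      simp only [smul_eq_mul]
      push_cast
      have e4 : (n.factorial:ℂ)⁻¹ * n.factorial = 1 := inv_mul_cancel₀ hf
      linear_combination (2-(β:ℂ))^n * (-(P 1)) * (((-1)^n * (-1)^n) * e4 + e3)
    simp only [hb, e1, Complex.re_ofReal_mul, Complex.sub_re]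
  have hsumm : Summable b := hTr.summable
  have hsplit := hsumm.sum_add_tsum_nat_add M
  rw [hTr.tsum_eq] at hsplit
  have htail : ‖∑' n, b (n + M)‖ ≤ C1 * 7 * B * (27/32)^M := by
    have hgs : HasSum (fun n : ℕ => C1 * B * (27/32:ℝ)^M * (27/32:ℝ)^n) (C1 * B * (27/32:ℝ)^M * (1 - 27/32)⁻¹) :=
      (hasSum_geometric_of_lt_one (by norm_num) (by norm_num)).mul_left _
    refine (tsum_of_norm_bounded hgs ?_).trans ?_
    · intro n
      have h5 : |b (n+M)| ≤ ‖(((n+M).factorial : ℂ)⁻¹ • ((β:ℂ) - 2)^(n+M) • iteratedDeriv (n+M) g 2)‖ :=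
        Complex.abs_re_le_norm _
      refine h5.trans ?_
      rw [norm_smul, norm_smul, norm_inv, Complex.norm_natCast, norm_pow]
      have h6 : ‖(β:ℂ) - 2‖ ≤ 9/8 := by
        have : (β:ℂ) - 2 = ((β - 2 : ℝ) : ℂ) := by push_cast; ring
        rw [this, Complex.norm_real, Real.norm_eq_abs, abs_le]
        constructor <;> linarith
      have hfp : (0:ℝ) < (n+M).factorial := by exact_mod_cast (n+M).factorial_pos
      calc ((n+M).factorial:ℝ)⁻¹ * (‖(β:ℂ) - 2‖^(n+M) * ‖iteratedDeriv (n+M) g 2‖)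
          ≤ ((n+M).factorial:ℝ)⁻¹ * ((9/8)^(n+M) * ((n+M).factorial * (C1 * B) / (4/3)^(n+M))) := by
            gcongr
            exact hcau _
        _ = C1 * B * ((9/8)^(n+M) / (4/3)^(n+M)) := by field_simp
        _ = C1 * B * (27/32:ℝ)^M * (27/32:ℝ)^n := by
            rw [← div_pow, pow_add]; norm_num; ring
    · have : (0:ℝ) ≤ C1 * B * (27/32)^M := by positivity
      have e : ((1:ℝ) - 27/32)⁻¹ ≤ 7 := by norm_num
      nlinarith
  have hhead : 1 - (P 1).re * (((2-β)^M - 1) / (1-β)) ≤ ∑ n ∈ Finset.range M, b n := by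
    have hgeo : ∑ n ∈ Finset.range M, (2-β)^n = ((2-β)^M - 1)/(1-β) := by
      rw [geom_sum_eq (by linarith)]
      congr 1; ring
    have : ∑ n ∈ Finset.range M, b n = ∑ n ∈ Finset.range M, (2-β)^n * ((n.factorial:ℝ)⁻¹ * ((-1)^n * iteratedDeriv n (LSeries a) 2).re) - (P 1).re * ∑ n ∈ Finset.range M, (2-β)^n := by
      rw [Finset.mul_sum, ← Finset.sum_sub_distrib]
      refine Finset.sum_congr rfl fun n _ => ?_
      rw [hbn]; ring
    rw [this, hgeo]
    have hge : (1:ℝ) ≤ ∑ n ∈ Finset.range M, (2-β)^n * ((n.factorial:ℝ)⁻¹ * ((-1)^n * iteratedDeriv n (LSeries a) 2).re) := by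
      have h0 : (1:ℝ) ≤ (2-β)^0 * (((0:ℕ).factorial:ℝ)⁻¹ * ((-1)^0 * iteratedDeriv 0 (LSeries a) 2).re) := by
        simpa using LSeries_two_ge a ha h1 (hsum 2 (by simp))
      refine h0.trans (Finset.single_le_sum (f := fun n : ℕ => (2-β)^n * ((n.factorial:ℝ)⁻¹ * ((-1)^n * iteratedDeriv n (LSeries a) 2).re)) (fun n _ => ?_) (Finset.mem_range.2 (by omega)))
      have := (Complex.nonneg_iff.mp (LSeries.iteratedDeriv_alternating (a := a) ha habs n)).1
      have e : (((2:ℝ):ℂ)) = 2 := by norm_num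
      rw [e] at this
      positivity
    linarith
  have hgβ : (g β).re = (riemannZeta β * P β).re + (P 1).re * (1/(1-β)) := by
    rw [hgne β (by intro h; have : β = 1 := by exact_mod_cast h
                   linarith), Complex.sub_re]
    have : P 1 * ((β:ℂ) - 1)⁻¹ = (((β-1)⁻¹ : ℝ) : ℂ) * P 1 := by push_cast; ring
    rw [this, Complex.re_ofReal_mul]
    have e : (β-1)⁻¹ = -(1/(1-β)) := by
      rw [← neg_sub, inv_neg, one_div]
    rw [e]; ring
  have := (abs_le.mp htail).1
  have e5 : (P 1).re * ((2 - β)^M / (1 - β)) = (P 1).re * (((2-β)^M - 1) / (1-β)) + (P 1).re * (1/(1-β)) := by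
    ring
  rw [e5]
  linarith

end Part7

section Part8

open Filter Topology DirichletCharacter
open scoped ComplexOrder

lemma siegel_cor : ∃ c K : ℝ, 0 < c ∧ 0 < K ∧ ∀ (a : ℕ → ℂ) (P : ℂ → ℂ) (B : ℝ), 1 ≤ B →
    Differentiable ℂ P → (∀ s ∈ Metric.closedBall (2:ℂ) (4/3), ‖P s‖ ≤ B) →
    (∀ s : ℂ, 1 < s.re → LSeries a s = riemannZeta s * P s) →
    (∀ s : ℂ, 1 < s.re → LSeriesSummable a s) → (∀ n, 0 ≤ a n) → a 1 = 1 →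
    ∀ β : ℝ, 7/8 ≤ β → β < 1 → (riemannZeta β * P β).re ≤ 0 →
    c * (1 - β) * B ^ (-(K * (1 - β))) ≤ (P 1).re := by
  obtain ⟨C2, hC2, H⟩ := siegel_core
  refine ⟨(1/2) * Real.exp (-((32/5) * Real.log (2 * C2) + 2)), 32/5, by positivity, by norm_num, ?_⟩
  intro a P B hB hP hPB hL hsum ha h1 β hβ hβ1 hneg
  set X : ℝ := (32/5) * Real.log (2 * C2 * B) with hX
  have h2CB : 1 ≤ 2 * C2 * B := by nlinarith
  have hX0 : 0 ≤ X := by rw [hX]; have := Real.log_nonneg h2CB; positivity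
  set M : ℕ := ⌈X⌉₊ + 1 with hM
  have hM1 : (M:ℝ) ≤ X + 2 := by
    rw [hM]; push_cast; have := (Nat.ceil_lt_add_one hX0).le; linarith
  have hM2 : X ≤ M := by
    rw [hM]; push_cast; have := Nat.le_ceil X; linarith
  have key := H a P B hB hP hPB hL hsum ha h1 β hβ hβ1 M (by omega)
  have t1 : C2 * B * (27/32)^M ≤ 1/2 := by
    have e1 : (27/32:ℝ) ≤ Real.exp (-5/32) := by
      have := Real.add_one_le_exp (-5/32); norm_num at this ⊢; linarith
    have e2 : (27/32:ℝ)^M ≤ (2 * C2 * B)⁻¹ := by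
      calc (27/32:ℝ)^M ≤ (Real.exp (-5/32))^M := by gcongr
        _ = Real.exp (M * (-5/32)) := by rw [← Real.exp_nat_mul]
        _ ≤ Real.exp (-Real.log (2 * C2 * B)) := by
            apply Real.exp_le_exp.2
            rw [hX] at hM2; linarith
        _ = (2 * C2 * B)⁻¹ := by rw [Real.exp_neg, Real.exp_log (by linarith)]
    calc C2 * B * (27/32)^M ≤ C2 * B * (2 * C2 * B)⁻¹ := by gcongr
      _ = 1/2 := by
        have : C2 ≠ 0 := by linarith
        have : B ≠ 0 := by linarith
        field_simp
  have hb : 0 < 1 - β := by linarith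
  have t2 : 1/2 ≤ (P 1).re * ((2 - β)^M / (1 - β)) := by linarith
  have hpos : 0 < (P 1).re := by
    by_contra h
    have : 0 ≤ (2 - β)^M / (1 - β) := by
      have : 0 < 2 - β := by linarith
      positivity
    nlinarith
  have t3 : (2 - β)^M ≤ Real.exp (((32/5) * Real.log (2 * C2) + 2)) * B ^ ((32/5) * (1 - β)) := by
    calc (2 - β)^M ≤ (Real.exp (1 - β))^M := by
          gcongr
          · linarith
          · have := Real.add_one_le_exp (1 - β); linarith
      _ = Real.exp (M * (1 - β)) := by rw [← Real.exp_nat_mul]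
      _ ≤ Real.exp (((32/5) * Real.log (2 * C2) + 2) + Real.log B * ((32/5) * (1 - β))) := by
          apply Real.exp_le_exp.2
          have e : X = (32/5) * Real.log (2 * C2) + (32/5) * Real.log B := by
            rw [hX, Real.log_mul (by linarith) (by linarith)]; ring
          have l1 : 0 ≤ Real.log (2 * C2) := Real.log_nonneg (by linarith)
          have : (M:ℝ) * (1 - β) ≤ (X + 2) * (1 - β) := by gcongr
          rw [e] at this
          have h6 : ((32/5) * Real.log (2 * C2) + 2) * (1 - β) ≤ ((32/5) * Real.log (2 * C2) + 2) * 1 := by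
            gcongr; linarith
          nlinarith
      _ = _ := by rw [Real.exp_add, Real.rpow_def_of_pos (by linarith)]
  have hBp : 0 < B ^ ((32/5) * (1 - β)) := Real.rpow_pos_of_pos (by linarith) _
  rw [Real.rpow_neg (by linarith), Real.exp_neg]
  rw [← mul_div_assoc, le_div_iff₀ hb] at t2
  set E := Real.exp (((32/5) * Real.log (2 * C2) + 2))
  have hE : 0 < E := Real.exp_pos _
  have t4 : 1/2 * (1-β) ≤ (P 1).re * (E * B ^ ((32/5) * (1 - β))) := t2.trans (by gcongr)
  have : 1/2 * E⁻¹ * (1-β) * (B ^ ((32/5) * (1 - β)))⁻¹ = (1/2 * (1-β)) / (E * B ^ ((32/5) * (1 - β))) := by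
    field_simp
  rw [this, div_le_iff₀ (by positivity)]
  exact t4

open ArithmeticFunction in
lemma conv_pp (f g : ArithmeticFunction ℂ) {p : ℕ} (hp : p.Prime) (k : ℕ) :
    (f * g) (p^k) = ∑ i ∈ Finset.range (k+1), f (p^i) * g (p^(k-i)) := by
  rw [ArithmeticFunction.mul_apply, Nat.sum_divisorsAntidiagonal (f := fun i j => f i * g j),
    Nat.sum_divisors_prime_pow hp]
  refine Finset.sum_congr rfl fun i hi => ?_
  rw [Nat.pow_div (by have := Finset.mem_range.1 hi; omega) hp.pos]

noncomputable def AFc {q : ℕ} (χ : DirichletCharacter ℂ q) : ArithmeticFunction ℂ :=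
  toArithmeticFunction (fun n => χ (n : ZMod q))

lemma AFc_pp {q : ℕ} (χ : DirichletCharacter ℂ q) {p : ℕ} (hp : p.Prime) (k : ℕ) :
    AFc χ (p^k) = (χ (p : ZMod q))^k := by
  simp [AFc, toArithmeticFunction, hp.ne_zero]

noncomputable def chi12 {q1 q2 : ℕ} (χ1 : DirichletCharacter ℂ q1) (χ2 : DirichletCharacter ℂ q2) :
    DirichletCharacter ℂ (q1 * q2) :=
  changeLevel (Dvd.intro _ rfl) χ1 * changeLevel (Dvd.intro_left _ rfl) χ2

lemma chi12_apply {q1 q2 : ℕ} (χ1 : DirichletCharacter ℂ q1) (χ2 : DirichletCharacter ℂ q2)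
    (n : ℕ) : chi12 χ1 χ2 (n : ZMod (q1*q2)) = χ1 n * χ2 n := by
  by_cases h : IsUnit (n : ZMod (q1*q2))
  · rw [chi12, MulChar.mul_apply]
    have e1 := changeLevel_eq_cast_of_dvd χ1 (Dvd.intro _ rfl : q1 ∣ q1*q2) h.unit
    have e2 := changeLevel_eq_cast_of_dvd χ2 (Dvd.intro_left _ rfl : q2 ∣ q1*q2) h.unit
    rw [IsUnit.unit_spec] at e1 e2
    rw [e1, e2, ZMod.cast_natCast (Dvd.intro _ rfl), ZMod.cast_natCast (Dvd.intro_left _ rfl)]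
  · rw [MulChar.map_nonunit _ h]
    rw [ZMod.isUnit_iff_coprime, Nat.coprime_mul_iff_right, not_and_or] at h
    rcases h with h | h
    · rw [χ1.map_nonunit (by rwa [ZMod.isUnit_iff_coprime]), zero_mul]
    · rw [χ2.map_nonunit (by rwa [ZMod.isUnit_iff_coprime]), mul_zero]

lemma quad_val {q : ℕ} {χ : DirichletCharacter ℂ q} (h : χ^2 = 1) (a : ZMod q) :
    χ a = 0 ∨ χ a = 1 ∨ χ a = -1 := MulChar.isQuadratic_iff_sq_eq_one.mpr h a

noncomputable def quadAF {q1 q2 : ℕ} (χ1 : DirichletCharacter ℂ q1) (χ2 : DirichletCharacter ℂ q2) :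
    ArithmeticFunction ℂ := zetaMul χ1 * (AFc χ2 * AFc (chi12 χ1 χ2))

lemma AFc_mult {q : ℕ} (χ : DirichletCharacter ℂ q) : (AFc χ).IsMultiplicative :=
  isMultiplicative_toArithmeticFunction χ

lemma quadAF_mult {q1 q2 : ℕ} (χ1 : DirichletCharacter ℂ q1) (χ2 : DirichletCharacter ℂ q2) :
    (quadAF χ1 χ2).IsMultiplicative :=
  (isMultiplicative_zetaMul χ1).mul ((AFc_mult χ2).mul (AFc_mult _))

lemma zetaMul_pp {q : ℕ} (χ : DirichletCharacter ℂ q) {p : ℕ} (hp : p.Prime) (k : ℕ) :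
    zetaMul χ (p^k) = ∑ i ∈ Finset.range (k+1), (χ p)^(k-i) := by
  have : zetaMul χ = ArithmeticFunction.zeta * AFc χ := rfl
  rw [this, conv_pp _ _ hp]
  refine Finset.sum_congr rfl fun i hi => ?_
  rw [AFc_pp _ hp]
  simp [ArithmeticFunction.zeta_apply, hp.ne_zero]

lemma quad_pp_aux {q1 q2 : ℕ} {χ1 : DirichletCharacter ℂ q1} {χ2 : DirichletCharacter ℂ q2}
    (h1 : χ1^2 = 1) {p : ℕ} (hp : p.Prime) (k : ℕ)
    (h : 0 ≤ χ2 p ∨ (χ1 p = -1 ∧ χ2 p = -1)) : 0 ≤ quadAF χ1 χ2 (p^k) := by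
  rw [quadAF, conv_pp _ _ hp]
  refine Finset.sum_nonneg fun i hi => mul_nonneg (zetaMul_prime_pow_nonneg h1 hp i) ?_
  generalize k - i = j
  rw [conv_pp _ _ hp]
  rcases h with h | ⟨h, h'⟩
  · have : ∑ i ∈ Finset.range (j + 1), (AFc χ2) (p ^ i) * (AFc (chi12 χ1 χ2)) (p ^ (j - i)) =
      (χ2 p)^j * zetaMul χ1 (p^j) := by
      rw [zetaMul_pp _ hp, Finset.mul_sum]
      refine Finset.sum_congr rfl fun i hi => ?_
      rw [AFc_pp _ hp, AFc_pp _ hp, chi12_apply, mul_pow]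
      have : j = i + (j - i) := by have := Finset.mem_range.1 hi; omega
      nth_rewrite 3 [this]
      rw [pow_add]; ring
    rw [this]
    exact mul_nonneg (pow_nonneg h _) (zetaMul_prime_pow_nonneg h1 hp j)
  · have : ∑ i ∈ Finset.range (j + 1), (AFc χ2) (p ^ i) * (AFc (chi12 χ1 χ2)) (p ^ (j - i)) =
      ∑ i ∈ Finset.range (j + 1), (-1:ℂ)^i := by
      refine Finset.sum_congr rfl fun i hi => ?_
      rw [AFc_pp _ hp, AFc_pp _ hp, chi12_apply, h, h']
      simp
    rw [this, neg_one_geom_sum]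
    split_ifs
    exacts [le_rfl, zero_le_one]

lemma quadAF_comm {q1 q2 : ℕ} (χ1 : DirichletCharacter ℂ q1) (χ2 : DirichletCharacter ℂ q2) :
    quadAF χ1 χ2 = quadAF χ2 χ1 := by
  have e : AFc (chi12 χ1 χ2) = AFc (chi12 χ2 χ1) := by
    ext n
    simp [AFc, toArithmeticFunction, chi12_apply]
    rw [mul_comm (χ1 _)]
  have z1 : zetaMul χ1 = ArithmeticFunction.zeta * AFc χ1 := rfl
  have z2 : zetaMul χ2 = ArithmeticFunction.zeta * AFc χ2 := rfl
  rw [quadAF, quadAF, e, z1, z2]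
  ring

lemma quadAF_nonneg {q1 q2 : ℕ} {χ1 : DirichletCharacter ℂ q1} {χ2 : DirichletCharacter ℂ q2}
    (h1 : χ1^2 = 1) (h2 : χ2^2 = 1) (n : ℕ) : 0 ≤ quadAF χ1 χ2 n := by
  rcases eq_or_ne n 0 with rfl | hn
  · simp
  · rw [(quadAF_mult χ1 χ2).multiplicative_factorization _ hn]
    refine Finset.prod_nonneg fun p hp => ?_
    have hp' := Nat.prime_of_mem_primeFactors hp
    rcases quad_val h2 (p : ZMod q2) with h | h | h
    · exact quad_pp_aux h1 hp' _ (.inl h.ge)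
    · exact quad_pp_aux h1 hp' _ (.inl (h ▸ zero_le_one))
    · rcases quad_val h1 (p : ZMod q1) with g | g | g
      · rw [quadAF_comm]; exact quad_pp_aux h2 hp' _ (.inl g.ge)
      · rw [quadAF_comm]; exact quad_pp_aux h2 hp' _ (.inl (g ▸ zero_le_one))
      · exact quad_pp_aux h1 hp' _ (.inr ⟨g, h⟩)

lemma AFc_summable {q : ℕ} (χ : DirichletCharacter ℂ q) {s : ℂ} (hs : 1 < s.re) :
    LSeriesSummable (AFc χ) s := by
  refine LSeriesSummable_of_bounded_of_one_lt_re (m := 1) (fun n hn ↦ ?_) hs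
  simpa only [AFc, toArithmeticFunction, ArithmeticFunction.coe_mk, hn, ↓reduceIte]
    using norm_le_one χ _

lemma AFc_LSeries {q : ℕ} [NeZero q] (χ : DirichletCharacter ℂ q) {s : ℂ} (hs : 1 < s.re) :
    LSeries (AFc χ) s = LFunction χ s := by
  rw [LFunction_eq_LSeries χ hs]
  refine LSeries_congr (fun {n} hn => ?_) s
  simp [AFc, toArithmeticFunction, hn]

lemma zetaMul_LSeries {q : ℕ} [NeZero q] (χ : DirichletCharacter ℂ q) {s : ℂ} (hs : 1 < s.re) :
    LSeries (zetaMul χ) s = riemannZeta s * LFunction χ s := by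
  have z1 : zetaMul χ = ArithmeticFunction.zeta * AFc χ := rfl
  have hz : LSeriesSummable (fun n => ((ArithmeticFunction.zeta : ArithmeticFunction ℂ) n)) s :=
    ArithmeticFunction.LSeriesSummable_zeta_iff.mpr hs
  have hz2 : LSeries (fun n => ((ArithmeticFunction.zeta : ArithmeticFunction ℂ) n)) s = riemannZeta s :=
    ArithmeticFunction.LSeries_zeta_eq_riemannZeta hs
  rw [z1, ArithmeticFunction.LSeries_mul' hz (AFc_summable χ hs), AFc_LSeries χ hs, hz2]

lemma quadAF_summable {q1 q2 : ℕ} (χ1 : DirichletCharacter ℂ q1) (χ2 : DirichletCharacter ℂ q2)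
    {s : ℂ} (hs : 1 < s.re) : LSeriesSummable (quadAF χ1 χ2) s :=
  ArithmeticFunction.LSeriesSummable_mul (LSeriesSummable_zetaMul χ1 hs)
    (ArithmeticFunction.LSeriesSummable_mul (AFc_summable _ hs) (AFc_summable _ hs))

lemma quadAF_LSeries {q1 q2 : ℕ} [NeZero q1] [NeZero q2] (χ1 : DirichletCharacter ℂ q1) (χ2 : DirichletCharacter ℂ q2)
    {s : ℂ} (hs : 1 < s.re) : LSeries (quadAF χ1 χ2) s =
     riemannZeta s * (LFunction χ1 s * (LFunction χ2 s * LFunction (chi12 χ1 χ2) s)) := by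
  rw [quadAF, ArithmeticFunction.LSeries_mul' (LSeriesSummable_zetaMul χ1 hs)
    (ArithmeticFunction.LSeriesSummable_mul (AFc_summable _ hs) (AFc_summable _ hs)),
    ArithmeticFunction.LSeries_mul' (AFc_summable _ hs) (AFc_summable _ hs),
    AFc_LSeries _ hs, AFc_LSeries _ hs, zetaMul_LSeries _ hs]
  ring

end Part8

section Part9

open Filter Topology DirichletCharacter
open scoped ComplexOrder ComplexConjugate

lemma L_ball {q : ℕ} [NeZero q] (χ : DirichletCharacter ℂ q) (hχ : χ ≠ 1) (s : ℂ)
    (hs : s ∈ Metric.closedBall (2:ℂ) (4/3)) : ‖LFunction χ s‖ ≤ 16 * q := by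
  have hs' : ‖s - 2‖ ≤ 4/3 := by simpa [dist_eq_norm] using hs
  have hre : 2/3 ≤ s.re := by
    have := (abs_le.mp ((Complex.abs_re_le_norm (s-2)).trans hs')).1
    simp at this; linarith
  have hn : ‖s‖ ≤ 10/3 := by
    have := norm_add_le (s-2) 2
    simp at this; linarith
  have hq : (1:ℝ) ≤ q := by exact_mod_cast Nat.pos_of_ne_zero (NeZero.ne q)
  refine (L_bound χ hχ s (by linarith) 1 le_rfl).trans ?_
  simp only [Lb, Finset.Icc_self, Finset.sum_singleton, Nat.cast_one, Real.one_rpow]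
  have h1 : 1 / s.re ≤ 3/2 := by
    rw [div_le_iff₀ (by linarith)]; linarith
  have : ‖s‖ * ((2 * q + 1) * (1 / s.re)) ≤ (10/3) * ((3 * q) * (3/2)) := by
    have : 0 < s.re := by linarith
    gcongr
    linarith
  linarith

lemma L_conj {q : ℕ} [NeZero q] {χ : DirichletCharacter ℂ q} (hχ : χ ≠ 1) (h2 : χ^2 = 1) (s : ℂ)
    (hs : 0 < s.re) : LFunction χ s = conj (LFunction χ (conj s)) := by
  have hd := differentiable_LFunction hχ
  have hval : ∀ a, conj (χ a) = χ a := by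
    intro a
    rcases quad_val h2 a with h | h | h <;> simp [h]
  refine ident (LFunction χ) (fun s => conj (LFunction χ (conj s))) hd ?_ ?_ s hs
  · intro z _
    have := (hd (conj z)).conj_conj
    rw [Complex.conj_conj] at this
    exact this.differentiableWithinAt
  · intro s hs
    rw [LFunction_eq_LSeries χ hs, LFunction_eq_LSeries χ (by simpa using hs), LSeries, LSeries,
      Complex.conj_tsum]
    congr 1
    funext n
    by_cases hn : n = 0
    · simp [hn]
    · rw [LSeries.term_of_ne_zero hn, LSeries.term_of_ne_zero hn, map_div₀, hval,
        Complex.cpow_conj _ _ (by rw [Complex.natCast_arg]; exact Real.pi_pos.ne), Complex.conj_conj, Complex.conj_natCast]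

lemma L_real {q : ℕ} [NeZero q] {χ : DirichletCharacter ℂ q} (hχ : χ ≠ 1) (h2 : χ^2 = 1) (x : ℝ)
    (hx : 0 < x) : LFunction χ x = ((LFunction χ x).re : ℂ) := by
  have := L_conj hχ h2 x (by simpa using hx)
  rw [Complex.conj_ofReal] at this
  exact (Complex.conj_eq_iff_re.mp this.symm).symm

lemma zetaMul_one' {q : ℕ} (χ : DirichletCharacter ℂ q) : zetaMul χ 1 = 1 :=
  (isMultiplicative_zetaMul χ).map_one

lemma L_two_pos {q : ℕ} [NeZero q] {χ : DirichletCharacter ℂ q} (h2 : χ^2 = 1) :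
    0 < (LFunction χ 2).re := by
  have h := LSeries_two_ge (zetaMul χ) (zetaMul_nonneg h2) (zetaMul_one' χ)
    (LSeriesSummable_zetaMul χ (by simp))
  rw [zetaMul_LSeries χ (by simp), riemannZeta_two] at h
  have : ((Real.pi:ℂ)^2/6) = ((Real.pi^2/6 : ℝ) : ℂ) := by push_cast; rfl
  rw [this, Complex.re_ofReal_mul] at h
  by_contra h'
  have : 0 < Real.pi^2/6 := by positivity
  nlinarith

lemma L_pos {q : ℕ} [NeZero q] {χ : DirichletCharacter ℂ q} (hχ : χ ≠ 1) (h2 : χ^2 = 1) (β : ℝ)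
    (hβ : 0 < β) (hβ1 : β < 1) (hz : ∀ x : ℝ, β ≤ x → x < 1 → LFunction χ x ≠ 0) :
    0 < (LFunction χ β).re := by
  by_contra h
  push Not at h
  have hc : ContinuousOn (fun x : ℝ => (LFunction χ x).re) (Set.Icc β 2) :=
    (Complex.continuous_re.comp ((differentiable_LFunction hχ).continuous.comp
      Complex.continuous_ofReal)).continuousOn
  have := intermediate_value_Icc (by linarith) hc
  have h0 : (0:ℝ) ∈ Set.Icc (LFunction χ β).re (LFunction χ (2:ℝ)).re :=
    ⟨h, by simpa using (L_two_pos h2).le⟩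
  obtain ⟨x, hx, hx0⟩ := this h0
  simp only at hx0
  have hL : LFunction χ x = 0 := by
    rw [L_real hχ h2 x (by linarith [hx.1]), hx0]; simp
  by_cases hx1 : x < 1
  · exact hz x hx.1 hx1 hL
  · exact LFunction_ne_zero_of_one_le_re χ (.inl hχ) (by simp; linarith) hL

lemma zeta_neg : ∃ η0 : ℝ, 0 < η0 ∧ η0 ≤ 1/8 ∧ ∀ β : ℝ, 1 - η0 ≤ β → β < 1 → (riemannZeta β).re ≤ 0 := by
  have hc : ContinuousAt (fun x : ℝ => (Z1 x).re) 1 :=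
    (Complex.continuous_re.comp (Z1_diff.continuous.comp Complex.continuous_ofReal)).continuousAt
  have h1 : ∀ᶠ x : ℝ in 𝓝 1, 0 < (Z1 x).re := by
    refine hc.eventually (lt_mem_nhds ?_)
    simp [Z1_one]
  obtain ⟨r, hr, H⟩ := Metric.eventually_nhds_iff.mp h1
  refine ⟨min (r/2) (1/8), by positivity, min_le_right _ _, ?_⟩
  intro β hb hb1
  have := min_le_left (r/2) (1/8:ℝ)
  have h2 := H (y := β) (by rw [Real.dist_eq, abs_lt]; constructor <;> linarith)
  rw [Z1_ne (by intro h; have : β = 1 := by exact_mod_cast h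
                linarith)] at h2
  have e : (β:ℂ) - 1 = ((β - 1 : ℝ) : ℂ) := by push_cast; rfl
  rw [e, Complex.re_ofReal_mul] at h2
  by_contra h
  nlinarith

/- the basic use: `P = L(χ)` -/
lemma siegel_single : ∃ c K : ℝ, 0 < c ∧ 0 < K ∧ ∀ (q : ℕ) [NeZero q] (χ : DirichletCharacter ℂ q),
    χ ≠ 1 → χ^2 = 1 → ∀ β : ℝ, 7/8 ≤ β → β < 1 → (riemannZeta β * LFunction χ β).re ≤ 0 →
    c * (1 - β) * (16 * q : ℝ) ^ (-(K * (1 - β))) ≤ ‖LFunction χ 1‖ := by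
  obtain ⟨c, K, hc, hK, H⟩ := siegel_cor
  refine ⟨c, K, hc, hK, ?_⟩
  intro q _ χ hχ h2 β hβ hβ1 hn
  have hq : (1:ℝ) ≤ q := by exact_mod_cast Nat.pos_of_ne_zero (NeZero.ne q)
  refine (H (zetaMul χ) (LFunction χ) (16*q) (by linarith) (differentiable_LFunction hχ)
    (L_ball χ hχ) (fun s hs => zetaMul_LSeries χ hs) (fun s hs => LSeriesSummable_zetaMul χ hs)
    (zetaMul_nonneg h2) (zetaMul_one' χ) β hβ hβ1 hn).trans (Complex.re_le_norm _)

lemma siegel_double : ∃ c K : ℝ, 0 < c ∧ 0 < K ∧ ∀ (q1 : ℕ) [NeZero q1] (χ1 : DirichletCharacter ℂ q1)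
    (q2 : ℕ) [NeZero q2] (χ2 : DirichletCharacter ℂ q2),
    χ1 ≠ 1 → χ1^2 = 1 → χ2 ≠ 1 → χ2^2 = 1 → chi12 χ1 χ2 ≠ 1 →
    ∀ β : ℝ, 7/8 ≤ β → β < 1 → LFunction χ1 β = 0 →
    c * (1 - β) * (4096 * q1^2 * q2^2 : ℝ) ^ (-(K * (1 - β))) ≤
      ‖LFunction χ1 1‖ * (‖LFunction χ2 1‖ * ‖LFunction (chi12 χ1 χ2) 1‖) := by
  obtain ⟨c, K, hc, hK, H⟩ := siegel_cor
  refine ⟨c, K, hc, hK, ?_⟩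
  intro q1 _ χ1 q2 _ χ2 hχ1 h1 hχ2 h2 h12 β hβ hβ1 hz
  have hq1 : (1:ℝ) ≤ q1 := by exact_mod_cast Nat.pos_of_ne_zero (NeZero.ne q1)
  have hq2 : (1:ℝ) ≤ q2 := by exact_mod_cast Nat.pos_of_ne_zero (NeZero.ne q2)
  have hB : (1:ℝ) ≤ 4096 * q1^2 * q2^2 := by
    have := one_le_pow₀ hq1 (n := 2)
    have := one_le_pow₀ hq2 (n := 2)
    nlinarith
  refine (H (quadAF χ1 χ2) (fun s => LFunction χ1 s * (LFunction χ2 s * LFunction (chi12 χ1 χ2) s))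
    (4096 * q1^2 * q2^2) hB ((differentiable_LFunction hχ1).mul
      ((differentiable_LFunction hχ2).mul (differentiable_LFunction h12))) ?_
    (fun s hs => quadAF_LSeries χ1 χ2 hs) (fun s hs => quadAF_summable χ1 χ2 hs)
    (quadAF_nonneg h1 h2) (quadAF_mult χ1 χ2).map_one β hβ hβ1 (by simp [hz])).trans ?_
  · intro s hs
    rw [norm_mul, norm_mul]
    have a1 := L_ball χ1 hχ1 s hs
    have a2 := L_ball χ2 hχ2 s hs
    have a3 := L_ball _ h12 s hs
    push_cast at a3
    calc _ ≤ (16 * q1 : ℝ) * ((16 * q2) * (16 * (q1 * q2))) := by gcongr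
      _ = _ := by ring
  · rw [← norm_mul, ← norm_mul]
    exact Complex.re_le_norm _

lemma zero_transfer {q1 q2 : ℕ} [NeZero q1] [NeZero q2] {χ1 : DirichletCharacter ℂ q1}
    {χ2 : DirichletCharacter ℂ q2} (hχ1 : χ1 ≠ 1) (h1 : χ1^2 = 1) (hχ2 : χ2 ≠ 1)
    (h12 : chi12 χ1 χ2 = 1) (β : ℝ) (hβ : 0 < β) (hz : LFunction χ1 β = 0) : LFunction χ2 β = 0 := by
  have e1 : (changeLevel (Dvd.intro _ rfl : q1 ∣ q1 * q2) χ1)^2 = 1 := by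
    rw [← map_pow, h1, map_one]
  have e2 : changeLevel (Dvd.intro _ rfl : q1 ∣ q1 * q2) χ1 =
      changeLevel (Dvd.intro_left _ rfl : q2 ∣ q1 * q2) χ2 := by
    rw [chi12] at h12
    have : changeLevel (Dvd.intro _ rfl : q1 ∣ q1 * q2) χ1 * (changeLevel (Dvd.intro _ rfl : q1 ∣ q1 * q2) χ1 * changeLevel (Dvd.intro_left _ rfl : q2 ∣ q1 * q2) χ2) = changeLevel (Dvd.intro _ rfl : q1 ∣ q1 * q2) χ1 := by
      rw [h12, mul_one]
    rw [← mul_assoc, ← sq, e1, one_mul] at this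
    exact this.symm
  have l1 := LFunction_changeLevel (Dvd.intro _ rfl : q1 ∣ q1 * q2) χ1 (s := β) (.inl hχ1)
  have l2 := LFunction_changeLevel (Dvd.intro_left _ rfl : q2 ∣ q1 * q2) χ2 (s := β) (.inl hχ2)
  rw [hz, zero_mul] at l1
  rw [← e2, l1] at l2
  rcases mul_eq_zero.mp l2.symm with h | h
  · exact h
  · exfalso
    rw [Finset.prod_eq_zero_iff] at h
    obtain ⟨p, hp, h⟩ := h
    have hp' := Nat.prime_of_mem_primeFactors hp
    have h3 : χ2 p * (p:ℂ)^(-(β:ℂ)) = 1 := (sub_eq_zero.mp h).symm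
    have h4 : ‖χ2 p * (p:ℂ)^(-(β:ℂ))‖ < 1 := by
      rw [norm_mul, Complex.norm_natCast_cpow_of_pos hp'.pos]
      have : (p:ℝ)^((-(β:ℂ)).re) < 1 := by
        apply Real.rpow_lt_one_of_one_lt_of_neg
        · exact_mod_cast hp'.one_lt
        · simpa using hβ
      have h5 := char_le_one χ2 p
      have h6 : 0 ≤ (p:ℝ)^((-(β:ℂ)).re) := by positivity
      nlinarith [norm_nonneg (χ2 p)]
    rw [h3] at h4
    simp at h4

theorem siegel (δ : ℝ) (hδ : 0 < δ) : ∃ c : ℝ, 0 < c ∧ ∀ (q : ℕ) [NeZero q] (χ : DirichletCharacter ℂ q),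
    χ ≠ 1 → χ^2 = 1 → c * (q:ℝ)^(-δ) ≤ ‖LFunction χ 1‖ := by
  obtain ⟨c1, K1, hc1, hK1, H1⟩ := siegel_single
  obtain ⟨c2, K2, hc2, hK2, H2⟩ := siegel_double
  obtain ⟨η0, hη0, hη08, Hη⟩ := zeta_neg
  obtain ⟨CP, hCP, HP⟩ := PP_strip (min (1/3) (δ/4)) (by positivity) (min_le_left _ _)
  set η := min η0 (min (δ/(4*K2)) (δ/K1)) with hη
  have hηp : 0 < η := by positivity
  have hη1 : η ≤ η0 := min_le_left _ _
  have hη2 : K2 * η ≤ δ/4 := by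
    have : η ≤ δ/(4*K2) := (min_le_right _ _).trans (min_le_left _ _)
    rw [le_div_iff₀ (by positivity)] at this; linarith
  have hη3 : K1 * η ≤ δ := by
    have : η ≤ δ/K1 := (min_le_right _ _).trans (min_le_right _ _)
    rw [le_div_iff₀ (by positivity)] at this; linarith
  have single : ∀ β : ℝ, 1 - η < β → β < 1 → ∀ (q : ℕ) [NeZero q] (χ : DirichletCharacter ℂ q),
    χ ≠ 1 → χ^2 = 1 → (riemannZeta β * LFunction χ β).re ≤ 0 →
      c1 * (1-β) * (16:ℝ)^(-δ) * (q:ℝ)^(-δ) ≤ ‖LFunction χ 1‖ := by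
    intro β hb1 hb2 q _ χ hχ h2 hn
    have hq : (1:ℝ) ≤ q := by exact_mod_cast Nat.pos_of_ne_zero (NeZero.ne q)
    refine le_trans ?_ (H1 q χ hχ h2 β (by linarith) hb2 hn)
    rw [mul_assoc, ← Real.mul_rpow (by norm_num) (by linarith)]
    have : 0 < 1 - β := by linarith
    gcongr
    · linarith
    · nlinarith
  by_cases hcase : ∃ (q1 : ℕ) (_ : NeZero q1) (χ1 : DirichletCharacter ℂ q1) (β : ℝ), χ1 ≠ 1 ∧ χ1^2 = 1 ∧
    1 - η < β ∧ β < 1 ∧ LFunction χ1 β = 0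
  · obtain ⟨q1, _, χ1, β, hχ1, h1, hb1, hb2, hz⟩ := hcase
    have hq1 : (1:ℝ) ≤ q1 := by exact_mod_cast Nat.pos_of_ne_zero (NeZero.ne q1)
    have hb3 : 0 < 1 - β := by linarith
    set c3 := c2 * (1-β) * (4096 * q1^2 : ℝ)^(-(δ/4)) / ((‖LFunction χ1 1‖ + 1) * (CP * (4 * q1)^(δ/2))) with hc3
    have hc3p : 0 < c3 := by positivity
    set c4 := c1 * (1-β) * (16:ℝ)^(-δ) with hc4
    have hc4p : 0 < c4 := by positivity
    refine ⟨min c3 c4, by positivity, ?_⟩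
    intro q _ χ hχ h2
    have hq : (1:ℝ) ≤ q := by exact_mod_cast Nat.pos_of_ne_zero (NeZero.ne q)
    by_cases h12 : chi12 χ1 χ = 1
    · have hz2 := zero_transfer hχ1 h1 hχ h12 β (by linarith) hz
      refine le_trans ?_ (single β hb1 hb2 q χ hχ h2 (by simp [hz2]))
      gcongr
      exact min_le_right _ _
    · have k := H2 q1 χ1 q χ hχ1 h1 hχ h2 h12 β (by linarith) hb2 hz
      have kp := HP (q1 * q) (chi12 χ1 χ) 1 (by
        have : (0:ℝ) < min (1/3) (δ/4) := by positivity
        simp only [Complex.one_re]; linarith) (by norm_num)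
      rw [PP_ne _ h12] at kp
      have kp2 : ‖LFunction (chi12 χ1 χ) 1‖ ≤ CP * (4 * q1)^(δ/2) * (q:ℝ)^(δ/2) := by
        refine kp.trans ?_
        rw [mul_assoc, ← Real.mul_rpow (by positivity) (by positivity)]
        have e : tq (q1*q) 1 = 4 * q1 * q := by simp [tq]; ring
        rw [e]
        have : (1:ℝ) ≤ 4 * q1 * q := by nlinarith
        gcongr
        · have := min_le_right (1/3) (δ/4); linarith
      have k2 : c2 * (1-β) * (4096 * q1^2 : ℝ)^(-(δ/4)) * (q:ℝ)^(-(δ/2)) ≤ c2 * (1 - β) * (4096 * q1^2 * q^2 : ℝ) ^ (-(K2 * (1 - β))) := by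
        have e : (q:ℝ)^(-(δ/2)) = ((q:ℝ)^2)^(-(δ/4)) := by
          rw [← Real.rpow_natCast, ← Real.rpow_mul (by positivity)]
          congr 1; push_cast; ring
        rw [mul_assoc, e, ← Real.mul_rpow (by positivity) (by positivity)]
        have a1 := one_le_pow₀ hq1 (n := 2)
        have a2 := one_le_pow₀ hq (n := 2)
        gcongr
        · nlinarith
        · nlinarith
      have k3 := k2.trans k
      have k4 : ‖LFunction χ1 1‖ * (‖LFunction χ 1‖ * ‖LFunction (chi12 χ1 χ) 1‖) ≤
        (‖LFunction χ1 1‖ + 1) * (‖LFunction χ 1‖ * (CP * (4 * q1)^(δ/2) * (q:ℝ)^(δ/2))) := by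
        gcongr
        linarith
      have k5 := k3.trans k4
      have hmin : min c3 c4 * (q:ℝ)^(-δ) ≤ c3 * (q:ℝ)^(-δ) := by gcongr; exact min_le_left _ _
      refine hmin.trans ?_
      have eδ : (q:ℝ)^(-δ) = (q:ℝ)^(-(δ/2)) * ((q:ℝ)^(δ/2))⁻¹ := by
        rw [← Real.rpow_neg (by positivity), ← Real.rpow_add (by linarith)]; congr 1; ring
      have hqp : 0 < (q:ℝ)^(δ/2) := by positivity
      rw [eδ, hc3]
      have : c2 * (1 - β) * (4096 * (q1:ℝ) ^ 2) ^ (-(δ / 4)) / ((‖LFunction χ1 1‖ + 1) * (CP * (4 * (q1:ℝ)) ^ (δ / 2))) *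
    ((q:ℝ) ^ (-(δ / 2)) * ((q:ℝ) ^ (δ / 2))⁻¹) = (c2 * (1 - β) * (4096 * (q1:ℝ) ^ 2) ^ (-(δ / 4)) * (q:ℝ) ^ (-(δ / 2))) / ((‖LFunction χ1 1‖ + 1) * (CP * (4 * (q1:ℝ)) ^ (δ / 2) * (q:ℝ) ^ (δ / 2))) := by
        field_simp
      rw [this, div_le_iff₀ (by positivity)]
      refine k5.trans (le_of_eq ?_)
      ring
  · push Not at hcase
    refine ⟨c1 * (1-(1-η/2)) * (16:ℝ)^(-δ), by
      have : 0 < 1 - (1 - η/2) := by linarith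
      positivity, ?_⟩
    intro q inst χ hχ h2
    refine single (1-η/2) (by linarith) (by linarith) q χ hχ h2 ?_
    have hp := L_pos hχ h2 (1-η/2) (by linarith) (by linarith) (fun x hx hx1 =>
      hcase q inst χ x hχ h2 (by linarith) hx1)
    rw [L_real hχ h2 (1-η/2) (by linarith), mul_comm, Complex.re_ofReal_mul]
    exact mul_nonpos_of_nonneg_of_nonpos hp.le (Hη _ (by linarith) (by linarith))

end Part9

section Part10

open Filter Topology DirichletCharacter

lemma prod_lower (S : Finset ℕ) : (∀ p ∈ S, 2 ≤ p) → (1:ℝ) / (S.card + 1) ≤ ∏ p ∈ S, (1 - (p:ℝ)⁻¹) := by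
  induction S using Finset.induction_on_max with
  | empty => simp
  | insert a S hmax ih =>
    intro h
    have ha : a ∉ S := fun h => lt_irrefl _ (hmax a h)
    rw [Finset.prod_insert ha, Finset.card_insert_of_notMem ha]
    have ih' := ih (fun p hp => h p (Finset.mem_insert_of_mem hp))
    have h2 : 2 ≤ a := h a (Finset.mem_insert_self _ _)
    have hsub : S ⊆ Finset.Ico 2 a := by
      intro p hp
      rw [Finset.mem_Ico]
      exact ⟨h p (Finset.mem_insert_of_mem hp), hmax p hp⟩
    have hc : S.card + 2 ≤ a := by
      have := Finset.card_le_card hsub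
      rw [Nat.card_Ico] at this; omega
    have hc' : (S.card:ℝ) + 2 ≤ a := by exact_mod_cast hc
    have hinv : (a:ℝ)⁻¹ ≤ ((S.card:ℝ)+2)⁻¹ := by gcongr
    have h3 : ((S.card:ℝ)+1)/(S.card+2) ≤ 1 - (a:ℝ)⁻¹ := by
      have : ((S.card:ℝ)+1)/(S.card+2) = 1 - ((S.card:ℝ)+2)⁻¹ := by field_simp; ring
      linarith
    have h4 : (1:ℝ) / (((S.card + 1 : ℕ):ℝ) + 1) = ((S.card:ℝ)+1)/(S.card+2) * (1/(S.card+1)) := by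
      push_cast; field_simp; ring
    rw [h4]
    gcongr
    exact le_trans (by positivity) h3

lemma totient_lower (δ : ℝ) (hδ : 0 < δ) : ∃ c : ℝ, 0 < c ∧ ∀ (q : ℕ) [NeZero q],
    c * (q:ℝ)^(-δ) ≤ ∏ p ∈ q.primeFactors, (1 - (p:ℝ)⁻¹) := by
  refine ⟨(1 + 2/δ)⁻¹, by positivity, ?_⟩
  intro q _
  have hq0 : 0 < q := Nat.pos_of_ne_zero (NeZero.ne q)
  have hq : (1:ℝ) ≤ q := by exact_mod_cast hq0
  refine le_trans ?_ (prod_lower _ (fun p hp => (Nat.prime_of_mem_primeFactors hp).two_le))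
  have h2 : 2^(q.primeFactors.card) ≤ q := by
    refine le_trans ?_ (Nat.le_of_dvd hq0 (Nat.prod_primeFactors_dvd q))
    exact Finset.pow_card_le_prod _ _ _ (fun p hp => (Nat.prime_of_mem_primeFactors hp).two_le)
  have h3 : (q.primeFactors.card:ℝ) * Real.log 2 ≤ Real.log q := by
    rw [← Real.log_pow]
    apply Real.log_le_log (by positivity)
    exact_mod_cast h2
  have h4 := Real.log_le_rpow_div (x := q) (by linarith) hδ
  have h5 : (q.primeFactors.card:ℝ) ≤ 2/δ * (q:ℝ)^δ := by
    have := Real.log_two_gt_d9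
    have e : 2/δ * (q:ℝ)^δ = 2 * ((q:ℝ)^δ/δ) := by ring
    rw [e]
    have hn : (0:ℝ) ≤ q.primeFactors.card := by positivity
    nlinarith
  have h6 : (1:ℝ) ≤ (q:ℝ)^δ := Real.one_le_rpow hq hδ.le
  rw [Real.rpow_neg (by linarith), ← mul_inv, ← one_div]
  apply one_div_le_one_div_of_le (by positivity)
  nlinarith

lemma PP_at_one (δ : ℝ) (hδ : 0 < δ) : ∃ c : ℝ, 0 < c ∧ ∀ (q : ℕ) [NeZero q]
    (χ : DirichletCharacter ℂ q), χ^2 = 1 → c * (q:ℝ)^(-δ) ≤ ‖PP χ 1‖ := by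
  obtain ⟨c1, hc1, H1⟩ := siegel δ hδ
  obtain ⟨c2, hc2, H2⟩ := totient_lower δ hδ
  refine ⟨min c1 (c2/2), by positivity, ?_⟩
  intro q _ χ h2
  by_cases h : χ = 1
  · subst h
    have e : ‖PP (1 : DirichletCharacter ℂ q) 1‖ = (∏ p ∈ q.primeFactors, (1 - (p:ℝ)⁻¹))/2 := by
      have hp : 0 ≤ ∏ p ∈ q.primeFactors, (1 - (p:ℝ)⁻¹) := by
        refine le_trans ?_ (H2 q); positivity
      simp only [PP_one, LFunctionTrivChar₁, Function.update_self]
      have : (∏ p ∈ q.primeFactors, (1 - (p:ℂ)⁻¹)) / (1+1) = (((∏ p ∈ q.primeFactors, (1 - (p:ℝ)⁻¹))/2 : ℝ) : ℂ) := by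
        push_cast; norm_num
      rw [this, Complex.norm_real, Real.norm_eq_abs, abs_of_nonneg (by positivity)]
    rw [e]
    have : min c1 (c2/2) * (q:ℝ)^(-δ) ≤ c2/2 * (q:ℝ)^(-δ) := by gcongr; exact min_le_right _ _
    linarith [H2 q]
  · rw [PP_ne _ h]
    refine le_trans ?_ (H1 q χ h h2)
    gcongr
    exact min_le_left _ _

lemma L_le_PP {q : ℕ} [NeZero q] (χ : DirichletCharacter ℂ q) (s : ℂ) (hs : 1 < s.re) (τ : ℝ)
    (hτ : 0 < τ) (hτ1 : τ ≤ 1) (h : χ ≠ 1 ∨ τ ≤ ‖s - 1‖) : ‖LFunction χ s‖ ≤ ‖PP χ s‖ * (3/τ) := by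
  have h3 : 1 ≤ 3/τ := by rw [le_div_iff₀ hτ]; linarith
  by_cases hχ : χ = 1
  · have hs1 : s ≠ 1 := by rintro rfl; simp at hs
    have hs0 : s - 1 ≠ 0 := sub_ne_zero.2 hs1
    have hs2 : s + 1 ≠ 0 := by
      intro h0
      have := congrArg Complex.re h0
      simp at this; linarith
    have hn : τ ≤ ‖s - 1‖ := h.resolve_left (fun h => h hχ)
    subst hχ
    have e : LFunction (1 : DirichletCharacter ℂ q) s = PP (1 : DirichletCharacter ℂ q) s * (1 + 2/(s-1)) := by
      simp only [PP_one, LFunctionTrivChar₁, Function.update_of_ne hs1, LFunctionTrivChar]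
      field_simp
      ring
    rw [e, norm_mul]
    gcongr
    refine (norm_add_le _ _).trans ?_
    rw [norm_one, norm_div]
    simp only [Complex.norm_ofNat]
    have : 2/‖s-1‖ ≤ 2/τ := by gcongr
    have e1 : 1 ≤ 1/τ := by rw [le_div_iff₀ hτ]; linarith
    have e2 : 3/τ = 1/τ + 2/τ := by ring
    linarith
  · rw [PP_ne _ hχ]
    nlinarith [norm_nonneg (LFunction χ s)]

lemma three_four_one (ε : ℝ) (hε : 0 < ε) (hε3 : ε ≤ 1/3) (c0 : ℝ) (hc0 : 0 < c0) (hc01 : c0 ≤ 1) :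
    ∃ d : ℝ, 0 < d ∧ ∀ (q : ℕ) [NeZero q] (χ : DirichletCharacter ℂ q) (x y : ℝ), 0 < x → x ≤ 1 →
    (χ^2 ≠ 1 ∨ c0 * (tq q (1 + x + Complex.I * y))^(-(3*ε)) ≤ ‖((1 + x + Complex.I * y) - 1 : ℂ)‖) →
    d^4 * x^3 * (tq q (1 + x + Complex.I * y))^(-(24*ε)) ≤ ‖PP χ (1 + x + Complex.I * y)‖^4 := by
  obtain ⟨C, hC, H⟩ := PP_strip ε hε hε3
  set D : ℝ := (C * 3)^3 * (3/c0)^4 * (C * 2 * (3/c0)) with hD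
  have hDp : 0 < D := by positivity
  refine ⟨D^(-(1/4):ℝ), by positivity, ?_⟩
  have hd : (D^(-(1/4):ℝ))^4 = D⁻¹ := by
    rw [← Real.rpow_natCast, ← Real.rpow_mul hDp.le, ← Real.rpow_neg_one]; norm_num
  rw [hd]
  intro q _ χ x y hx hx1 hcond
  set s : ℂ := 1 + x + Complex.I * y with hs
  have hq : (1:ℝ) ≤ q := by exact_mod_cast Nat.pos_of_ne_zero (NeZero.ne q)
  set T := tq q s with hT
  have hT4 : 4 ≤ T := tq_ge q s
  have hTp : 0 < T := by linarith
  set τ := c0 * T^(-(3*ε)) with hτ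
  have hτp : 0 < τ := by positivity
  have hT1 : T^(-(3*ε)) ≤ 1 := Real.rpow_le_one_of_one_le_of_nonpos (by linarith) (by linarith)
  have hτ1 : τ ≤ 1 := by rw [hτ]; nlinarith [Real.rpow_pos_of_pos hTp (-(3*ε))]
  have hsre : s.re = 1 + x := by simp [hs]
  have hsim : s.im = y := by simp [hs]
  have key := norm_LFunction_product_ge_one χ hx y
  rw [norm_mul, norm_mul, norm_pow, norm_pow] at key
  set s2 : ℂ := 1 + x + 2 * Complex.I * y with hs2
  have hs2re : s2.re = 1 + x := by simp [hs2]
  have hs2im : s2.im = 2 * y := by simp [hs2]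
  have hnn : ‖s - 1‖ ≤ ‖s2 - 1‖ := by
    rw [Complex.norm_def, Complex.norm_def]
    apply Real.sqrt_le_sqrt
    rw [Complex.normSq_apply, Complex.normSq_apply]
    simp only [Complex.sub_re, Complex.sub_im, hs2re, hs2im, hsre, hsim, Complex.one_re, Complex.one_im]
    nlinarith [sq_nonneg y]
  have a1 : ‖LFunctionTrivChar q (1 + x)‖ ≤ C * T^(2*ε) * (3/x) := by
    have h1 := L_le_PP (1 : DirichletCharacter ℂ q) (1 + (x:ℂ)) (by simpa using hx) x hx hx1 (.inr (by
      simp [abs_of_pos hx]))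
    refine h1.trans ?_
    gcongr
    refine (H q 1 (1+x) (by simp; linarith) (by simp; linarith)).trans ?_
    have : tq q (1+x) ≤ T := by
      rw [hT, tq, tq]
      simp [hsim]
      gcongr
      linarith [abs_nonneg y]
    have h0 : 0 < tq q (1+x) := by have := tq_ge q (1 + (x:ℂ)); linarith
    gcongr
  have a2 : ‖LFunction χ s‖ ≤ ‖PP χ s‖ * (3/τ) := by
    refine L_le_PP χ s (by rw [hsre]; linarith) τ hτp hτ1 ?_
    rcases hcond with h | h
    · left; rintro rfl; simp at h
    · exact .inr h
  have a3 : ‖LFunction (χ^2) s2‖ ≤ C * 2 * T^(2*ε) * (3/τ) := by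
    refine (L_le_PP (χ^2) s2 (by rw [hs2re]; linarith) τ hτp hτ1 ?_).trans ?_
    · rcases hcond with h | h
      · exact .inl h
      · exact .inr (le_trans h hnn)
    · gcongr
      refine (H q (χ^2) s2 (by linarith) (by linarith)).trans ?_
      have h1 : tq q s2 ≤ 2 * T := by
        rw [hT, tq, tq, hs2im, hsim, abs_mul]
        norm_num
        nlinarith [abs_nonneg y]
      have h0 : 0 < tq q s2 := by have := tq_ge q s2; linarith
      calc C * tq q s2 ^ (2*ε) ≤ C * (2*T)^(2*ε) := by gcongr
        _ = C * (2^(2*ε) * T^(2*ε)) := by rw [Real.mul_rpow (by norm_num) hTp.le]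
        _ ≤ C * (2^(1:ℝ) * T^(2*ε)) := by gcongr <;> linarith
        _ = _ := by rw [Real.rpow_one]; ring
  have k2 : 1 ≤ (C * T^(2*ε) * (3/x))^3 * (‖PP χ s‖ * (3/τ))^4 * (C * 2 * T^(2*ε) * (3/τ)) := by
    refine key.trans ?_
    gcongr
  have eT : (T^(2*ε))^3 * ((T^(-(3*ε)))⁻¹)^4 * (T^(2*ε) * (T^(-(3*ε)))⁻¹) = T^(23*ε) := by
    rw [← Real.rpow_neg hTp.le, ← Real.rpow_natCast, ← Real.rpow_natCast, ← Real.rpow_mul hTp.le, ← Real.rpow_mul hTp.le,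
      ← Real.rpow_add hTp, ← Real.rpow_add hTp, ← Real.rpow_add hTp]
    congr 1; push_cast; ring
  have k3 : (C * T^(2*ε) * (3/x))^3 * (‖PP χ s‖ * (3/τ))^4 * (C * 2 * T^(2*ε) * (3/τ)) =
      D * T^(23*ε) * (‖PP χ s‖^4 / x^3) := by
    rw [← eT, hD, hτ]
    ring
  rw [k3] at k2
  have k4 : T^(23*ε) ≤ T^(24*ε) := by gcongr <;> linarith
  have k5 : 1 ≤ D * T^(24*ε) * (‖PP χ s‖^4 / x^3) := k2.trans (by gcongr)
  rw [Real.rpow_neg hTp.le]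
  have hTe : 0 < T^(24*ε) := by positivity
  rw [← mul_div_assoc, le_div_iff₀ (by positivity)] at k5
  have : D⁻¹ * x^3 * (T^(24*ε))⁻¹ = x^3/(D * T^(24*ε)) := by field_simp
  rw [this, div_le_iff₀ (by positivity)]
  linarith

lemma PP_lower0 (ε : ℝ) (hε : 0 < ε) (hε3 : ε ≤ 1/3) : ∃ c : ℝ, 0 < c ∧ ∀ (q : ℕ) [NeZero q]
    (χ : DirichletCharacter ℂ q) (x y : ℝ), 0 < x → x ≤ 1 →
    c * (tq q (1 + x + Complex.I * y))^(-(30*ε)) ≤ ‖PP χ (1 + x + Complex.I * y)‖ := by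
  obtain ⟨C, hC, H⟩ := PP_lip ε hε hε3
  obtain ⟨c1, hc1, H1⟩ := PP_at_one ε hε
  set c0 := min 1 (c1/(2*C)) with hc0
  have hc0p : 0 < c0 := by positivity
  obtain ⟨d, hd, H2⟩ := three_four_one ε hε hε3 c0 hc0p (min_le_left _ _)
  set w0 := min 1 (d/(2*C)) with hw0
  have hw0p : 0 < w0 := by positivity
  have hw01 : w0 ≤ 1 := min_le_left _ _
  have hw02 : C * w0 ≤ d/2 := by
    have : w0 ≤ d/(2*C) := min_le_right _ _
    rw [le_div_iff₀ (by positivity)] at this; linarith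
  refine ⟨min (c1/2) (d * w0^3 /2), by positivity, ?_⟩
  intro q _ χ x y hx hx1
  set s : ℂ := 1 + x + Complex.I * y with hs
  have hq : (1:ℝ) ≤ q := by exact_mod_cast Nat.pos_of_ne_zero (NeZero.ne q)
  set T := tq q s with hT
  have hT4 : 4 ≤ T := tq_ge q s
  have hTp : 0 < T := by linarith
  have hsre : s.re = 1 + x := by simp [hs]
  have hsim : s.im = y := by simp [hs]
  have hTge : ∀ a b : ℝ, a ≤ b → T^a ≤ T^b := fun a b h => Real.rpow_le_rpow_of_exponent_le (by linarith) h
  by_cases hcond : (χ^2 ≠ 1 ∨ c0 * T^(-(3*ε)) ≤ ‖s - 1‖)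
  · -- use 3-4-1
    set w := w0 * T^(-(8*ε)) with hw
    have hwp : 0 < w := by positivity
    have hTl : T^(-(8*ε)) ≤ 1 := Real.rpow_le_one_of_one_le_of_nonpos (by linarith) (by linarith)
    have hw1 : w ≤ 1 := by rw [hw]; nlinarith [Real.rpow_pos_of_pos hTp (-(8*ε))]
    have hw4 : w^4 ≤ 1 := pow_le_one₀ hwp.le hw1
    set m := d * w^3 * T^(-(6*ε)) with hm
    have hmp : 0 < m := by positivity
    have main : ∀ x' : ℝ, x ≤ x' → x' ≤ 1 → w^4 ≤ x' → m ≤ ‖PP χ (1 + x' + Complex.I * y)‖ := by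
      intro x' h1 h2 h3
      have eT : tq q (1 + x' + Complex.I * y) = T := by
        rw [hT, tq, tq, hsim]; simp
      have hx' : 0 < x' := by linarith
      have k := H2 q χ x' y hx' h2 (by
        rw [eT]
        rcases hcond with h | h
        · exact .inl h
        · right
          refine h.trans ?_
          rw [Complex.norm_def, Complex.norm_def]
          apply Real.sqrt_le_sqrt
          rw [Complex.normSq_apply, Complex.normSq_apply]
          simp [hs]
          nlinarith)
      rw [eT] at k
      have : m^4 ≤ ‖PP χ (1 + x' + Complex.I * y)‖^4 := by
        refine le_trans ?_ k
        have e1 : m^4 = d^4 * (w^4)^3 * T^(-(24*ε)) := by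
          have : T^(-(24*ε)) = (T^(-(6*ε)))^4 := by
            rw [← Real.rpow_natCast, ← Real.rpow_mul hTp.le]; congr 1; push_cast; ring
          rw [this, hm]; ring
        rw [e1]
        gcongr
      exact le_of_pow_le_pow_left₀ (by norm_num) (norm_nonneg _) this
    have hm2 : d * w0^3 / 2 * T^(-(30*ε)) = m/2 := by
      have : T^(-(30*ε)) = (T^(-(8*ε)))^3 * T^(-(6*ε)) := by
        rw [← Real.rpow_natCast, ← Real.rpow_mul hTp.le, ← Real.rpow_add hTp]; congr 1; push_cast; ring
      rw [this, hm, hw]; ring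
    have hfin : min (c1/2) (d * w0^3 /2) * T^(-(30*ε)) ≤ m/2 := by
      rw [← hm2]; gcongr; exact min_le_right _ _
    refine hfin.trans ?_
    by_cases hxw : w^4 ≤ x
    · have := main x le_rfl hx1 hxw
      linarith
    · push Not at hxw
      have k := main (w^4) hxw.le hw4 le_rfl
      have hdist : ‖((1 + ((w^4:ℝ):ℂ) + Complex.I * y) - s : ℂ)‖ ≤ w^4 := by
        have : ((1 + ((w^4:ℝ):ℂ) + Complex.I * y) - s : ℂ) = ((w^4 - x : ℝ) : ℂ) := by
          rw [hs]; push_cast; ring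
        rw [this, Complex.norm_real, Real.norm_eq_abs, abs_of_nonneg (by linarith)]
        linarith
      have l := H q χ s (1 + ((w^4:ℝ):ℂ) + Complex.I * y) (by rw [hsre]; linarith) (by rw [hsre]; linarith)
        (by simp [-Complex.ofReal_pow]; linarith [pow_pos hwp 4]) (by simp [-Complex.ofReal_pow]; linarith) (hdist.trans hw4)
      have l2 : ‖PP χ (1 + ((w^4:ℝ):ℂ) + Complex.I * y) - PP χ s‖ ≤ m/2 := by
        refine l.trans ?_
        calc C * T^(2*ε) * _ ≤ C * T^(2*ε) * w^4 := by gcongr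
          _ = (C * w0) * (T^(2*ε) * T^(-(8*ε))) * w^3 := by rw [hw]; ring
          _ ≤ (d/2) * (T^(2*ε) * T^(-(8*ε))) * w^3 := by gcongr
          _ = m/2 := by
            rw [← Real.rpow_add hTp, hm]
            have : 2*ε + -(8*ε) = -(6*ε) := by ring
            rw [this]; ring
      have l3 := norm_sub_norm_le (PP χ (1 + ((w^4:ℝ):ℂ) + Complex.I * y)) (PP χ s)
      linarith
  · push Not at hcond
    obtain ⟨h2, hn⟩ := hcond
    have k := H1 q χ h2
    have hTl : T^(-(3*ε)) ≤ 1 := Real.rpow_le_one_of_one_le_of_nonpos (by linarith) (by linarith)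
    have hc01 : c0 ≤ 1 := min_le_left _ _
    have hn1 : ‖s - 1‖ ≤ 1 := by nlinarith [Real.rpow_pos_of_pos hTp (-(3*ε))]
    have l := H q χ s 1 (by rw [hsre]; linarith) (by rw [hsre]; linarith) (by simp; linarith) (by norm_num)
      (by rw [norm_sub_rev]; exact hn1)
    have hqT : (q:ℝ) ≤ T := by
      rw [hT, tq]; nlinarith [abs_nonneg s.im]
    have k2 : c1 * T^(-ε) ≤ ‖PP χ 1‖ := by
      refine le_trans ?_ k
      gcongr ?_ * ?_
      exact Real.rpow_le_rpow_of_nonpos (by linarith) hqT (by linarith)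
    have hc02 : C * c0 ≤ c1/2 := by
      have : c0 ≤ c1/(2*C) := min_le_right _ _
      rw [le_div_iff₀ (by positivity)] at this; linarith
    have l2 : ‖PP χ 1 - PP χ s‖ ≤ c1/2 * T^(-ε) := by
      refine l.trans ?_
      rw [norm_sub_rev]
      calc C * T^(2*ε) * ‖s - 1‖ ≤ C * T^(2*ε) * (c0 * T^(-(3*ε))) := by gcongr
        _ = (C * c0) * (T^(2*ε) * T^(-(3*ε))) := by ring
        _ ≤ (c1/2) * (T^(2*ε) * T^(-(3*ε))) := by gcongr
        _ = _ := by
          rw [← Real.rpow_add hTp]; congr 2; ring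
    have l3 := norm_sub_norm_le (PP χ 1) (PP χ s)
    have : min (c1/2) (d * w0^3 /2) * T^(-(30*ε)) ≤ c1/2 * T^(-ε) := by
      gcongr
      · exact min_le_left _ _
      · linarith
      · linarith
    linarith

end Part10

section Part11

open Filter Topology DirichletCharacter

noncomputable def mc {q : ℕ} (χ : DirichletCharacter ℂ q) (n : ℕ) : ℂ :=
  χ (n : ZMod q) * ((ArithmeticFunction.moebius n : ℤ) : ℂ)

noncomputable def ak {q : ℕ} (χ : DirichletCharacter ℂ q) (k : ℕ) (n : ℕ) : ℂ :=
  ((Real.log n : ℝ) : ℂ)^k * mc χ n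

lemma mc_norm {q : ℕ} [NeZero q] (χ : DirichletCharacter ℂ q) (n : ℕ) : ‖mc χ n‖ ≤ 1 := by
  rw [mc, norm_mul]
  have h1 := char_le_one χ n
  have h2 : ‖((ArithmeticFunction.moebius n : ℤ) : ℂ)‖ ≤ 1 := by
    rw [Complex.norm_intCast]
    exact_mod_cast ArithmeticFunction.abs_moebius_le_one
  nlinarith [norm_nonneg (χ n), norm_nonneg ((ArithmeticFunction.moebius n : ℤ) : ℂ)]

lemma ak_eq {q : ℕ} (χ : DirichletCharacter ℂ q) (k : ℕ) : LSeries.logMul^[k] (mc χ) = ak χ k := by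
  induction k with
  | zero => funext n; simp [ak]
  | succ k ih =>
    rw [Function.iterate_succ_apply', ih]
    funext n
    simp only [LSeries.logMul, ak, Complex.natCast_log]
    ring

lemma mc_abs {q : ℕ} [NeZero q] (χ : DirichletCharacter ℂ q) :
    LSeries.abscissaOfAbsConv (mc χ) ≤ 1 :=
  LSeries.abscissaOfAbsConv_le_of_forall_lt_LSeriesSummable (f := mc χ) (x := 1)
      (fun y hy => LS_summable _ (mc_norm χ) _ (by simpa using hy))

lemma mc_abs_lt {q : ℕ} [NeZero q] (χ : DirichletCharacter ℂ q) (s : ℂ) (hs : 1 < s.re) :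
    LSeries.abscissaOfAbsConv (mc χ) < s.re :=
  lt_of_le_of_lt (mc_abs χ) (by exact_mod_cast hs)

lemma ak_summable {q : ℕ} [NeZero q] (χ : DirichletCharacter ℂ q) (k : ℕ) (s : ℂ) (hs : 1 < s.re) :
    LSeriesSummable (ak χ k) s := by
  rw [← ak_eq]
  apply LSeriesSummable_of_abscissaOfAbsConv_lt_re
  rw [LSeries.absicssaOfAbsConv_logPowMul]
  exact mc_abs_lt χ s hs

noncomputable def rr {q : ℕ} [NeZero q] (χ : DirichletCharacter ℂ q) (s : ℂ) : ℂ :=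
  if χ = 1 then (s - 1) / (s + 1) else 1

lemma mc_LSeries {q : ℕ} [NeZero q] (χ : DirichletCharacter ℂ q) (s : ℂ) (hs : 1 < s.re) :
    LSeries (mc χ) s = rr χ s / PP χ s := by
  have h := DirichletCharacter.LSeries.mul_mu_eq_one χ hs
  rw [← LFunction_eq_LSeries χ hs] at h
  have e : LSeries (mc χ) s = (LFunction χ s)⁻¹ := by
    rw [eq_comm, inv_eq_iff_eq_inv, eq_comm]
    exact inv_eq_of_mul_eq_one_left h
  have hL : LFunction χ s ≠ 0 := left_ne_zero_of_mul_eq_one h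
  rw [e]
  by_cases hχ : χ = 1
  · subst hχ
    have hs1 : s ≠ 1 := by rintro rfl; simp at hs
    have hs0 : s - 1 ≠ 0 := sub_ne_zero.2 hs1
    have hs2 : s + 1 ≠ 0 := add_one_ne (by linarith)
    simp only [rr, if_true, PP_one, LFunctionTrivChar₁, Function.update_of_ne hs1, LFunctionTrivChar]
    field_simp
  · simp [rr, hχ, PP_ne]

lemma rr_norm {q : ℕ} [NeZero q] (χ : DirichletCharacter ℂ q) (s : ℂ) (hs : 0 < s.re) : ‖rr χ s‖ ≤ 1 := by
  unfold rr
  split_ifs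
  · rw [norm_div]
    apply div_le_one_of_le₀ _ (norm_nonneg _)
    rw [Complex.norm_def, Complex.norm_def]
    apply Real.sqrt_le_sqrt
    rw [Complex.normSq_apply, Complex.normSq_apply]
    simp
    nlinarith
  · simp

lemma A_bound (k : ℕ) : ∃ C : ℝ, 0 < C ∧ ∀ (q : ℕ) [NeZero q] (χ : DirichletCharacter ℂ q) (s : ℂ),
    1 < s.re → s.re ≤ 2 → ‖LSeries (ak χ k) s‖ ≤ C * tq q s ^ (1/2 : ℝ) := by
  set ε : ℝ := 1 / (64 * (k + 1)) with hε
  have hεp : 0 < ε := by positivity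
  have hεk : 64 * (k+1) * ε = 1 := by rw [hε]; field_simp
  have hε3 : ε ≤ 1/3 := by nlinarith [(Nat.cast_nonneg k : (0:ℝ) ≤ k)]
  obtain ⟨C, hC, H⟩ := PP_lip ε hεp hε3
  obtain ⟨c, hc, H2⟩ := PP_lower0 ε hεp hε3
  set c5 := min (ε/2) (c/(2*C)) with hc5
  have hc5p : 0 < c5 := by positivity
  have hc51 : c5 ≤ ε/2 := min_le_left _ _
  have hc52 : C * c5 ≤ c/2 := by
    have : c5 ≤ c/(2*C) := min_le_right _ _
    rw [le_div_iff₀ (by positivity)] at this; linarith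
  refine ⟨k.factorial * (2/c) / c5^k, by positivity, ?_⟩
  intro q _ χ s hs hs2
  set T := tq q s with hT
  have hT4 : 4 ≤ T := tq_ge q s
  have hTp : 0 < T := by linarith
  have hlow : c * T^(-(30*ε)) ≤ ‖PP χ s‖ := by
    have := H2 q χ (s.re - 1) s.im (by linarith) (by linarith)
    have e : (1 + ((s.re - 1 : ℝ) : ℂ) + Complex.I * s.im) = s := by
      apply Complex.ext <;> simp
    rw [e] at this
    exact this
  set ρ := c5 * T^(-(32*ε)) with hρ
  have hρp : 0 < ρ := by positivity
  have hTl : T^(-(32*ε)) ≤ 1 := Real.rpow_le_one_of_one_le_of_nonpos (by linarith) (by linarith)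
  have hρ1 : ρ ≤ ε/2 := by rw [hρ]; nlinarith [Real.rpow_pos_of_pos hTp (-(32*ε))]
  set m := c * T^(-(30*ε)) with hm
  have hmp : 0 < m := by positivity
  have hball : ∀ z ∈ Metric.closedBall s ρ, 0 < z.re ∧ m/2 ≤ ‖PP χ z‖ := by
    intro z hz
    have hz' : ‖z - s‖ ≤ ρ := by simpa [dist_eq_norm] using hz
    have hre := abs_le.mp ((Complex.abs_re_le_norm _).trans hz')
    rw [Complex.sub_re] at hre
    refine ⟨by linarith, ?_⟩
    have l := H q χ s z (by linarith) (by linarith) (by linarith [hre.1]) (by linarith [hre.2]) (by linarith)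
    have l2 : ‖PP χ z - PP χ s‖ ≤ m/2 := by
      refine l.trans ?_
      calc C * T^(2*ε) * ‖z-s‖ ≤ C * T^(2*ε) * ρ := by gcongr
        _ = (C * c5) * (T^(2*ε) * T^(-(32*ε))) := by rw [hρ]; ring
        _ ≤ (c/2) * (T^(2*ε) * T^(-(32*ε))) := by gcongr
        _ = m/2 := by
          rw [← Real.rpow_add hTp, hm]
          have : 2*ε + -(32*ε) = -(30*ε) := by ring
          rw [this]; ring
    have l3 := norm_sub_norm_le (PP χ s) (PP χ z)
    rw [norm_sub_rev] at l3
    linarith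
  have hev : LSeries (mc χ) =ᶠ[𝓝 s] (fun z => rr χ z / PP χ z) := by
    have : {s : ℂ | 1 < s.re} ∈ 𝓝 s :=
      (isOpen_lt continuous_const Complex.continuous_re).mem_nhds hs
    filter_upwards [this] with z hz
    exact mc_LSeries χ z hz
  have hdiff : DifferentiableOn ℂ (fun z => rr χ z / PP χ z) (Metric.closedBall s ρ) := by
    intro z hz
    obtain ⟨h1, h2⟩ := hball z hz
    apply DifferentiableAt.differentiableWithinAt
    refine DifferentiableAt.div ?_ (PP_diff χ z h1) ?_
    · unfold rr
      split_ifs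
      · exact DifferentiableAt.div (by fun_prop) (by fun_prop) (add_one_ne h1)
      · fun_prop
    · intro h0
      rw [h0, norm_zero] at h2
      linarith
  have hcau := Complex.norm_iteratedDeriv_le_of_forall_mem_sphere_norm_le (c := s) (R := ρ) (C := 2/m)
    (f := fun z => rr χ z / PP χ z) k hρp
    (DifferentiableOn.diffContOnCl (by rwa [closure_ball _ hρp.ne'])) (by
      intro z hz
      obtain ⟨h1, h2⟩ := hball z (Metric.sphere_subset_closedBall hz)
      rw [norm_div]
      calc ‖rr χ z‖ / ‖PP χ z‖ ≤ 1 / (m/2) := by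
            gcongr
            exact rr_norm χ z h1
        _ = 2/m := by field_simp)
  rw [← hev.iteratedDeriv_eq, LSeries_iteratedDeriv k (mc_abs_lt χ s hs), ak_eq, norm_mul, norm_pow,
    norm_neg, norm_one, one_pow, one_mul] at hcau
  refine hcau.trans ?_
  have e1 : k.factorial * (2/m) / ρ^k = k.factorial * (2/c) / c5^k * ((T^(-(30*ε)))⁻¹ * ((T^(-(32*ε)))^k)⁻¹) := by
    rw [hm, hρ, mul_pow]
    have : T^(-(30*ε)) ≠ 0 := by positivity
    have : T^(-(32*ε)) ≠ 0 := by positivity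
    field_simp
  rw [e1]
  gcongr
  rw [← Real.rpow_natCast, ← Real.rpow_mul hTp.le, ← Real.rpow_neg hTp.le, ← Real.rpow_neg hTp.le,
    ← Real.rpow_add hTp]
  apply Real.rpow_le_rpow_of_exponent_le (by linarith)
  nlinarith

end Part11

section Part12

open Filter Topology DirichletCharacter MeasureTheory

noncomputable def KK (u : ℝ) : ℂ := ((max (1-u) 0 : ℝ) : ℂ)

lemma KK_mellin (s : ℂ) (hs : 0 < s.re) : HasMellin KK s (1/(s*(s+1))) := by
  have h1 := hasMellin_one_Ioc hs
  have h2 := hasMellin_cpow_Ioc 1 (s := s) (by simp; linarith)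
  have h3 : HasMellin (fun t => Set.indicator (Set.Ioc 0 1) (fun _ => 1 : ℝ → ℂ) t - Set.indicator (Set.Ioc 0 1) (fun t => ↑t ^ (1:ℂ) : ℝ → ℂ) t) s (mellin (Set.indicator (Set.Ioc 0 1) (fun _ => 1 : ℝ → ℂ)) s - mellin (Set.indicator (Set.Ioc 0 1) (fun t => ↑t ^ (1:ℂ) : ℝ → ℂ)) s) := hasMellin_sub h1.1 h2.1
  rw [h1.2, h2.2] at h3
  have hs0 : s ≠ 0 := by rintro rfl; simp at hs
  have hs1 : s + 1 ≠ 0 := add_one_ne hs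
  have e : 1/s - 1/(s+1) = 1/(s*(s+1)) := by field_simp; ring
  rw [e] at h3
  have key : ∀ t ∈ Set.Ioi (0:ℝ), (t:ℂ)^(s-1) • (Set.indicator (Set.Ioc 0 1) (fun _ => 1 : ℝ → ℂ) t - Set.indicator (Set.Ioc 0 1) (fun t => ↑t ^ (1:ℂ) : ℝ → ℂ) t) = (t:ℂ)^(s-1) • KK t := by
    intro t ht
    have ht' : 0 < t := ht
    congr 1
    by_cases h : t ≤ 1
    · rw [Set.indicator_of_mem (show t ∈ Set.Ioc 0 1 from ⟨ht, h⟩), Set.indicator_of_mem (show t ∈ Set.Ioc 0 1 from ⟨ht, h⟩), KK, max_eq_left (by linarith)]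
      simp
    · rw [Set.indicator_of_notMem (fun hh => h hh.2), Set.indicator_of_notMem (fun hh => h hh.2), KK, max_eq_right (by linarith)]
      simp
  refine ⟨?_, ?_⟩
  · have := h3.1
    unfold MellinConvergent at this ⊢
    exact (integrableOn_congr_fun key measurableSet_Ioi).1 this
  · rw [← h3.2]
    unfold mellin
    exact (setIntegral_congr_fun measurableSet_Ioi key).symm

lemma den_lower (σ y : ℝ) (hσ : 1 ≤ σ) : 1 + y^2 ≤ ‖((σ:ℂ) + y*Complex.I) * ((σ:ℂ)+y*Complex.I+1)‖ := by
  have h1 : 1 + y^2 ≤ ‖(σ:ℂ) + y*Complex.I‖^2 := by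
    rw [Complex.sq_norm, Complex.normSq_apply]; simp; nlinarith
  have h2 : ‖(σ:ℂ) + y*Complex.I‖ ≤ ‖(σ:ℂ) + y*Complex.I + 1‖ := by
    rw [Complex.norm_def, Complex.norm_def]
    apply Real.sqrt_le_sqrt
    rw [Complex.normSq_apply, Complex.normSq_apply]
    simp; nlinarith
  rw [norm_mul]
  nlinarith [norm_nonneg ((σ:ℂ) + y*Complex.I)]

lemma den_ne (σ y : ℝ) (hσ : 1 ≤ σ) : ((σ:ℂ) + y*Complex.I) * ((σ:ℂ)+y*Complex.I+1) ≠ 0 := by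
  intro h
  have := den_lower σ y hσ
  rw [h, norm_zero] at this
  nlinarith [sq_nonneg y]

lemma den_cont (σ : ℝ) (hσ : 1 ≤ σ) :
    Continuous (fun y : ℝ => 1 / (((σ:ℂ) + y*Complex.I) * ((σ:ℂ)+y*Complex.I+1))) := by
  apply Continuous.div (by fun_prop) (by fun_prop)
  intro y; exact den_ne σ y hσ

lemma den_int (σ : ℝ) (hσ : 1 ≤ σ) :
    Integrable (fun y : ℝ => 1 / (((σ:ℂ) + y*Complex.I) * ((σ:ℂ)+y*Complex.I+1))) := by
  refine Integrable.mono' (integrable_inv_one_add_sq) (den_cont σ hσ).aestronglyMeasurable ?_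
  filter_upwards with y
  rw [norm_div, norm_one, ← one_div]
  exact one_div_le_one_div_of_le (by positivity) (den_lower σ y hσ)

lemma perronK (σ : ℝ) (hσ : 1 ≤ σ) (u : ℝ) (hu : 0 < u) :
    (1 / (2 * Real.pi)) • ∫ y : ℝ, (u : ℂ) ^ (-((σ:ℂ) + y * Complex.I)) * (1/(((σ:ℂ) + y*Complex.I) * ((σ:ℂ)+y*Complex.I+1))) = KK u := by
  have hcont : Continuous KK := by unfold KK; fun_prop
  have hm : ∀ y : ℝ, mellin KK ((σ:ℂ) + y*Complex.I) = 1/(((σ:ℂ) + y*Complex.I) * ((σ:ℂ)+y*Complex.I+1)) := by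
    intro y; exact (KK_mellin _ (by simp; linarith)).2
  have := mellinInv_mellin_eq σ KK hu (KK_mellin _ (by simp; linarith)).1 (by
    unfold Complex.VerticalIntegrable
    simp_rw [hm]
    exact den_int σ hσ) hcont.continuousAt
  rw [mellinInv] at this
  simp_rw [hm, smul_eq_mul] at this
  exact this

lemma perron_sum (a : ℕ → ℂ) (ha0 : a 0 = 0) (σ : ℝ) (hσ : 1 < σ)
    (hsum : LSeriesSummable a σ) (x : ℝ) (hx : 0 < x) :
    ∑' n : ℕ, a n * KK (n/x) = (1 / (2 * Real.pi)) • ∫ y : ℝ, LSeries a ((σ:ℂ)+y*Complex.I) *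
      ((x:ℂ)^((σ:ℂ)+y*Complex.I) * (1/(((σ:ℂ) + y*Complex.I) * ((σ:ℂ)+y*Complex.I+1)))) := by
  set G : ℝ → ℂ := fun y => ((x:ℂ)^((σ:ℂ)+y*Complex.I) * (1/(((σ:ℂ) + y*Complex.I) * ((σ:ℂ)+y*Complex.I+1)))) with hG
  have hxc : (x:ℂ) ≠ 0 := by exact_mod_cast hx.ne'
  have hGc : Continuous G := by
    refine Continuous.mul ?_ (den_cont σ hσ.le)
    exact Continuous.const_cpow (by fun_prop) (Or.inl hxc)
  have hGn : ∀ y, ‖G y‖ = x^σ * ‖1/(((σ:ℂ) + y*Complex.I) * ((σ:ℂ)+y*Complex.I+1))‖ := by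
    intro y
    rw [hG]; simp only [norm_mul]
    rw [Complex.norm_cpow_eq_rpow_re_of_pos hx]; simp
  have hGi : Integrable G := by
    refine Integrable.mono' ((den_int σ hσ.le).norm.const_mul (x^σ)) hGc.aestronglyMeasurable ?_
    filter_upwards with y
    rw [hGn]
  set F : ℕ → ℝ → ℂ := fun n y => LSeries.term a ((σ:ℂ)+y*Complex.I) n * G y with hF
  have htn : ∀ n (y:ℝ), ‖LSeries.term a ((σ:ℂ)+y*Complex.I) n‖ = ‖LSeries.term a (σ:ℂ) n‖ := by
    intro n y
    rw [LSeries.norm_term_eq, LSeries.norm_term_eq]; simp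
  have htc : ∀ n, Continuous (fun y:ℝ => LSeries.term a ((σ:ℂ)+y*Complex.I) n) := by
    intro n
    by_cases hn : n = 0
    · subst hn; simp [continuous_const]
    · simp only [LSeries.term_of_ne_zero hn]
      have hnc : (n:ℂ) ≠ 0 := by exact_mod_cast hn
      refine Continuous.div continuous_const (Continuous.const_cpow (by fun_prop) (Or.inl hnc)) ?_
      intro y; simp [hnc]
  have hFi : ∀ n, Integrable (F n) := by
    intro n
    refine Integrable.mono' (hGi.norm.const_mul ‖LSeries.term a (σ:ℂ) n‖) ((htc n).mul hGc).aestronglyMeasurable ?_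
    filter_upwards with y
    rw [hF]; simp only [norm_mul, htn]; rfl
  have hFs : Summable (fun n => ∫ y, ‖F n y‖) := by
    have : ∀ n, ∫ y, ‖F n y‖ = ‖LSeries.term a (σ:ℂ) n‖ * ∫ y, ‖G y‖ := by
      intro n
      rw [← integral_const_mul]
      simp only [hF, norm_mul, htn]
    simp_rw [this]
    exact (hsum.norm).mul_right _
  have hsw := integral_tsum_of_summable_integral_norm hFi hFs
  have e1 : ∀ y, ∑' n, F n y = LSeries a ((σ:ℂ)+y*Complex.I) * G y := by
    intro y
    rw [hF]; simp only [LSeries]; rw [tsum_mul_right]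
  simp_rw [e1] at hsw
  rw [← hsw, ← tsum_const_smul'']
  congr 1
  funext n
  by_cases hn : n = 0
  · subst hn; simp [ha0, hF]
  · have hnp : 0 < (n:ℝ) := by positivity
    rw [← perronK σ hσ.le (n/x) (by positivity), mul_smul_comm, ← integral_const_mul]
    congr 2
    funext y
    simp only [hF, hG, LSeries.term_of_ne_zero hn]
    have : (((n:ℝ)/x : ℝ):ℂ)^(-((σ:ℂ)+y*Complex.I)) = (x:ℂ)^((σ:ℂ)+y*Complex.I) / (n:ℂ)^((σ:ℂ)+y*Complex.I) := by
      rw [Complex.cpow_neg, Complex.ofReal_div, Complex.div_cpow_ofReal_nonneg hnp.le hx.le, inv_div]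
      simp
    rw [this]
    ring

lemma tq_sqrt (q : ℕ) [NeZero q] (s : ℂ) : tq q s ^ (1/2:ℝ) ≤ 6 * q * (1 + ‖s.im‖^2)^(1/4:ℝ) := by
  have hq : (1:ℝ) ≤ q := by exact_mod_cast NeZero.one_le
  have hB : (0:ℝ) < 1 + ‖s.im‖^2 := by positivity
  have e : 6 * q * (1 + ‖s.im‖^2)^(1/4:ℝ) = ((6*(q:ℝ))^2 * (1+‖s.im‖^2)^(1/2:ℝ))^(1/2:ℝ) := by
    rw [Real.mul_rpow (by positivity) (by positivity), ← Real.rpow_mul hB.le, ← Real.sqrt_eq_rpow, Real.sqrt_sq (by positivity)]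
    norm_num
  rw [e]
  apply Real.rpow_le_rpow (by linarith [tq_ge q s]) _ (by norm_num)
  rw [← Real.sqrt_eq_rpow, tq]
  have h1 : |s.im| + 4 ≤ 6 * √(1+‖s.im‖^2) := by
    rw [Real.norm_eq_abs]
    have h2 : |s.im| ≤ √(1+|s.im|^2) := Real.le_sqrt_of_sq_le (by linarith)
    have h4 : 1 ≤ √(1+|s.im|^2) := Real.le_sqrt_of_sq_le (by nlinarith [sq_nonneg |s.im|])
    linarith
  have h3 := Real.sqrt_nonneg (1+‖s.im‖^2)
  calc (q:ℝ) * (|s.im|+4) ≤ q * (6 * √(1+‖s.im‖^2)) := by gcongr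
    _ ≤ q * (6 * √(1+‖s.im‖^2)) * (6*q) := le_mul_of_one_le_right (by positivity) (by linarith)
    _ = _ := by ring

lemma smooth_bound (k : ℕ) : ∃ C : ℝ, 0 < C ∧ ∀ (q : ℕ) [NeZero q] (χ : DirichletCharacter ℂ q) (x : ℝ),
    3 ≤ x → ‖∑' n : ℕ, ak χ k n * KK (n/x)‖ ≤ C * q * x := by
  obtain ⟨C, hC, H⟩ := A_bound k
  set J := ∫ y : ℝ, (1 + ‖y‖^2)^(-(3/2:ℝ)/2) with hJ
  have hJi : Integrable (fun y : ℝ => (1 + ‖y‖^2)^(-(3/2:ℝ)/2)) :=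
    integrable_rpow_neg_one_add_norm_sq (by simp; norm_num)
  have hJ0 : 0 ≤ J := integral_nonneg (fun y => by positivity)
  refine ⟨(1/(2*Real.pi)) * (C*6*Real.exp 1 * J) + 1, by positivity, ?_⟩
  intro q _ χ x hx
  have hlog : 1 < Real.log x := by
    rw [Real.lt_log_iff_exp_lt (by linarith)]
    have := Real.exp_one_lt_d9
    linarith
  set σ := 1 + 1/Real.log x with hσ
  have hσ1 : 1 < σ := by rw [hσ]; have : 0 < 1/Real.log x := by positivity
                         linarith
  have hσ2 : σ ≤ 2 := by
    rw [hσ]; have : 1/Real.log x ≤ 1 := by rw [div_le_one (by linarith)]; linarith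
    linarith
  have hxσ : x^σ = Real.exp 1 * x := by
    rw [hσ, Real.rpow_add (by linarith), Real.rpow_one, mul_comm]
    congr 1
    rw [Real.rpow_def_of_pos (by linarith)]
    congr 1
    field_simp
  rw [perron_sum _ (by simp [ak, mc]) σ hσ1 (ak_summable χ k _ (by simpa using hσ1)) x (by linarith)]
  rw [norm_smul, Real.norm_of_nonneg (by positivity)]
  have hq : (1:ℝ) ≤ q := by exact_mod_cast NeZero.one_le
  have : ‖∫ y : ℝ, LSeries (ak χ k) ((σ:ℂ)+y*Complex.I) *
      ((x:ℂ)^((σ:ℂ)+y*Complex.I) * (1/(((σ:ℂ) + y*Complex.I) * ((σ:ℂ)+y*Complex.I+1))))‖ ≤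
      ∫ y : ℝ, (C*6*Real.exp 1*q*x) * (1 + ‖y‖^2)^(-(3/2:ℝ)/2) := by
    apply norm_integral_le_of_norm_le (hJi.const_mul _)
    filter_upwards with y
    have hB : (0:ℝ) < 1 + ‖y‖^2 := by positivity
    rw [norm_mul, norm_mul, Complex.norm_cpow_eq_rpow_re_of_pos (by linarith)]
    have h1 := H q χ ((σ:ℂ)+y*Complex.I) (by simpa using hσ1) (by simpa using hσ2)
    have h2 := tq_sqrt q ((σ:ℂ)+y*Complex.I)
    have him : ((σ:ℂ)+y*Complex.I).im = y := by simp
    have hre : ((σ:ℂ)+y*Complex.I).re = σ := by simp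
    rw [him] at h2
    rw [hre, hxσ]
    have h3 : ‖1/(((σ:ℂ) + y*Complex.I) * ((σ:ℂ)+y*Complex.I+1))‖ ≤ (1+‖y‖^2)^(-1:ℝ) := by
      rw [norm_div, norm_one, Real.rpow_neg_one, ← one_div]
      have := den_lower σ y hσ1.le
      apply one_div_le_one_div_of_le (by positivity)
      simpa using this
    calc _ ≤ (C * (6 * q * (1+‖y‖^2)^(1/4:ℝ))) * (Real.exp 1 * x * (1+‖y‖^2)^(-1:ℝ)) := by
          gcongr
          exact h1.trans (by gcongr)
      _ = (C*6*Real.exp 1*q*x) * ((1+‖y‖^2)^(1/4:ℝ) * (1+‖y‖^2)^(-1:ℝ)) := by ring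
      _ = _ := by rw [← Real.rpow_add hB]; norm_num
  rw [integral_const_mul, ← hJ] at this
  calc _ ≤ 1/(2*Real.pi) * (C*6*Real.exp 1*q*x*J) := by gcongr
    _ = (1/(2*Real.pi) * (C*6*Real.exp 1*J)) * q*x := by ring
    _ ≤ _ := by gcongr; linarith

lemma smooth_fin (k : ℕ) : ∃ C : ℝ, 0 < C ∧ ∀ (q : ℕ) [NeZero q] (χ : DirichletCharacter ℂ q) (M : ℕ),
    3 ≤ M → ‖∑ n ∈ Finset.Icc 1 M, ak χ k n * ((M:ℂ) - n)‖ ≤ C * q * M^2 := by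
  obtain ⟨C, hC, H⟩ := smooth_bound k
  refine ⟨C, hC, ?_⟩
  intro q _ χ M hM
  have hMr : (3:ℝ) ≤ M := by exact_mod_cast hM
  have h := H q χ M hMr
  rw [tsum_eq_sum (s := Finset.Icc 1 M)] at h
  · have e : ∑ n ∈ Finset.Icc 1 M, ak χ k n * ((M:ℂ) - n) = M * ∑ n ∈ Finset.Icc 1 M, ak χ k n * KK (n/M) := by
      rw [Finset.mul_sum]
      apply Finset.sum_congr rfl
      intro n hn
      have hn2 : (n:ℝ) ≤ M := by exact_mod_cast (Finset.mem_Icc.1 hn).2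
      rw [KK, max_eq_left]
      · have : (M:ℂ) ≠ 0 := by exact_mod_cast (by omega : M ≠ 0)
        push_cast; field_simp
      · rw [sub_nonneg, div_le_one (by linarith)]; exact hn2
    rw [e, norm_mul, Complex.norm_natCast]
    calc _ ≤ (M:ℝ) * (C*q*M) := by gcongr
      _ = _ := by ring
  · intro n hn
    by_cases h0 : n = 0
    · subst h0; simp [ak, mc]
    · have : M < n := by
        by_contra hc
        exact hn (Finset.mem_Icc.2 ⟨by omega, by omega⟩)
      have hn2 : (M:ℝ) ≤ n := by exact_mod_cast this.le
      rw [KK, max_eq_right]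
      · simp
      · rw [sub_nonpos, one_le_div (by linarith)]; exact hn2

end Part12

section Part13

open Filter Topology DirichletCharacter

lemma logpow (k : ℕ) : ∃ D : ℝ, 0 < D ∧ ∀ x : ℝ, 1 ≤ x → Real.log x ^ k ≤ D * x := by
  refine ⟨(k+1:ℝ)^k, by positivity, ?_⟩
  intro x hx
  have h0 := Real.log_nonneg hx
  have h := Real.log_le_rpow_div (x := x) (by linarith) (show (0:ℝ) < 1/(k+1) by positivity)
  have h2 : x^(1/(k+1:ℝ)) / (1/(k+1:ℝ)) = (k+1) * x^(1/(k+1:ℝ)) := by field_simp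
  rw [h2] at h
  calc Real.log x ^ k ≤ ((k+1) * x^(1/(k+1:ℝ)))^k := by gcongr
    _ = (k+1:ℝ)^k * (x^(1/(k+1:ℝ)))^k := mul_pow _ _ _
    _ = (k+1:ℝ)^k * x^(1/(k+1:ℝ) * k) := by rw [← Real.rpow_natCast (x^(1/(k+1:ℝ))), ← Real.rpow_mul (by linarith)]
    _ ≤ (k+1:ℝ)^k * x^(1:ℝ) := by
      gcongr
      · rw [one_div_mul_eq_div, div_le_one (by positivity)]; linarith
    _ = _ := by rw [Real.rpow_one]

lemma ak_norm {q : ℕ} [NeZero q] (χ : DirichletCharacter ℂ q) (k n : ℕ) (hn : 1 ≤ n) :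
    ‖ak χ k n‖ ≤ Real.log n ^ k := by
  have hl : 0 ≤ Real.log n := Real.log_nonneg (by exact_mod_cast hn)
  rw [ak, norm_mul, norm_pow, Complex.norm_of_nonneg hl]
  exact mul_le_of_le_one_right (by positivity) (mc_norm χ n)

lemma S_bound (j : ℕ) : ∃ C : ℝ, 0 < C ∧ ∀ (q : ℕ) [NeZero q] (χ : DirichletCharacter ℂ q) (N : ℕ),
    3 ≤ N → ‖∑ n ∈ Finset.Icc 1 N, ak χ (2*j) n‖ ≤ C * q * N * Real.log (2*N)^j := by
  obtain ⟨C, hC, H⟩ := smooth_fin (2*j)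
  obtain ⟨D, hD, HD⟩ := logpow (2*j)
  refine ⟨5*C+1+2*D, by positivity, ?_⟩
  intro q _ χ N hN
  have hq : (1:ℝ) ≤ q := by exact_mod_cast NeZero.one_le
  have hNr : (3:ℝ) ≤ N := by exact_mod_cast hN
  set L := Real.log (2*N) with hL
  have hL1 : 1 ≤ L := by
    rw [hL, Real.le_log_iff_exp_le (by linarith)]
    have := Real.exp_one_lt_d9
    linarith
  have hLj : 1 ≤ L^j := one_le_pow₀ hL1
  set h := ⌈(N:ℝ)/L^j⌉₊ with hh
  have hpos : 0 < (N:ℝ)/L^j := by positivity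
  have h1 : 0 < h := Nat.ceil_pos.2 hpos
  have h1r : (0:ℝ) < h := by exact_mod_cast h1
  have hlow : (N:ℝ)/L^j ≤ h := Nat.le_ceil _
  have hup : (h:ℝ) < (N:ℝ)/L^j + 1 := Nat.ceil_lt_add_one hpos.le
  have hle : h ≤ N := by
    rw [hh, Nat.ceil_le]
    exact div_le_self (by linarith) hLj
  have hler : (h:ℝ) ≤ N := by exact_mod_cast hle
  set S := ∑ n ∈ Finset.Icc 1 N, ak χ (2*j) n with hS
  have hsplit : ∀ f : ℕ → ℂ, ∑ n ∈ Finset.Icc 1 (N+h), f n = ∑ n ∈ Finset.Icc 1 N, f n + ∑ n ∈ Finset.Ioc N (N+h), f n := by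
    intro f
    rw [← Finset.sum_union]
    · congr 1
      ext n; simp only [Finset.mem_union, Finset.mem_Icc, Finset.mem_Ioc]; omega
    · rw [Finset.disjoint_left]; intro n; simp only [Finset.mem_Icc, Finset.mem_Ioc]; omega
  have id1 : (h:ℂ) * S = ∑ n ∈ Finset.Icc 1 (N+h), ak χ (2*j) n * (((N+h:ℕ):ℂ) - n)
      - ∑ n ∈ Finset.Icc 1 N, ak χ (2*j) n * ((N:ℂ) - n)
      - ∑ n ∈ Finset.Ioc N (N+h), ak χ (2*j) n * (((N+h:ℕ):ℂ) - n) := by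
    rw [hsplit, hS, Finset.mul_sum]
    rw [show ∀ a b c : ℂ, a + b - c - b = a - c by intros; ring, ← Finset.sum_sub_distrib]
    apply Finset.sum_congr rfl
    intro n _
    push_cast; ring
  have b1 := H q χ (N+h) (by omega)
  have b2 := H q χ N hN
  have b3 : ‖∑ n ∈ Finset.Ioc N (N+h), ak χ (2*j) n * (((N+h:ℕ):ℂ) - n)‖ ≤ h * (L^(2*j) * h) := by
    refine (norm_sum_le _ _).trans ?_
    have : ∀ n ∈ Finset.Ioc N (N+h), ‖ak χ (2*j) n * (((N+h:ℕ):ℂ) - n)‖ ≤ L^(2*j) * h := by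
      intro n hn
      rw [Finset.mem_Ioc] at hn
      rw [norm_mul]
      have n1 := ak_norm χ (2*j) n (by omega)
      have hnr : (n:ℝ) ≤ 2*N := by exact_mod_cast (by omega : n ≤ 2*N)
      have hn0 : (1:ℝ) ≤ n := by exact_mod_cast (by omega : 1 ≤ n)
      have n2 : Real.log n ≤ L := Real.log_le_log (by linarith) hnr
      have n3 := Real.log_nonneg hn0
      have n4 : ‖((N+h:ℕ):ℂ) - n‖ ≤ h := by
        rw [← Nat.cast_sub hn.2, Complex.norm_natCast]
        exact_mod_cast (by omega)
      calc _ ≤ Real.log n^(2*j) * h := by gcongr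
        _ ≤ _ := by gcongr
    refine (Finset.sum_le_sum this).trans ?_
    simp
  have b4 : h * ‖S‖ ≤ 5*C*q*N^2 + h * (L^(2*j) * h) := by
    have : ‖(h:ℂ) * S‖ = h * ‖S‖ := by rw [norm_mul, Complex.norm_natCast]
    rw [← this, id1]
    have t := norm_sub_le (∑ n ∈ Finset.Icc 1 (N+h), ak χ (2*j) n * (((N+h:ℕ):ℂ) - n)
      - ∑ n ∈ Finset.Icc 1 N, ak χ (2*j) n * ((N:ℂ) - n)) (∑ n ∈ Finset.Ioc N (N+h), ak χ (2*j) n * (((N+h:ℕ):ℂ) - n))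
    have t2 := norm_sub_le (∑ n ∈ Finset.Icc 1 (N+h), ak χ (2*j) n * (((N+h:ℕ):ℂ) - n))
      (∑ n ∈ Finset.Icc 1 N, ak χ (2*j) n * ((N:ℂ) - n))
    have t3 : C * q * ((N+h:ℕ):ℝ)^2 ≤ C*q*(4*N^2) := by
      gcongr
      push_cast
      nlinarith
    linarith
  have b5 : (N:ℝ) ≤ h * L^j := by rwa [div_le_iff₀ (by positivity)] at hlow
  have b6 : h * ‖S‖ ≤ h * ((5*C+1+2*D) * q * N * L^j) := by
    refine b4.trans ?_
    have c1 : 5*C*q*N^2 ≤ h * (5*C*q*N*L^j) := by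
      calc 5*C*q*(N:ℝ)^2 = 5*C*q*N*N := by ring
        _ ≤ 5*C*q*N*(h*L^j) := by gcongr
        _ = _ := by ring
    have c2 : L^(2*j) * h ≤ N*L^j + 2*D*N := by
      have d := HD (2*N) (by linarith)
      rw [← hL] at d
      calc L^(2*j) * h ≤ L^(2*j) * ((N:ℝ)/L^j+1) := by gcongr
        _ = N*L^j + L^(2*j) := by rw [mul_comm 2 j, pow_mul]; field_simp
        _ ≤ _ := by linarith
    have c3 : N*L^j + 2*D*N ≤ (1+2*D)*q*N*L^j := by
      have : (1+2*D)*N*L^j ≤ (1+2*D)*N*L^j*q := le_mul_of_one_le_right (by positivity) hq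
      have : 2*D*N*1 ≤ 2*D*N*L^j := by gcongr
      nlinarith
    calc _ ≤ h * (5*C*q*N*L^j) + h * ((1+2*D)*q*N*L^j) := by
          exact add_le_add c1 (mul_le_mul_of_nonneg_left (c2.trans c3) h1r.le)
      _ = _ := by ring
  exact le_of_mul_le_mul_left b6 h1r

lemma abel_id (a w : ℕ → ℂ) (R x : ℕ) (h : R ≤ x) :
    ∑ n ∈ Finset.Ioc R x, a n * w n = (∑ n ∈ Finset.Ioc R x, a n) * w x +
      ∑ m ∈ Finset.Ico R x, (∑ n ∈ Finset.Ioc R m, a n) * (w m - w (m+1)) := by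
  induction x, h using Nat.le_induction with
  | base => simp
  | succ x hx ih =>
    rw [← Finset.insert_Ioc_right_eq_Ioc_add_one hx] 
    rw [Finset.sum_insert (by simp), Finset.sum_insert (by simp), ih, Finset.sum_Ico_succ_top hx]
    ring

lemma abel_bound (a w : ℕ → ℂ) (R x : ℕ) (h : R ≤ x) (B : ℝ)
    (hB : ∀ m, R ≤ m → m ≤ x → ‖∑ n ∈ Finset.Ioc R m, a n‖ ≤ B) :
    ‖∑ n ∈ Finset.Ioc R x, a n * w n‖ ≤ B * (‖w x‖ + ∑ m ∈ Finset.Ico R x, ‖w m - w (m+1)‖) := by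
  rw [abel_id a w R x h, mul_add, Finset.mul_sum]
  refine (norm_add_le _ _).trans ?_
  apply add_le_add
  · rw [norm_mul]
    gcongr
    exact hB x h le_rfl
  · refine (norm_sum_le _ _).trans (Finset.sum_le_sum ?_)
    intro m hm
    rw [norm_mul]
    rw [Finset.mem_Ico] at hm
    gcongr
    exact hB m hm.1 hm.2.le

lemma M_bound (j : ℕ) : ∃ C : ℝ, 0 < C ∧ ∀ (q : ℕ) [NeZero q] (χ : DirichletCharacter ℂ q) (N x : ℕ),
    2 ≤ N → x ≤ N → ‖∑ n ∈ Finset.Icc 1 x, mc χ n‖ ≤ C * q * (N / Real.log N^j) := by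
  obtain ⟨C, hC, H⟩ := S_bound j
  obtain ⟨D, hD, HD⟩ := logpow j
  refine ⟨3 * 2^j*D + 2*8^j*C, by positivity, ?_⟩
  intro q _ χ N x hN hx
  have hq : (1:ℝ) ≤ q := by exact_mod_cast NeZero.one_le
  have hNr : (2:ℝ) ≤ N := by exact_mod_cast hN
  have hxr : (x:ℝ) ≤ N := by exact_mod_cast hx
  set l := Real.log N with hl
  have hl0 : 0 < l := Real.log_pos (by linarith)
  set R := Nat.sqrt N + 2 with hR
  have hR3 : 3 ≤ R := by
    have : 1 ≤ Nat.sqrt N := Nat.le_sqrt.2 (by omega)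
    omega
  have hs1 : (1:ℝ) ≤ √N := Real.one_le_sqrt.2 (by linarith)
  have hss : √(N:ℝ) * √N = N := Real.mul_self_sqrt (by linarith)
  have hRu : (R:ℝ) ≤ 3 * √N := by
    have : (Nat.sqrt N:ℝ) ≤ √N := Real.nat_sqrt_le_real_sqrt
    rw [hR]; push_cast; linarith
  have hRl : √(N:ℝ) ≤ R := by
    have : √(N:ℝ) ≤ Nat.sqrt N + 1 := Real.real_sqrt_le_nat_sqrt_succ
    rw [hR]; push_cast; linarith
  have hlogs : Real.log (√(N:ℝ)) = l/2 := by rw [Real.log_sqrt (by linarith)]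
  have hlogR : l/2 ≤ Real.log R := by
    rw [← hlogs]; exact Real.log_le_log (by linarith) hRl
  have triv : ∀ y : ℕ, ‖∑ n ∈ Finset.Icc 1 y, mc χ n‖ ≤ y := by
    intro y
    refine (norm_sum_le _ _).trans ?_
    refine (Finset.sum_le_sum (fun n _ => mc_norm χ n)).trans ?_
    simp
  have small : (R:ℝ) ≤ 3*2^j*D*q*(N/l^j) := by
    have d := HD (√N) hs1
    rw [hlogs, div_pow, div_le_iff₀ (by positivity)] at d
    have : √(N:ℝ) ≤ 2^j*D*(N/l^j) := by
      rw [← mul_div_assoc, le_div_iff₀ (by positivity)]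
      calc √(N:ℝ) * l^j ≤ √N * (D * √N * 2^j) := by gcongr
        _ = 2^j * D * (√N * √N) := by ring
        _ = _ := by rw [hss]
    calc (R:ℝ) ≤ 3 * (2^j*D*(N/l^j)) := by linarith
      _ ≤ 3 * (2^j*D*(N/l^j)) * q := le_mul_of_one_le_right (by positivity) hq
      _ = _ := by ring
  have pos2 : 0 ≤ 2*8^j*C*q*(N/l^j) := by positivity
  by_cases hxR : x ≤ R
  · have : (x:ℝ) ≤ R := by exact_mod_cast hxR
    have := triv x
    nlinarith
  push Not at hxR
  have hsplit : ∀ (f : ℕ → ℂ) (m : ℕ), R ≤ m → ∑ n ∈ Finset.Icc 1 m, f n = ∑ n ∈ Finset.Icc 1 R, f n + ∑ n ∈ Finset.Ioc R m, f n := by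
    intro f m hm
    rw [← Finset.sum_union]
    · congr 1
      ext n; simp only [Finset.mem_union, Finset.mem_Icc, Finset.mem_Ioc]; omega
    · rw [Finset.disjoint_left]; intro n; simp only [Finset.mem_Icc, Finset.mem_Ioc]; omega
  rw [hsplit _ x hxR.le]
  set v : ℕ → ℝ := fun n => (Real.log n^(2*j))⁻¹ with hv
  have hlp : ∀ n, R ≤ n → 0 < Real.log n := by
    intro n hn
    apply Real.log_pos
    exact_mod_cast (by omega : 1 < n)
  have hvp : ∀ n, R ≤ n → 0 < v n := by
    intro n hn
    have := hlp n hn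
    simp only [hv]; positivity
  have hva : ∀ n, R ≤ n → v (n+1) ≤ v n := by
    intro n hn
    have h1 := hlp n hn
    have h2 : Real.log n ≤ Real.log ((n+1:ℕ):ℝ) := Real.log_le_log (by exact_mod_cast (by omega : 0 < n)) (by push_cast; linarith)
    simp only [hv]
    gcongr
  have hrw : ∑ n ∈ Finset.Ioc R x, mc χ n = ∑ n ∈ Finset.Ioc R x, ak χ (2*j) n * ((v n : ℝ):ℂ) := by
    apply Finset.sum_congr rfl
    intro n hn
    rw [Finset.mem_Ioc] at hn
    have h1 := hlp n hn.1.le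
    have h2 : ((Real.log n : ℝ):ℂ) ≠ 0 := by exact_mod_cast h1.ne'
    simp only [ak, hv, Complex.ofReal_inv, Complex.ofReal_pow]
    field_simp
  have hL2 : Real.log (2*N) ≤ 2*l := by
    rw [Real.log_mul (by norm_num) (by linarith)]
    have : Real.log 2 ≤ l := Real.log_le_log (by norm_num) hNr
    linarith
  have hSb : ∀ m, R ≤ m → m ≤ x → ‖∑ n ∈ Finset.Icc 1 m, ak χ (2*j) n‖ ≤ C*q*N*(2*l)^j := by
    intro m hm hmx
    have hmr : (m:ℝ) ≤ N := by exact_mod_cast hmx.trans hx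
    have hm1 : (1:ℝ) ≤ m := by exact_mod_cast (by omega : 1 ≤ m)
    have hlm : 0 ≤ Real.log (2*m) := Real.log_nonneg (by linarith)
    have hlm2 : Real.log (2*m) ≤ 2*l := (Real.log_le_log (by linarith) (by linarith)).trans hL2
    refine (H q χ m (by omega)).trans ?_
    gcongr
  have hab := abel_bound (ak χ (2*j)) (fun n => ((v n:ℝ):ℂ)) R x hxR.le (2*(C*q*N*(2*l)^j)) (by
    intro m hm hmx
    have e := hsplit (ak χ (2*j)) m hm
    have e2 : ∑ n ∈ Finset.Ioc R m, ak χ (2*j) n = ∑ n ∈ Finset.Icc 1 m, ak χ (2*j) n - ∑ n ∈ Finset.Icc 1 R, ak χ (2*j) n := by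
      rw [e]; ring
    rw [e2]
    refine (norm_sub_le _ _).trans ?_
    linarith [hSb m hm hmx, hSb R le_rfl hxR.le])
  have htel : ‖((v x:ℝ):ℂ)‖ + ∑ m ∈ Finset.Ico R x, ‖((v m:ℝ):ℂ) - ((v (m+1):ℝ):ℂ)‖ = v R := by
    rw [Complex.norm_of_nonneg (hvp x hxR.le).le]
    have : ∀ m ∈ Finset.Ico R x, ‖((v m:ℝ):ℂ) - ((v (m+1):ℝ):ℂ)‖ = v m - v (m+1) := by
      intro m hm
      rw [Finset.mem_Ico] at hm
      rw [← Complex.ofReal_sub, Complex.norm_of_nonneg (sub_nonneg.2 (hva m hm.1))]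
    rw [Finset.sum_congr rfl this]
    have t := Finset.sum_Ico_sub v hxR.le
    have : ∑ m ∈ Finset.Ico R x, (v m - v (m+1)) = - ∑ m ∈ Finset.Ico R x, (v (m+1) - v m) := by
      rw [← Finset.sum_neg_distrib]; apply Finset.sum_congr rfl; intros; ring
    rw [this, t]; ring
  rw [htel] at hab
  have hvR : v R ≤ 4^j / l^(2*j) := by
    have h1 : 0 < (l/2)^(2*j) := by positivity
    have : v R ≤ ((l/2)^(2*j))⁻¹ := by
      simp only [hv]
      gcongr
    refine this.trans (le_of_eq ?_)
    rw [div_pow, inv_div, pow_mul]; norm_num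
  have fin : 2*(C*q*N*(2*l)^j) * v R ≤ 2*8^j*C*q*(N/l^j) := by
    calc _ ≤ 2*(C*q*N*(2*l)^j) * (4^j / l^(2*j)) := by gcongr
      _ = 2*(2^j*4^j)*C*q*(N*l^j/l^(2*j)) := by rw [mul_pow]; ring
      _ = _ := by
        rw [← mul_pow, mul_comm 2 j, pow_mul l]
        norm_num
        left
        field_simp
  rw [hrw]
  have := triv R
  refine (norm_add_le _ _).trans ?_
  nlinarith

end Part13

section Part14

open Filter Topology DirichletCharacter

lemma class_bound (j : ℕ) : ∃ C : ℝ, 0 < C ∧ ∀ (q : ℕ) [NeZero q] (b : ZMod q) (N x : ℕ), IsUnit b →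
    2 ≤ N → x ≤ N → ‖∑ n ∈ Finset.Icc 1 x, (if b = (n : ZMod q) then ((ArithmeticFunction.moebius n : ℤ) : ℂ) else 0)‖
      ≤ C * q * (N / Real.log N^j) := by
  obtain ⟨C, hC, H⟩ := M_bound j
  refine ⟨C, hC, ?_⟩
  intro q _ b N x hb hN hx
  set S := ∑ n ∈ Finset.Icc 1 x, (if b = (n : ZMod q) then ((ArithmeticFunction.moebius n : ℤ) : ℂ) else 0) with hS
  have id1 : (q.totient : ℂ) * S = ∑ χ : DirichletCharacter ℂ q, χ b⁻¹ * ∑ n ∈ Finset.Icc 1 x, mc χ n := by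
    simp_rw [Finset.mul_sum]
    rw [Finset.sum_comm, hS, Finset.mul_sum]
    apply Finset.sum_congr rfl
    intro n _
    simp only [mc, ← mul_assoc]
    rw [← Finset.sum_mul, sum_char_inv_mul_char_eq ℂ hb]
    split_ifs <;> simp
  have hφ : (0:ℝ) < q.totient := by exact_mod_cast Nat.totient_pos.2 (NeZero.pos q)
  have b1 : q.totient * ‖S‖ ≤ q.totient * (C * q * (N / Real.log N^j)) := by
    have : ‖(q.totient : ℂ) * S‖ = q.totient * ‖S‖ := by rw [norm_mul, Complex.norm_natCast]
    rw [← this, id1]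
    refine (norm_sum_le _ _).trans ?_
    have hc : (Fintype.card (DirichletCharacter ℂ q)) = q.totient := by
      rw [← Nat.card_eq_fintype_card]; exact DirichletCharacter.card_eq_totient_of_hasEnoughRootsOfUnity ℂ q
    calc _ ≤ ∑ χ : DirichletCharacter ℂ q, C * q * (N / Real.log N^j) := by
          apply Finset.sum_le_sum
          intro χ _
          rw [norm_mul]
          have h1 : ‖χ b⁻¹‖ ≤ 1 := χ.norm_le_one _
          have h2 := H q χ N x hN hx
          nlinarith [norm_nonneg (χ b⁻¹), norm_nonneg (∑ n ∈ Finset.Icc 1 x, mc χ n)]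
      _ = _ := by rw [Finset.sum_const, Finset.card_univ, hc, nsmul_eq_mul]
  exact le_of_mul_le_mul_left b1 hφ

lemma cop_bound (j : ℕ) : ∃ C : ℝ, 0 < C ∧ ∀ (q : ℕ) [NeZero q] (g : ZMod q → ℂ) (N x : ℕ), (∀ z, ‖g z‖ ≤ 1) →
    2 ≤ N → x ≤ N → ‖∑ n ∈ (Finset.Icc 1 x).filter (fun n => n.Coprime q), ((ArithmeticFunction.moebius n : ℤ) : ℂ) * g n‖
      ≤ C * q^2 * (N / Real.log N^j) := by
  obtain ⟨C, hC, H⟩ := class_bound j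
  refine ⟨C, hC, ?_⟩
  intro q _ g N x hg hN hx
  classical
  have hpos : 0 ≤ C * q * (N / Real.log N^j) := by
    have : 0 ≤ Real.log N := Real.log_natCast_nonneg N
    positivity
  have id1 : ∑ n ∈ (Finset.Icc 1 x).filter (fun n => n.Coprime q), ((ArithmeticFunction.moebius n : ℤ) : ℂ) * g n
      = ∑ b : ZMod q, (if IsUnit b then g b * ∑ n ∈ Finset.Icc 1 x, (if b = (n : ZMod q) then ((ArithmeticFunction.moebius n : ℤ) : ℂ) else 0) else 0) := by
    have : ∀ b : ZMod q, (if IsUnit b then g b * ∑ n ∈ Finset.Icc 1 x, (if b = (n : ZMod q) then ((ArithmeticFunction.moebius n : ℤ) : ℂ) else 0) else 0) = ∑ n ∈ Finset.Icc 1 x, (if b = (n : ZMod q) then (if IsUnit b then g b * ((ArithmeticFunction.moebius n : ℤ) : ℂ) else 0) else 0) := by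
      intro b
      split_ifs with h
      · rw [Finset.mul_sum]
        apply Finset.sum_congr rfl
        intro n _
        split_ifs <;> simp
      · simp
    simp_rw [this]
    rw [Finset.sum_comm, Finset.sum_filter]
    apply Finset.sum_congr rfl
    intro n _
    rw [Finset.sum_ite_eq']
    simp only [Finset.mem_univ, if_true, ZMod.isUnit_iff_coprime]
    split_ifs <;> ring
  rw [id1]
  refine (norm_sum_le _ _).trans ?_
  calc _ ≤ ∑ b : ZMod q, C * q * (N / Real.log N^j) := by
        apply Finset.sum_le_sum
        intro b _
        split_ifs with h
        · rw [norm_mul]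
          have h2 := H q b N x h hN hx
          refine (mul_le_of_le_one_left (norm_nonneg _) (hg b)).trans h2
        · simpa using hpos
    _ = _ := by rw [Finset.sum_const, Finset.card_univ, ZMod.card, nsmul_eq_mul]; ring

lemma gcd_sum (q d x : ℕ) [NeZero q] (hd : d ∣ q) (g : ZMod q → ℂ) :
    ∑ n ∈ (Finset.Icc 1 x).filter (fun n => n.gcd q = d), ((ArithmeticFunction.moebius n : ℤ) : ℂ) * g n
    = ((ArithmeticFunction.moebius d : ℤ) : ℂ) * ∑ m ∈ (Finset.Icc 1 (x/d)).filter (fun n => n.Coprime q), ((ArithmeticFunction.moebius m : ℤ) : ℂ) * g (d * m) := by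
  have hd0 : 0 < d := Nat.pos_of_dvd_of_pos hd (NeZero.pos q)
  have e : ((ArithmeticFunction.moebius d : ℤ) : ℂ) * ∑ m ∈ (Finset.Icc 1 (x/d)).filter (fun n => n.Coprime q), ((ArithmeticFunction.moebius m : ℤ) : ℂ) * g (d * m)
      = ∑ n ∈ ((Finset.Icc 1 (x/d)).filter (fun n => n.Coprime q)).image (fun m => d * m), ((ArithmeticFunction.moebius n : ℤ) : ℂ) * g n := by
    rw [Finset.sum_image (by intro a _ b _ h; exact Nat.eq_of_mul_eq_mul_left hd0 h), Finset.mul_sum]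
    apply Finset.sum_congr rfl
    intro m hm
    rw [Finset.mem_filter] at hm
    have hc : d.Coprime m := (Nat.Coprime.coprime_dvd_right hd hm.2).symm
    rw [ArithmeticFunction.isMultiplicative_moebius.map_mul_of_coprime hc]
    push_cast; ring
  rw [e]
  symm
  apply Finset.sum_subset
  · intro n hn
    rw [Finset.mem_image] at hn
    obtain ⟨m, hm, rfl⟩ := hn
    rw [Finset.mem_filter, Finset.mem_Icc] at hm
    rw [Finset.mem_filter, Finset.mem_Icc]
    refine ⟨⟨Nat.mul_pos hd0 (by omega), ?_⟩, ?_⟩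
    · rw [mul_comm]; exact (Nat.le_div_iff_mul_le hd0).1 hm.1.2
    · rw [Nat.Coprime.gcd_mul_right_cancel _ hm.2]; exact Nat.gcd_eq_left hd
  · intro n hn hni
    rw [Finset.mem_filter, Finset.mem_Icc] at hn
    obtain ⟨⟨hn1, hnx⟩, hg⟩ := hn
    obtain ⟨m, rfl⟩ : d ∣ n := hg ▸ Nat.gcd_dvd_left n q
    have hmc : ¬ m.Coprime q := by
      intro hc
      apply hni
      rw [Finset.mem_image]
      refine ⟨m, ?_, rfl⟩
      rw [Finset.mem_filter, Finset.mem_Icc]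
      refine ⟨⟨Nat.pos_of_ne_zero (by rintro rfl; simp at hn1), ?_⟩, hc⟩
      rw [Nat.le_div_iff_mul_le hd0, mul_comm]; exact hnx
    obtain ⟨p, hp, hpm, hpq⟩ := Nat.Prime.not_coprime_iff_dvd.1 hmc
    rw [ArithmeticFunction.moebius_eq_zero_of_not_squarefree]
    · simp
    intro hsq
    by_cases hpd : p ∣ d
    · have := hsq p (mul_dvd_mul hpd hpm)
      exact hp.one_lt.ne' (Nat.isUnit_iff.1 this)
    · have hcop : p.Coprime d := (Nat.Prime.coprime_iff_not_dvd hp).2 hpd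
      have h1 : p * d ∣ q := hcop.mul_dvd_of_dvd_of_dvd hpq hd
      have h2 : p * d ∣ d * m := by rw [mul_comm p d]; exact mul_dvd_mul_left d hpm
      have h3 := Nat.dvd_gcd h2 h1
      rw [hg] at h3
      have := Nat.le_of_dvd hd0 h3
      nlinarith [hp.two_le]

lemma per_bound (j : ℕ) : ∃ C : ℝ, 0 < C ∧ ∀ (q : ℕ) [NeZero q] (g : ZMod q → ℂ) (N x : ℕ), (∀ z, ‖g z‖ ≤ 1) →
    2 ≤ N → x ≤ N → ‖∑ n ∈ Finset.Icc 1 x, ((ArithmeticFunction.moebius n : ℤ) : ℂ) * g n‖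
      ≤ C * q^3 * (N / Real.log N^j) := by
  obtain ⟨C, hC, H⟩ := cop_bound j
  refine ⟨C, hC, ?_⟩
  intro q _ g N x hg hN hx
  have hpos : 0 ≤ C * q^2 * (N / Real.log N^j) := by
    have : 0 ≤ Real.log N := Real.log_natCast_nonneg N
    positivity
  rw [← Finset.sum_fiberwise_of_maps_to (s := Finset.Icc 1 x) (t := q.divisors) (g := fun n => n.gcd q)
    (fun n _ => Nat.mem_divisors.2 ⟨Nat.gcd_dvd_right n q, NeZero.ne q⟩)]
  refine (norm_sum_le _ _).trans ?_
  calc _ ≤ ∑ d ∈ q.divisors, C * q^2 * (N / Real.log N^j) := by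
        apply Finset.sum_le_sum
        intro d hd
        rw [gcd_sum q d x (Nat.dvd_of_mem_divisors hd) g, norm_mul]
        have h1 := H q (fun z => g (d * z)) N (x/d) (fun z => hg _) hN ((Nat.div_le_self _ _).trans hx)
        have h2 : ‖((ArithmeticFunction.moebius d : ℤ) : ℂ)‖ ≤ 1 := by
          rw [Complex.norm_intCast]
          exact_mod_cast ArithmeticFunction.abs_moebius_le_one
        exact (mul_le_of_le_one_left (norm_nonneg _) h2).trans h1
    _ = q.divisors.card * (C * q^2 * (N / Real.log N^j)) := by rw [Finset.sum_const, nsmul_eq_mul]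
    _ ≤ q * (C * q^2 * (N / Real.log N^j)) := by
      gcongr
      exact Nat.card_divisors_le_self q
    _ = _ := by ring

lemma major_arc (j : ℕ) : ∃ C : ℝ, 0 < C ∧ ∀ (q : ℕ) (a : ℤ) (t : ℝ) (N : ℕ), 0 < q → 2 ≤ N →
    ‖∑ n ∈ Finset.Icc 1 N, ((ArithmeticFunction.moebius n : ℤ) : ℂ) * ee (n*t)‖
      ≤ C * q^3 * (N / Real.log N^j) * (1 + 2*Real.pi*N*|t - a/q|) := by
  obtain ⟨C, hC, H⟩ := per_bound j
  refine ⟨C, hC, ?_⟩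
  intro q a t N hq hN
  haveI : NeZero q := ⟨hq.ne'⟩
  have hqr : (q:ℝ) ≠ 0 := by exact_mod_cast hq.ne'
  set β := t - a/q with hβ
  set g : ZMod q → ℂ := fun z => ee (z.val * a/q) with hg
  have hgn : ∀ n : ℕ, g n = ee (n * (a/q)) := by
    intro n
    simp only [hg, ZMod.val_natCast]
    have : (n:ℝ) * (a/q) = ((n%q:ℕ):ℝ) * a/q + (((n/q:ℕ):ℤ) * a : ℤ) := by
      have h := Nat.mod_add_div n q
      have h' : (n:ℝ) = ((n%q:ℕ):ℝ) + q * ((n/q:ℕ):ℝ) := by exact_mod_cast h.symm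
      rw [Int.cast_mul, Int.cast_natCast]
      nth_rw 1 [h']
      field_simp
    rw [this, ee_add, ee_int, mul_one]
  have e : ∑ n ∈ Finset.Icc 1 N, ((ArithmeticFunction.moebius n : ℤ) : ℂ) * ee (n*t)
      = ∑ n ∈ Finset.Ioc 0 N, (((ArithmeticFunction.moebius n : ℤ) : ℂ) * g n) * ee (n*β) := by
    have : Finset.Ioc 0 N = Finset.Icc 1 N := by ext; simp [Finset.mem_Icc, Finset.mem_Ioc]; omega
    rw [this]
    apply Finset.sum_congr rfl
    intro n _
    rw [hgn, mul_assoc, ← ee_add]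
    congr 2
    rw [hβ]; ring
  rw [e]
  have h := abel_bound (fun n => ((ArithmeticFunction.moebius n : ℤ) : ℂ) * g n) (fun n => ee (n*β)) 0 N (Nat.zero_le _)
    (C * q^3 * (N / Real.log N^j)) (by
      intro m _ hm
      have : Finset.Ioc 0 m = Finset.Icc 1 m := by ext; simp [Finset.mem_Icc, Finset.mem_Ioc]; omega
      rw [this]
      exact H q g N m (fun z => (ee_norm _).le) hN hm)
  refine h.trans ?_
  have hpos : 0 ≤ C * q^3 * (N / Real.log N^j) := by
    have : 0 ≤ Real.log N := Real.log_natCast_nonneg N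
    positivity
  gcongr
  · exact (ee_norm _).le
  · have : ∀ m ∈ Finset.Ico 0 N, ‖ee (m*β) - ee (((m+1:ℕ):ℝ)*β)‖ ≤ 2*Real.pi*|β| := by
      intro m _
      have e1 : ee (((m+1:ℕ):ℝ)*β) = ee (m*β) * ee β := by
        rw [← ee_add]; congr 1; push_cast; ring
      have e2 : ee (m*β) - ee (((m+1:ℕ):ℝ)*β) = - (ee (m*β) * (ee β - 1)) := by rw [e1]; ring
      rw [e2, norm_neg, norm_mul, ee_norm, one_mul]
      have := Real.norm_exp_I_mul_ofReal_sub_one_le (x := 2*Real.pi*β)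
      have e3 : ee β = Complex.exp (Complex.I * ((2*Real.pi*β:ℝ):ℂ)) := by
        rw [ee]; congr 1; push_cast; ring
      rw [e3]
      refine this.trans (le_of_eq ?_)
      rw [Real.norm_eq_abs, abs_mul, abs_of_nonneg (by positivity)]
    refine (Finset.sum_le_sum this).trans (le_of_eq ?_)
    rw [Finset.sum_const, Nat.card_Ico, Nat.sub_zero, nsmul_eq_mul]
    push_cast; ring

end Part14

section Part15

open Filter Topology

lemma dav_aux (A : ℝ) (hA : 0 < A) : ∃ K : ℝ, 0 < K ∧ ∀ N : ℕ, 2 ≤ N → ∀ t : ℝ,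
    ‖∑ n ∈ Finset.Icc 1 N, ((ArithmeticFunction.moebius n : ℤ) : ℂ) * ee (n*t)‖ ≤ K * (N / Real.log N ^ A) := by
  set E := ⌈A⌉₊ with hE
  have hAE : A ≤ E := Nat.le_ceil A
  set B := 2*E+6 with hB
  set j := 9*B+E with hj
  obtain ⟨C, hC, H⟩ := major_arc j
  obtain ⟨D, hD, HD⟩ := logpow (3*B+1)
  set W := 8*D*Real.exp 1 with hW
  have hWp : 0 < W := by positivity
  refine ⟨21 + W^E + 64*512*3^j*C, by positivity, ?_⟩
  intro N hN t
  have hNr : (2:ℝ) ≤ N := by exact_mod_cast hN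
  set L := Real.log N with hL
  have hL2 : (1/2:ℝ) ≤ L := by
    have : Real.log 2 ≤ L := Real.log_le_log (by norm_num) hNr
    have := Real.log_two_gt_d9
    linarith
  have hLp : 0 < L := by linarith
  set M := 1 + L with hM
  have hM1 : 1 ≤ M := by linarith
  have hM3 : M ≤ 3*L := by linarith
  have f1 : L^A ≤ M^E := by
    calc L^A ≤ M^A := Real.rpow_le_rpow hLp.le (by linarith) hA.le
      _ ≤ M^(E:ℝ) := Real.rpow_le_rpow_of_exponent_le hM1 hAE
      _ = M^E := Real.rpow_natCast _ _
  have hLA : 0 < L^A := Real.rpow_pos_of_pos hLp A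
  set P := (N:ℝ)/L^A with hP
  have hPp : 0 < P := by positivity
  have f2 : (N:ℝ)/M^E ≤ P := by rw [hP]; gcongr
  set U := ⌈M^B⌉₊ with hU
  have hMB : 1 ≤ M^B := one_le_pow₀ hM1
  have hU1 : M^B ≤ U := Nat.le_ceil _
  have hU2 : (U:ℝ) ≤ 2*M^B := by
    have := Nat.ceil_lt_add_one (show 0 ≤ M^B by positivity)
    rw [← hU] at this
    linarith
  have hU0 : 0 < U := Nat.ceil_pos.2 (by positivity)
  have hU0r : (1:ℝ) ≤ U := by exact_mod_cast hU0
  have p2 : 0 ≤ W^E * P := by positivity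
  have p3 : 0 ≤ 64*512*3^j*C*P := by positivity
  have p1 : 0 ≤ 21 * P := by positivity
  by_cases hsmall : N < U^3
  · have h1 : (N:ℝ) < 8*M^(3*B) := by
      have : (N:ℝ) < U^3 := by exact_mod_cast hsmall
      calc (N:ℝ) < U^3 := this
        _ ≤ (2*M^B)^3 := by gcongr
        _ = _ := by rw [mul_pow, ← pow_mul, mul_comm B 3]; norm_num
    have h2 := HD (Real.exp 1 * N) (by nlinarith [Real.add_one_le_exp (1:ℝ)])
    rw [Real.log_mul (Real.exp_pos _).ne' (by linarith), Real.log_exp, ← hL, ← hM] at h2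
    have h3 : M ≤ W := by
      have : M^(3*B) * M ≤ M^(3*B) * W := by
        calc M^(3*B)*M = M^(3*B+1) := by ring
          _ ≤ D*(Real.exp 1 * N) := h2
          _ ≤ D*(Real.exp 1 * (8*M^(3*B))) := by gcongr
          _ = _ := by rw [hW]; ring
      exact le_of_mul_le_mul_left this (by positivity)
    have h4 : ‖∑ n ∈ Finset.Icc 1 N, ((ArithmeticFunction.moebius n : ℤ) : ℂ) * ee (n*t)‖ ≤ N := by
      refine (norm_sum_le _ _).trans ?_
      have : ∀ n ∈ Finset.Icc 1 N, ‖((ArithmeticFunction.moebius n : ℤ) : ℂ) * ee (n*t)‖ ≤ 1 := by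
        intro n _
        rw [norm_mul, ee_norm, mul_one, Complex.norm_intCast]
        exact_mod_cast ArithmeticFunction.abs_moebius_le_one
      refine (Finset.sum_le_sum this).trans ?_
      simp
    have h5 : (N:ℝ) ≤ W^E * P := by
      rw [hP, ← mul_div_assoc, le_div_iff₀ hLA, mul_comm]
      have : L^A ≤ W^E := f1.trans (by gcongr)
      gcongr
    rw [add_mul, add_mul]
    linarith
  push Not at hsmall
  set Q := N / U^3 with hQ
  have hU3 : 0 < U^3 := by positivity
  have hQ0 : 0 < Q := Nat.div_pos hsmall hU3
  obtain ⟨r, hr1, hr2⟩ := Real.exists_rat_abs_sub_le_and_den_le t hQ0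
  set q := r.den with hq
  have hq0 : 0 < q := r.den_pos
  have hq0r : (1:ℝ) ≤ q := by exact_mod_cast hq0
  have hrq : (r:ℝ) = (r.num:ℝ)/q := by rw [hq]; exact Rat.cast_def r
  rw [hrq] at hr1
  have hqQ : (q:ℝ) ≤ Q + 1 := by exact_mod_cast hr2.trans (Nat.le_succ _)
  by_cases hbig : 2*U^2 ≤ q
  · have h1 : |t - (r.num:ℝ)/q| ≤ 1/(q:ℝ)^2 := by
      refine hr1.trans ?_
      rw [sq]
      gcongr
    have h2 : q * U^3 ≤ N := (Nat.mul_le_mul_right _ hr2).trans (Nat.div_mul_le_self _ _)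
    have h3 := minor_arc t r.num q N U hU0 (Rat.isCoprime_num_den r) h1 hbig h2
    rw [← hL, ← hM] at h3
    have h4 : M^(E+3) ≤ √U := by
      apply Real.le_sqrt_of_sq_le
      rw [← pow_mul]
      have : (E+3)*2 = B := by omega
      rw [this]; exact hU1
    have h5 : 21*N*M^3/√U ≤ 21 * P := by
      calc 21*N*M^3/√U ≤ 21*N*M^3/M^(E+3) := by gcongr
        _ = 21 * (N/M^E) := by rw [pow_add]; field_simp
        _ ≤ _ := by gcongr
    rw [add_mul, add_mul]
    linarith
  · push Not at hbig
    have h3 := H q r.num t N hq0 hN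
    rw [← hL] at h3
    have hqU : (q:ℝ) ≤ 2*U^2 := by exact_mod_cast hbig.le
    have hQ1 : (0:ℝ) < Q + 1 := by positivity
    have hNQ : (N:ℝ) ≤ U^3 * (Q+1) := by
      have := Nat.lt_mul_div_succ N hU3
      rw [← hQ] at this
      exact_mod_cast this.le
    have hβ : N * |t - (r.num:ℝ)/q| ≤ U^3 := by
      calc N * |t - (r.num:ℝ)/q| ≤ N * (1/((Q+1)*q)) := by gcongr
        _ ≤ N * (1/((Q+1)*1)) := by gcongr
        _ = N/(Q+1) := by ring
        _ ≤ U^3 := by rw [div_le_iff₀ hQ1]; exact hNQ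
    have hU31 : (1:ℝ) ≤ U^3 := one_le_pow₀ hU0r
    have h4 : 1 + 2*Real.pi*N*|t - (r.num:ℝ)/q| ≤ 8*U^3 := by
      have h7 : 2*Real.pi ≤ 7 := by linarith [Real.pi_lt_d2]
      have : 2*Real.pi*N*|t - (r.num:ℝ)/q| ≤ 7 * U^3 := by
        rw [mul_assoc]; gcongr
      linarith
    have h5 : C * q^3 * (N/L^j) * (1 + 2*Real.pi*N*|t - (r.num:ℝ)/q|) ≤ 64*512*3^j*C*P := by
      calc _ ≤ C * (2*U^2)^3 * (N/L^j) * (8*U^3) := by gcongr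
        _ = 64*C*(N/L^j)*(U:ℝ)^9 := by ring
        _ ≤ 64*C*(N/L^j)*(2*M^B)^9 := by gcongr
        _ = 64*512*C*(N*(M^(9*B)/L^j)) := by rw [mul_pow, ← pow_mul, mul_comm B 9]; ring
        _ ≤ 64*512*C*(N*(3^j/M^E)) := by
          gcongr 64*512*C*(N*?_)
          rw [div_le_div_iff₀ (by positivity) (by positivity), ← pow_add, ← mul_pow]
          gcongr
        _ = 64*512*3^j*C*(N/M^E) := by ring
        _ ≤ _ := by gcongr
    rw [add_mul, add_mul]
    linarith

end Part15

open Filter Topology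

/-- Davenport's estimate: for every `A > 0` there exists `C_A > 0` such that for all
`N ≥ 2` and all real `t`, `|Σ_{n≤N} e^{2πint} μ(n)| ≤ C_A · N / (log N)^A`. -/
theorem davenport_estimate (A : ℝ) (hA : 0 < A) :
    ∃ C : ℝ, 0 < C ∧ ∀ N : ℕ, 2 ≤ N → ∀ t : ℝ,
      norm
          (∑ n ∈ Finset.Icc 1 N,
            Complex.exp (2 * Real.pi * Complex.I * n * t) *
              (ArithmeticFunction.moebius n : ℂ))
        ≤ C * N / Real.log N ^ A := by
  obtain ⟨K, hK, H⟩ := dav_aux A hA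
  refine ⟨K, hK, ?_⟩
  intro N hN t
  have h := H N hN t
  rw [mul_div_assoc]
  refine le_trans (le_of_eq ?_) h
  congr 1
  apply Finset.sum_congr rfl
  intro n _
  rw [mul_comm, ee]
  congr 2
  push_cast; ring
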